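/- Let N ∈ (0,2), a₀ ≥ 1, c₀ > 0. Suppose V : ℝ² → ℝ satisfies |V(w)| ≤ a₀²⟨w⟩^{-N} for all w ∈ ℝ², and u : ℝ² → ℝ is a solution of -Δu + Vu = 0 in ℝ² with |u(0)| = 1 and |u(w)| ≤ exp(c₀|w|^{1 - N/2}) for all w ∈ ℝ². Then for every ε ∈ (0, N/2) there exists R₀ > 0 (depending on N, a₀, c₀, ε) such that for all R ≥ R₀, inf over w₀ with |w₀| = R of sup over B₁(w₀) of |u| is at least exp(-R^{1 - N/2 + ε}). -/

import Mathlib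

/-!
The proof turns the decaying potential into a small bounded one by a conformal change of variables
and then bounds `u 0` by the values of `u` near `w₀`. Write `s = 1 - N / 2`, `A = R + 1`,
`w₀ = R e` with `|e| = 1`.

*Change of variables.* The map `ζ ↦ e (ζ ^ (1 / s) - 1)` sends `ζ = 1` to the origin and
`ζ₀ = A ^ s` to `w₀`; its conformal factor compensates the decay of the potential, and the growth
hypothesis becomes `|u| ≤ exp (c (|ζ| + 1))`. In the logarithmic variable `ξ`,
`ζ = ζ₀ - (ζ₀ - 1) e ^ (ξ / n)`, the point `w₀` lies at `Re ξ = -∞` and the origin at `ξ = 0`. With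
`n = K ζ₀` and `K = A ^ (ε / 2)` the potential is `O(K⁻²)` (`Ph_pot`). The principal branch of the
power lives on a rectangle with horizontal slits (`Rg`); near the slits `|ζ|` is at most
`1 + 4 Re ξ / K`.

*Main estimate* (`core`). Let `|ΔU| ≤ δ |U|` in a bounded open set `D` and let `G` be an entire
function with `Re G` close to `Re ξ`. If `e ^ (-Re G) |U|` is at most `B`, up to a slowly decaying
exponential, in a boundary layer of `D`, then it is at most `10000 T B` at the centre point. The
starting point is the gradient `Q = 2 (∂U - p U)` with `p` solving `4 ∂̄p + 4 |p|² = V`. Then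
`∂̄Q = -p Q̄`, so `e ^ ω Q` is holomorphic for `ω` the Cauchy transform of `p Q̄ / Q`; since `p` is
small, `ω` has a small Lipschitz constant at large distances (`Cz_logLip`). The product of `Q` with a cutoff and
with `e ^ (ω - G)` is therefore a Cauchy transform of an explicit density supported near the boundary
(`Cz_exp_mul`, `QQ_repr`), which bounds it by the boundary layer. Integrating along the ray from a
point in the direction `-1`, in which the weight grows exponentially, gives the bound for `U`.

The obstruction is that inverting `∂̄` by the Cauchy transform loses a factor of the diameter of `D`,
so that `p` would not be small on a large domain. Bounds that are uniform in the domain are recovered by correcting the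
density of each unit cell so that it has total mass zero, which makes its field decay
quadratically (`Patches.dn1_bound`, `Patches.sys`). The corrections sit in patches where `|U|` is tiny
in mean. Such patches exist because `U`, where it is dominated by a function growing like
`e ^ (Re ξ)`, has a zero nearby, around which the Laplacian of the regularised `|U|` has definite mass
while concentrating on the nodal set (`patch_zero`, `patch_radius`, `patch`, `exists_patches`). At
interior points of cells without a patch, `U` vanishes or its weighted size is exceeded by a large
factor nearby; these cells contribute a small multiple of the supremum, which is absorbed
(`exists_gauge`).

*Conclusion.* `zone_est` verifies the boundary hypothesis on the slit rectangle, with the quadratic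
exponent `Gq`; if `|u|` were at most `exp (-R ^ (s + ε))` on the unit ball about `w₀`, the left side
would be covered as well, and `core` would give `|u 0| < 1` (`fixed_scale`).
-/

open Metric

/-- The Laplacian of a function on the plane (identified with `ℂ`). -/
noncomputable def lap (u : ℂ → ℝ) (z : ℂ) : ℝ :=
  fderiv ℝ (fun w => fderiv ℝ u w 1) z 1 +
    fderiv ℝ (fun w => fderiv ℝ u w Complex.I) z Complex.I

/-! ### Radial integrals in the plane -/

open MeasureTheory Set Filter Topology

lemma rad_int (f : ℝ → ℝ) :
    ∫ z : ℂ, f ‖z‖ = 2 * Real.pi * ∫ y in Ioi (0:ℝ), y * f y := by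
  rw [integral_fun_norm_addHaar (volume : Measure ℂ) f]
  have : (volume : Measure ℂ).real (ball 0 1) = Real.pi := by
    simp [Measure.real, Complex.volume_ball]
  rw [this, Complex.finrank_real_complex]
  simp [mul_assoc]

lemma rad_integrable {f : ℝ → ℝ} (h : IntegrableOn (fun y => y * f y) (Ioi 0)) :
    Integrable (fun z : ℂ => f ‖z‖) := by
  rw [integrable_fun_norm_addHaar (volume : Measure ℂ), Complex.finrank_real_complex]
  simpa using h

/-- The function `1/|w|` truncated to the disc of radius `a`. -/
noncomputable def ckr (a : ℝ) (w : ℂ) : ℝ := if ‖w‖ < a then ‖w‖⁻¹ else 0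

lemma ckr_nonneg (a : ℝ) (w : ℂ) : 0 ≤ ckr a w := by
  unfold ckr; split_ifs <;> positivity

lemma ckr_aux (a : ℝ) (y : ℝ) (hy : y ∈ Ioi (0:ℝ)) :
    y * (if y < a then y⁻¹ else 0) = (Iio a).indicator (fun _ => (1:ℝ)) y := by
  have : y ≠ 0 := ne_of_gt hy
  by_cases h : y < a <;> simp [h, this]

lemma ckr_integrable (a : ℝ) : Integrable (ckr a) := by
  apply rad_integrable (f := fun y => if y < a then y⁻¹ else 0)
  rw [integrableOn_congr_fun (fun y hy => ckr_aux a y hy) measurableSet_Ioi]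
  rw [integrableOn_indicator_iff measurableSet_Iio]
  apply integrableOn_const
  · have : Iio a ∩ Ioi 0 = Ioo 0 a := by ext; simp [and_comm]
    rw [this]; simp
  · simp

lemma ckr_integral {a : ℝ} (ha : 0 ≤ a) : ∫ z, ckr a z = 2 * Real.pi * a := by
  have := rad_int (fun y => if y < a then y⁻¹ else 0)
  unfold ckr
  rw [this, setIntegral_congr_fun measurableSet_Ioi (fun y hy => ckr_aux a y hy),
    setIntegral_indicator measurableSet_Iio]
  have : Ioi 0 ∩ Iio a = Ioo 0 a := by ext; simp
  rw [this]; simp [ha]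

lemma ckrc_integrable (a : ℝ) (z : ℂ) : Integrable (fun ζ => ckr a (z - ζ)) :=
  (ckr_integrable a).comp_sub_left z

lemma ckrc_integral {a : ℝ} (ha : 0 ≤ a) (z : ℂ) : ∫ ζ, ckr a (z - ζ) = 2 * Real.pi * a := by
  rw [integral_sub_left_eq_self (fun w => ckr a w) volume z, ckr_integral ha]

lemma ckr_dom {a : ℝ} (ha : 0 < a) (w : ℂ) : ‖w‖⁻¹ ≤ ckr a w + a⁻¹ := by
  unfold ckr; split_ifs with h
  · have := inv_pos.2 ha; linarith
  · rw [zero_add]; exact inv_anti₀ ha (not_lt.1 h)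

/-- Bound for `∫ f(ζ) / |z - ζ|` in terms of the supremum and the integral of `f ≥ 0`, by splitting
the kernel at radius `a`. -/
lemma K1 {f : ℂ → ℝ} {M L a : ℝ} (z : ℂ) (hf : Integrable f) (h0 : ∀ ζ, 0 ≤ f ζ)
    (hM : ∀ ζ, f ζ ≤ M) (hL : ∫ ζ, f ζ ≤ L) (ha : 0 < a) :
    Integrable (fun ζ => f ζ * ‖z - ζ‖⁻¹) ∧
      ∫ ζ, f ζ * ‖z - ζ‖⁻¹ ≤ 2 * Real.pi * a * M + L / a := by
  have hM0 : 0 ≤ M := (h0 0).trans (hM 0)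
  have hb : ∀ ζ, f ζ * ‖z - ζ‖⁻¹ ≤ M * ckr a (z - ζ) + f ζ * a⁻¹ := by
    intro ζ
    calc f ζ * ‖z - ζ‖⁻¹ ≤ f ζ * (ckr a (z - ζ) + a⁻¹) :=
          mul_le_mul_of_nonneg_left (ckr_dom ha _) (h0 ζ)
      _ ≤ _ := by
          rw [mul_add]; gcongr
          · exact ckr_nonneg _ _
          · exact hM ζ
  have hi : Integrable (fun ζ => M * ckr a (z - ζ) + f ζ * a⁻¹) :=
    ((ckrc_integrable a z).const_mul M).add (hf.mul_const _)
  have hIntg : Integrable (fun ζ => f ζ * ‖z - ζ‖⁻¹) := by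
    apply hi.mono'
    · apply hf.aestronglyMeasurable.mul
      have : Measurable (fun ζ : ℂ => ‖z - ζ‖⁻¹) := by fun_prop
      exact this.aestronglyMeasurable
    · refine Eventually.of_forall fun ζ => ?_
      rw [Real.norm_of_nonneg (mul_nonneg (h0 ζ) (by positivity))]
      exact hb ζ
  refine ⟨hIntg, (integral_mono hIntg hi hb).trans ?_⟩
  rw [integral_add ((ckrc_integrable a z).const_mul M) (hf.mul_const _), integral_const_mul,
    integral_mul_const, ckrc_integral ha.le, div_eq_mul_inv]
  have := mul_le_mul_of_nonneg_right hL (inv_nonneg.2 ha.le)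
  linarith

/-- The weight `1/(1+|w|²)` restricted to a disc. -/
noncomputable def lker (T : ℝ) (w : ℂ) : ℝ := if ‖w‖ < T then (1 + ‖w‖ ^ 2)⁻¹ else 0

lemma lker_nonneg (T : ℝ) (w : ℂ) : 0 ≤ lker T w := by
  unfold lker; split_ifs <;> positivity

lemma lker_aux (a : ℝ) (y : ℝ) (_hy : y ∈ Ioi (0:ℝ)) :
    y * (if y < a then (1 + y ^ 2)⁻¹ else 0) = (Iio a).indicator (fun y => y / (1 + y ^ 2)) y := by
  by_cases h : y < a <;> simp [h, div_eq_mul_inv]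

lemma lker_integrable (a : ℝ) : Integrable (lker a) := by
  apply rad_integrable (f := fun y => if y < a then (1 + y ^ 2)⁻¹ else 0)
  rw [integrableOn_congr_fun (fun y hy => lker_aux a y hy) measurableSet_Ioi]
  rw [integrableOn_indicator_iff measurableSet_Iio]
  have : Iio a ∩ Ioi 0 ⊆ Icc 0 a := fun x hx => ⟨le_of_lt hx.2, le_of_lt hx.1⟩
  refine IntegrableOn.mono_set ?_ this
  apply ContinuousOn.integrableOn_Icc
  apply Continuous.continuousOn
  exact continuous_id.div (by fun_prop) (fun x => by positivity)

lemma lker_integral {a : ℝ} (ha : 0 ≤ a) :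
    ∫ z, lker a z = Real.pi * Real.log (1 + a ^ 2) := by
  have := rad_int (fun y => if y < a then (1 + y ^ 2)⁻¹ else 0)
  unfold lker
  rw [this, setIntegral_congr_fun measurableSet_Ioi (fun y hy => lker_aux a y hy),
    setIntegral_indicator measurableSet_Iio]
  have : Ioi 0 ∩ Iio a = Ioo 0 a := by ext; simp
  rw [this, ← integral_Ioc_eq_integral_Ioo, ← intervalIntegral.integral_of_le ha]
  have hd : ∀ x ∈ uIcc 0 a, HasDerivAt (fun x : ℝ => Real.log (1 + x ^ 2) / 2) (x / (1 + x ^ 2)) x := by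
    intro x _
    have h1 : HasDerivAt (fun x : ℝ => 1 + x ^ 2) (2 * x) x := by
      simpa using (hasDerivAt_pow 2 x).const_add 1
    have h2 := (h1.log (by positivity)).div_const 2
    exact h2.congr_deriv (by ring)
  rw [intervalIntegral.integral_eq_sub_of_hasDerivAt hd]
  · simp; ring
  · apply Continuous.intervalIntegrable
    exact continuous_id.div (by fun_prop) (fun x => by positivity)

/-- The integral of `1 / (1 + |z - ζ|²)` over a disc of radius `T` is `O(1 + log (1 + T²))`, uniformly in `z`. -/
lemma LOG {T : ℝ} (hT : 0 ≤ T) (z : ℂ) :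
    IntegrableOn (fun ζ => (1 + ‖z - ζ‖ ^ 2)⁻¹) (ball 0 T) ∧
      ∫ ζ in ball 0 T, (1 + ‖z - ζ‖ ^ 2)⁻¹ ≤ Real.pi * Real.log (1 + T ^ 2) + Real.pi := by
  have hfin : volume (ball (0:ℂ) T) < ⊤ := measure_ball_lt_top
  have hc : Continuous (fun ζ : ℂ => (1 + ‖z - ζ‖ ^ 2)⁻¹) :=
    Continuous.inv₀ (by fun_prop) (fun x => by positivity)
  have h1 : IntegrableOn (fun ζ => (1 + ‖z - ζ‖ ^ 2)⁻¹) (ball 0 T) :=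
    (hc.continuousOn.integrableOn_compact (isCompact_closedBall 0 T)).mono_set ball_subset_closedBall
  refine ⟨h1, ?_⟩
  have hl : Integrable (fun ζ => lker T (z - ζ)) := (lker_integrable T).comp_sub_left z
  have hI : IntegrableOn (fun _ : ℂ => (1 + T ^ 2)⁻¹) (ball 0 T) := integrableOn_const hfin.ne
  have h2 : ∀ ζ, (1 + ‖z - ζ‖ ^ 2)⁻¹ ≤ lker T (z - ζ) + (1 + T ^ 2)⁻¹ := by
    intro ζ
    unfold lker; split_ifs with h
    · have : 0 ≤ (1 + T ^ 2)⁻¹ := by positivity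
      linarith
    · rw [zero_add]; push Not at h; gcongr
  calc _ ≤ ∫ ζ in ball 0 T, (lker T (z - ζ) + (1 + T ^ 2)⁻¹) :=
        setIntegral_mono h1 (hl.integrableOn.add hI) h2
    _ = (∫ ζ in ball 0 T, lker T (z - ζ)) + (1 + T ^ 2)⁻¹ * (T ^ 2 * Real.pi) := by
        rw [integral_add hl.integrableOn hI]
        simp [Measure.real, Complex.volume_ball, hT]; ring
    _ ≤ (∫ ζ, lker T (z - ζ)) + Real.pi := by
        apply add_le_add
        · exact setIntegral_le_integral hl (Eventually.of_forall fun ζ => lker_nonneg _ _)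
        · rw [← mul_assoc]
          have : (1 + T ^ 2)⁻¹ * T ^ 2 ≤ 1 := by
            rw [inv_mul_le_iff₀ (by positivity)]; linarith
          nlinarith [Real.pi_pos]
    _ = _ := by
        rw [integral_sub_left_eq_self (fun w => lker T w) volume z, lker_integral hT]

/-- The truncated powers `(1-|z|²)₊ ^ k`. -/
noncomputable def bet (k : ℕ) (z : ℂ) : ℝ := (max 0 (1 - ‖z‖ ^ 2)) ^ k

lemma bet_nonneg (k : ℕ) (z : ℂ) : 0 ≤ bet k z := by unfold bet; positivity

lemma bet_le_one (k : ℕ) (z : ℂ) : bet k z ≤ 1 := by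
  unfold bet
  apply pow_le_one₀ (by positivity)
  simp

lemma bet_cont (k : ℕ) : Continuous (bet k) := by unfold bet; fun_prop

lemma bet_zero {k : ℕ} (hk : k ≠ 0) {z : ℂ} (hz : 1 ≤ ‖z‖) : bet k z = 0 := by
  unfold bet
  rw [max_eq_left (by nlinarith), zero_pow hk]

lemma bet_support {k : ℕ} (hk : k ≠ 0) : HasCompactSupport (bet k) :=
  HasCompactSupport.intro (isCompact_closedBall 0 1) fun z hz => by
    apply bet_zero hk
    simp at hz; exact hz.le

lemma bet_integrable {k : ℕ} (hk : k ≠ 0) : Integrable (bet k) :=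
  (bet_cont k).integrable_of_hasCompactSupport (bet_support hk)

lemma bet2_integral : ∫ z, bet 2 z = Real.pi / 3 := by
  have h := rad_int (fun y => (max 0 (1 - y ^ 2)) ^ 2)
  unfold bet
  rw [h]
  have : ∫ y in Ioi (0:ℝ), y * (max 0 (1 - y ^ 2)) ^ 2 = ∫ y in (0:ℝ)..1, (y - 2 * y ^ 3 + y ^ 5) := by
    rw [intervalIntegral.integral_of_le zero_le_one]
    rw [setIntegral_eq_of_subset_of_forall_sdiff_eq_zero (s := Ioc (0:ℝ) 1) measurableSet_Ioi
      Ioc_subset_Ioi_self]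
    · apply setIntegral_congr_fun measurableSet_Ioc
      intro y hy
      have : 0 ≤ 1 - y ^ 2 := by nlinarith [hy.1, hy.2]
      simp only [max_eq_right this]
      ring
    · intro y hy
      have : 1 - y ^ 2 ≤ 0 := by
        have h1 : 0 < y := hy.1
        have h2 : 1 < y := by
          by_contra hh; exact hy.2 ⟨h1, not_lt.1 hh⟩
        nlinarith
      simp [max_eq_left this]
  rw [this, intervalIntegral.integral_add, intervalIntegral.integral_sub,
    intervalIntegral.integral_const_mul, integral_id, integral_pow, integral_pow]
  · norm_num; ring
  all_goals exact Continuous.intervalIntegrable (by fun_prop) _ _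

/-! ### The Cauchy transform of bounded densities with bounded support -/


/-- Bounded measurable functions vanishing outside a disc. -/
structure Dens (f : ℂ → ℂ) : Prop where
  meas : Measurable f
  bdd : ∃ M : ℝ, 0 ≤ M ∧ ∀ z, ‖f z‖ ≤ M
  supp : ∃ R : ℝ, 0 < R ∧ ∀ z, R ≤ ‖z‖ → f z = 0

/-- The Cauchy transform, normalised so that it inverts `∂/∂z̄`. -/
noncomputable def Cz (f : ℂ → ℂ) (z : ℂ) : ℂ := (Real.pi : ℂ)⁻¹ * ∫ ζ, f ζ * (z - ζ)⁻¹

namespace Dens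

lemma integrable {f : ℂ → ℂ} (hf : Dens f) : Integrable f := by
  obtain ⟨M, hM0, hM⟩ := hf.bdd
  obtain ⟨R, hR0, hR⟩ := hf.supp
  have : Integrable ((ball (0:ℂ) R).indicator fun _ => M) := by
    rw [integrable_indicator_iff measurableSet_ball]
    exact integrableOn_const measure_ball_lt_top.ne
  apply this.mono' hf.meas.aestronglyMeasurable
  refine Eventually.of_forall fun z => ?_
  by_cases h : z ∈ ball (0:ℂ) R
  · simpa [h] using hM z
  · have h' : R ≤ ‖z‖ := by simpa using h
    simp [hR z h', h']

lemma of_bound {f : ℂ → ℂ} {M R : ℝ} (hm : Measurable f) (hM : ∀ z, ‖f z‖ ≤ M)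
    (hR : ∀ z, R ≤ ‖z‖ → f z = 0) : Dens f :=
  ⟨hm, ⟨M, (norm_nonneg _).trans (hM 0), hM⟩, ⟨max R 1, by positivity, fun z hz =>
    hR z ((le_max_left _ _).trans hz)⟩⟩

lemma of_cont {f : ℂ → ℂ} (hc : Continuous f) (hs : HasCompactSupport f) : Dens f := by
  obtain ⟨M, hM⟩ := hs.exists_bound_of_continuous hc
  obtain ⟨R, hR⟩ := hs.isCompact.isBounded.subset_ball (0:ℂ)
  refine of_bound (R := R) hc.measurable hM fun z hz => ?_
  by_contra h
  have := hR (subset_tsupport f h)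
  simp at this; linarith

lemma zero : Dens (fun _ => 0) :=
  of_bound (M := 0) (R := 0) measurable_const (by simp) (by simp)

lemma add {f g : ℂ → ℂ} (hf : Dens f) (hg : Dens g) : Dens (fun z => f z + g z) := by
  obtain ⟨M, _, hM⟩ := hf.bdd
  obtain ⟨R, _, hR⟩ := hf.supp
  obtain ⟨M', _, hM'⟩ := hg.bdd
  obtain ⟨R', _, hR'⟩ := hg.supp
  refine of_bound (M := M + M') (R := max R R') (hf.meas.add hg.meas)
    (fun z => (norm_add_le _ _).trans (add_le_add (hM z) (hM' z))) fun z hz => ?_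
  rw [hR z ((le_max_left _ _).trans hz), hR' z ((le_max_right _ _).trans hz), add_zero]

/-- Multiplication by a measurable factor which is locally bounded. -/
lemma mul_left {f g : ℂ → ℂ} (hf : Dens f) (hg : Measurable g)
    (hb : ∀ R : ℝ, ∃ M, ∀ z, ‖z‖ ≤ R → ‖g z‖ ≤ M) : Dens (fun z => g z * f z) := by
  obtain ⟨M, hM0, hM⟩ := hf.bdd
  obtain ⟨R, _, hR⟩ := hf.supp
  obtain ⟨M', hM'⟩ := hb R
  have hM'0 : 0 ≤ max M' 0 := le_max_right _ _
  refine of_bound (M := max M' 0 * M) (R := R) (hg.mul hf.meas) (fun z => ?_) fun z hz => ?_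
  · rw [norm_mul]
    rcases le_total ‖z‖ R with h | h
    · exact mul_le_mul ((hM' z h).trans (le_max_left _ _)) (hM z) (norm_nonneg _) hM'0
    · rw [hR z h]; simp; positivity
  · rw [hR z hz, mul_zero]

lemma mul_bdd {f g : ℂ → ℂ} (hf : Dens f) (hg : Measurable g) {M : ℝ} (hb : ∀ z, ‖g z‖ ≤ M) :
    Dens (fun z => g z * f z) := hf.mul_left hg fun _ => ⟨M, fun z _ => hb z⟩

lemma mul_cont {f g : ℂ → ℂ} (hf : Dens f) (hg : Continuous g) : Dens (fun z => g z * f z) := by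
  refine hf.mul_left hg.measurable fun R => ?_
  obtain ⟨M, hM⟩ := (isCompact_closedBall (0:ℂ) R).exists_bound_of_continuousOn hg.continuousOn
  exact ⟨M, fun z hz => hM z (by simpa using hz)⟩

lemma smul {f : ℂ → ℂ} (hf : Dens f) (c : ℂ) : Dens (fun z => c * f z) :=
  hf.mul_cont continuous_const

lemma neg {f : ℂ → ℂ} (hf : Dens f) : Dens (fun z => - f z) := by
  simpa using hf.smul (-1)

lemma sub {f g : ℂ → ℂ} (hf : Dens f) (hg : Dens g) : Dens (fun z => f z - g z) := by
  simpa [sub_eq_add_neg] using hf.add hg.neg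

lemma sum {ι : Type*} (s : Finset ι) {f : ι → ℂ → ℂ} (hf : ∀ i ∈ s, Dens (f i)) :
    Dens (fun z => ∑ i ∈ s, f i z) := by
  classical
  induction s using Finset.induction_on with
  | empty => simpa using Dens.zero
  | insert a s ha ih =>
    simp only [Finset.sum_insert ha]
    exact (hf a (by simp)).add (ih fun i hi => hf i (by simp [hi]))

lemma conj {f : ℂ → ℂ} (hf : Dens f) : Dens (fun z => (starRingEnd ℂ) (f z)) := by
  obtain ⟨M, _, hM⟩ := hf.bdd
  obtain ⟨R, _, hR⟩ := hf.supp
  exact of_bound (M := M) (R := R) (Complex.continuous_conj.measurable.comp hf.meas)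
    (fun z => by simpa using hM z) fun z hz => by simp [hR z hz]

lemma ker_integrable {f : ℂ → ℂ} (hf : Dens f) (z : ℂ) :
    Integrable (fun ζ => f ζ * (z - ζ)⁻¹) := by
  obtain ⟨M, _, hM⟩ := hf.bdd
  have := (K1 z hf.integrable.norm (fun _ => norm_nonneg _) hM le_rfl one_pos).1
  refine Integrable.mono' this (hf.meas.mul (by fun_prop)).aestronglyMeasurable
    (Eventually.of_forall fun ζ => ?_)
  rw [norm_mul, norm_inv]

lemma ker_norm_integrable {f : ℂ → ℂ} (hf : Dens f) (z : ℂ) :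
    Integrable (fun ζ => ‖f ζ‖ * ‖z - ζ‖⁻¹) := by
  simpa using (hf.ker_integrable z).norm

end Dens

lemma Cz_norm_le (f : ℂ → ℂ) (z : ℂ) :
    ‖Cz f z‖ ≤ Real.pi⁻¹ * ∫ ζ, ‖f ζ‖ * ‖z - ζ‖⁻¹ := by
  unfold Cz
  rw [norm_mul, norm_inv, Complex.norm_real, Real.norm_of_nonneg Real.pi_pos.le]
  gcongr
  refine (norm_integral_le_integral_norm _).trans (le_of_eq ?_)
  simp

lemma Cz_bound {f : ℂ → ℂ} (hf : Dens f) {M L a : ℝ} (hM : ∀ ζ, ‖f ζ‖ ≤ M)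
    (hL : ∫ ζ, ‖f ζ‖ ≤ L) (ha : 0 < a) (z : ℂ) : ‖Cz f z‖ ≤ 2 * a * M + L / a := by
  have h1 := (K1 z hf.integrable.norm (fun _ => norm_nonneg _) hM hL ha).2
  have h2 := Cz_norm_le f z
  have hL0 : 0 ≤ L := le_trans (integral_nonneg fun _ => norm_nonneg _) hL
  have hpi := Real.pi_pos
  have h3 : Real.pi⁻¹ * (L / a) ≤ L / a := by
    apply mul_le_of_le_one_left (by positivity)
    exact inv_le_one_of_one_le₀ (by linarith [Real.pi_gt_three])
  calc _ ≤ _ := h2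
    _ ≤ Real.pi⁻¹ * (2 * Real.pi * a * M + L / a) := by gcongr
    _ = 2 * a * M + Real.pi⁻¹ * (L / a) := by field_simp
    _ ≤ _ := by linarith

lemma integral_norm_le_of_ball {f : ℂ → ℂ} {M T : ℝ} {c : ℂ} (hT : 0 ≤ T)
    (hM : ∀ ζ, ‖f ζ‖ ≤ M) (hs : ∀ ζ, ζ ∉ ball c T → f ζ = 0) :
    ∫ ζ, ‖f ζ‖ ≤ Real.pi * T ^ 2 * M := by
  have h0 : ∫ ζ, ‖f ζ‖ = ∫ ζ in ball c T, ‖f ζ‖ := by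
    rw [setIntegral_eq_integral_of_forall_compl_eq_zero]
    intro x hx; simp [hs x hx]
  have h := norm_setIntegral_le_of_norm_le_const (μ := volume) (s := ball c T) (C := M)
    (f := fun ζ => ‖f ζ‖) measure_ball_lt_top (fun x _ => by simpa using hM x)
  have hv : volume.real (ball c T) = Real.pi * T ^ 2 := by
    simp [Measure.real, Complex.volume_ball, hT]; ring
  rw [hv] at h
  rw [h0]
  refine (le_abs_self _).trans ((Real.norm_eq_abs _).symm.le.trans (h.trans (le_of_eq (by ring))))

lemma Cz_bound_ball {f : ℂ → ℂ} (hf : Dens f) {M T : ℝ} {c : ℂ} (hT : 0 < T) (hM : ∀ ζ, ‖f ζ‖ ≤ M)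
    (hs : ∀ ζ, ζ ∉ ball c T → f ζ = 0) (z : ℂ) : ‖Cz f z‖ ≤ 6 * T * M := by
  have h := Cz_bound hf hM (integral_norm_le_of_ball hT.le hM hs) hT z
  have hM0 : 0 ≤ M := (norm_nonneg _).trans (hM 0)
  have : Real.pi * T ^ 2 * M / T = Real.pi * (T * M) := by field_simp
  rw [this] at h
  have : Real.pi * (T * M) ≤ 4 * (T * M) := by gcongr; exact Real.pi_le_four
  linarith

lemma Cz_add {f g : ℂ → ℂ} (hf : Dens f) (hg : Dens g) (z : ℂ) :
    Cz (fun ζ => f ζ + g ζ) z = Cz f z + Cz g z := by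
  unfold Cz
  simp only [add_mul]
  rw [integral_add (hf.ker_integrable z) (hg.ker_integrable z), mul_add]

lemma Cz_smul (c : ℂ) (f : ℂ → ℂ) (z : ℂ) : Cz (fun ζ => c * f ζ) z = c * Cz f z := by
  unfold Cz
  simp only [mul_assoc]
  rw [integral_const_mul]; ring

lemma Cz_neg (f : ℂ → ℂ) (z : ℂ) : Cz (fun ζ => - f ζ) z = - Cz f z := by
  simpa using Cz_smul (-1) f z

lemma Cz_sub {f g : ℂ → ℂ} (hf : Dens f) (hg : Dens g) (z : ℂ) :
    Cz (fun ζ => f ζ - g ζ) z = Cz f z - Cz g z := by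
  simp only [sub_eq_add_neg, Cz_add hf hg.neg, Cz_neg]

lemma Cz_zero (z : ℂ) : Cz (fun _ => 0) z = 0 := by simp [Cz]

lemma Cz_sum {ι : Type*} (s : Finset ι) {f : ι → ℂ → ℂ} (hf : ∀ i ∈ s, Dens (f i)) (z : ℂ) :
    Cz (fun z => ∑ i ∈ s, f i z) z = ∑ i ∈ s, Cz (f i) z := by
  classical
  induction s using Finset.induction_on with
  | empty => simpa using Cz_zero z
  | insert a s ha ih =>
    simp only [Finset.sum_insert ha]
    rw [Cz_add (hf a (by simp)) (Dens.sum s fun i hi => hf i (by simp [hi])),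
      ih fun i hi => hf i (by simp [hi])]

/-- The Cauchy kernel, flattened near the origin. -/
noncomputable def tker (a : ℝ) (w : ℂ) : ℂ :=
  (starRingEnd ℂ) w * (((max (‖w‖ ^ 2) (a ^ 2))⁻¹ : ℝ) : ℂ)

lemma tker_cont {a : ℝ} (ha : 0 < a) : Continuous (tker a) := by
  unfold tker
  refine Complex.continuous_conj.mul (Complex.continuous_ofReal.comp (Continuous.inv₀ (by fun_prop) ?_))
  intro x; positivity

lemma tker_bound {a : ℝ} (ha : 0 < a) (w : ℂ) : ‖tker a w‖ ≤ a⁻¹ := by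
  unfold tker
  rw [norm_mul, RCLike.norm_conj, Complex.norm_real, Real.norm_of_nonneg (by positivity),
    ← div_eq_mul_inv, div_le_iff₀ (by positivity), inv_mul_eq_div, le_div_iff₀ ha]
  rcases le_total ‖w‖ a with h | h
  · exact le_max_of_le_right (by nlinarith)
  · exact le_max_of_le_left (by nlinarith)

lemma tker_diff {a : ℝ} (ha : 0 < a) (w : ℂ) : ‖w⁻¹ - tker a w‖ ≤ ckr a w := by
  by_cases hw : w = 0
  · simp [hw, tker, ckr]
  have hw' : 0 < ‖w‖ := norm_pos_iff.2 hw
  have e : w⁻¹ = (starRingEnd ℂ) w * (((‖w‖ ^ 2)⁻¹ : ℝ) : ℂ) := by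
    rw [Complex.inv_def, Complex.normSq_eq_norm_sq]
  unfold ckr
  split_ifs with h
  · have hm : max (‖w‖ ^ 2) (a ^ 2) = a ^ 2 := max_eq_right (by gcongr)
    rw [e, tker, hm, ← mul_sub, ← Complex.ofReal_sub, norm_mul, RCLike.norm_conj, Complex.norm_real]
    have h1 : (a ^ 2)⁻¹ ≤ (‖w‖ ^ 2)⁻¹ := by gcongr
    rw [Real.norm_of_nonneg (by linarith)]
    have h2 : 0 ≤ (a ^ 2)⁻¹ := by positivity
    calc ‖w‖ * ((‖w‖ ^ 2)⁻¹ - (a ^ 2)⁻¹) ≤ ‖w‖ * (‖w‖ ^ 2)⁻¹ := by gcongr; linarith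
      _ = ‖w‖⁻¹ := by field_simp
  · push Not at h
    have hm : max (‖w‖ ^ 2) (a ^ 2) = ‖w‖ ^ 2 := max_eq_left (by gcongr)
    rw [e, tker, hm]; simp

lemma Cz_cont {f : ℂ → ℂ} (hf : Dens f) : Continuous (Cz f) := by
  unfold Cz
  refine continuous_const.mul ?_
  obtain ⟨M, hM0, hM⟩ := hf.bdd
  have hu : TendstoUniformly (fun (n : ℕ) z => ∫ ζ, f ζ * tker (1 / ((n:ℝ) + 1)) (z - ζ))
      (fun z => ∫ ζ, f ζ * (z - ζ)⁻¹) atTop := by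
    rw [Metric.tendstoUniformly_iff]
    intro ε hε
    have hlim : Tendsto (fun n : ℕ => M * (2 * Real.pi * (1 / ((n:ℝ) + 1)))) atTop (𝓝 0) := by
      simpa using (tendsto_one_div_add_atTop_nhds_zero_nat.const_mul (2 * Real.pi)).const_mul M
    filter_upwards [hlim.eventually_lt_const hε] with n hn z
    set a : ℝ := 1 / ((n:ℝ) + 1) with ha
    have ha0 : 0 < a := by positivity
    have hI : Integrable (fun ζ => f ζ * tker a (z - ζ)) := by
      refine (hf.integrable.norm.mul_const a⁻¹).mono'
        (hf.meas.mul ((tker_cont ha0).comp (by fun_prop : Continuous fun ζ : ℂ => z - ζ)).measurable).aestronglyMeasurable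
        (Eventually.of_forall fun ζ => ?_)
      rw [norm_mul]; gcongr; exact tker_bound ha0 _
    rw [dist_eq_norm, ← integral_sub (hf.ker_integrable z) hI]
    refine lt_of_le_of_lt ?_ hn
    calc _ ≤ ∫ ζ, M * ckr a (z - ζ) := by
          refine norm_integral_le_of_norm_le ((ckrc_integrable a z).const_mul M)
            (Eventually.of_forall fun ζ => ?_)
          rw [← mul_sub, norm_mul]
          exact mul_le_mul (hM ζ) (tker_diff ha0 _) (norm_nonneg _) hM0
      _ = _ := by rw [integral_const_mul, ckrc_integral ha0.le]
  refine hu.continuous (Frequently.of_forall fun n => ?_)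
  set a : ℝ := 1 / ((n:ℝ) + 1) with ha
  have ha0 : 0 < a := by positivity
  refine continuous_of_dominated (bound := fun ζ => ‖f ζ‖ * a⁻¹) (fun z => ?_) (fun z => ?_)
    (hf.integrable.norm.mul_const a⁻¹) ?_
  · exact (hf.meas.mul ((tker_cont ha0).comp (by fun_prop : Continuous fun ζ : ℂ => z - ζ)).measurable).aestronglyMeasurable
  · refine Eventually.of_forall fun ζ => ?_
    rw [norm_mul]; gcongr; exact tker_bound ha0 _
  · refine Eventually.of_forall fun ζ => ?_
    exact continuous_const.mul ((tker_cont ha0).comp (by fun_prop))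

/-! ### Product rule and exponentials of Cauchy transforms -/


lemma Cz_double_integrable {f g : ℂ → ℂ} (hf : Dens f) (hg : Dens g) (z : ℂ) :
    Integrable (fun p : ℂ × ℂ => f p.1 * (z - p.1)⁻¹ * (g p.2 * (p.1 - p.2)⁻¹))
      (volume.prod volume) := by
  have hfm := hf.meas
  have hgm := hg.meas
  have hm : Measurable (fun p : ℂ × ℂ => f p.1 * (z - p.1)⁻¹ * (g p.2 * (p.1 - p.2)⁻¹)) := by
    fun_prop
  rw [integrable_prod_iff hm.aestronglyMeasurable]
  refine ⟨Eventually.of_forall fun a => (hg.ker_integrable a).const_mul (f a * (z - a)⁻¹), ?_⟩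
  obtain ⟨M, hM0, hM⟩ := hg.bdd
  set L := ∫ ζ, ‖g ζ‖
  refine ((hf.ker_integrable z).norm.mul_const (2 * Real.pi * 1 * M + L / 1)).mono'
    hm.norm.stronglyMeasurable.integral_prod_right.aestronglyMeasurable
    (Eventually.of_forall fun a => ?_)
  simp only [norm_mul (f a * (z - a)⁻¹)]
  rw [integral_const_mul, norm_mul, norm_norm]
  gcongr
  rw [Real.norm_of_nonneg (integral_nonneg fun _ => norm_nonneg _)]
  have := (K1 a hg.integrable.norm (fun _ => norm_nonneg _) hM (L := L) le_rfl one_pos).2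
  simpa using this

/-- Product rule, from the partial fraction decomposition of `1 / ((z - a) (z - b))` and Fubini. -/
lemma Cz_mul {f g : ℂ → ℂ} (hf : Dens f) (hg : Dens g) (z : ℂ) :
    Cz f z * Cz g z = Cz (fun ζ => f ζ * Cz g ζ + g ζ * Cz f ζ) z := by
  have h1 := Cz_double_integrable hf hg z
  have h2 : Integrable (fun p : ℂ × ℂ => g p.2 * (z - p.2)⁻¹ * (f p.1 * (p.2 - p.1)⁻¹))
      (volume.prod volume) := (Cz_double_integrable hg hf z).swap
  have key : (∫ ζ, f ζ * (z - ζ)⁻¹) * (∫ ζ, g ζ * (z - ζ)⁻¹) =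
      (∫ a, ∫ b, f a * (z - a)⁻¹ * (g b * (a - b)⁻¹)) +
        ∫ a, ∫ b, g a * (z - a)⁻¹ * (f b * (a - b)⁻¹) := by
    rw [integral_integral_swap (f := fun a b => g a * (z - a)⁻¹ * (f b * (a - b)⁻¹))
      (Cz_double_integrable hg hf z)]
    rw [← integral_integral_add (f := fun p : ℂ × ℂ => f p.1 * (z - p.1)⁻¹ * (g p.2 * (p.1 - p.2)⁻¹))
      (g := fun p : ℂ × ℂ => g p.2 * (z - p.2)⁻¹ * (f p.1 * (p.2 - p.1)⁻¹)) h1 h2]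
    rw [← integral_mul_const]
    have hz : ∀ᵐ a : ℂ, a ≠ z := Measure.ae_ne volume z
    refine integral_congr_ae ?_
    filter_upwards [hz] with a ha
    rw [← integral_const_mul]
    refine integral_congr_ae ?_
    filter_upwards [hz, Measure.ae_ne volume a] with b hb hab
    have e1 : z - a ≠ 0 := sub_ne_zero.2 ha.symm
    have e2 : z - b ≠ 0 := sub_ne_zero.2 hb.symm
    have e3 : a - b ≠ 0 := sub_ne_zero.2 hab.symm
    have e4 : b - a ≠ 0 := sub_ne_zero.2 hab
    have : (b - a)⁻¹ = - (a - b)⁻¹ := by rw [← neg_sub a b, inv_neg]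
    simp only [this]
    field_simp
    ring
  rw [Cz_add (by simpa [mul_comm] using hf.mul_cont (Cz_cont hg))
    (by simpa [mul_comm] using hg.mul_cont (Cz_cont hf))]
  unfold Cz
  have e : ∀ (f g : ℂ → ℂ), (∫ a, ∫ b, f a * (z - a)⁻¹ * (g b * (a - b)⁻¹)) =
      Real.pi * ∫ a, f a * ((Real.pi : ℂ)⁻¹ * ∫ b, g b * (a - b)⁻¹) * (z - a)⁻¹ := by
    intro f g
    rw [← integral_const_mul]
    refine integral_congr_ae (Eventually.of_forall fun a => ?_)
    have : (Real.pi : ℂ) ≠ 0 := by exact_mod_cast Real.pi_ne_zero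
    simp only [integral_const_mul]
    field_simp
  rw [e, e] at key
  calc _ = (Real.pi : ℂ)⁻¹ * (Real.pi : ℂ)⁻¹ * ((∫ ζ, f ζ * (z - ζ)⁻¹) * (∫ ζ, g ζ * (z - ζ)⁻¹)) := by
        ring
    _ = _ := by
        have : (Real.pi : ℂ) ≠ 0 := by exact_mod_cast Real.pi_ne_zero
        rw [key]; field_simp

lemma Cz_pow {α : ℂ → ℂ} (hα : Dens α) (n : ℕ) (z : ℂ) :
    (Cz α z) ^ (n + 1) = Cz (fun ζ => ((n : ℂ) + 1) * ((Cz α ζ) ^ n * α ζ)) z := by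
  induction n generalizing z with
  | zero => simp
  | succ n ih =>
    have hd : Dens (fun ζ => ((n : ℂ) + 1) * ((Cz α ζ) ^ n * α ζ)) :=
      (hα.mul_cont ((Cz_cont hα).pow n)).smul _
    rw [pow_succ, ih, Cz_mul hd hα]
    congr 1
    ext ζ
    rw [← ih]
    push_cast
    ring

/-- The exponential of a Cauchy transform is `1` plus a Cauchy transform; this is the sum of the
identities `Cz_pow` over all powers. -/
lemma Cz_exp {α : ℂ → ℂ} (hα : Dens α) (z : ℂ) :
    Complex.exp (Cz α z) = 1 + Cz (fun ζ => Complex.exp (Cz α ζ) * α ζ) z := by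
  obtain ⟨M, hM0, hM⟩ := hα.bdd
  have hA := Cz_bound hα (a := 1) hM (L := ∫ ζ, ‖α ζ‖) le_rfl one_pos
  set A := 2 * 1 * M + (∫ ζ, ‖α ζ‖) / 1
  have hA0 : 0 ≤ A := (norm_nonneg _).trans (hA 0)
  have hes : ∀ w : ℂ, HasSum (fun n : ℕ => w ^ n / (n.factorial : ℂ)) (Complex.exp w) := by
    intro w
    rw [Complex.exp_eq_exp_ℂ]
    exact NormedSpace.expSeries_div_hasSum_exp w
  have hA' : Summable fun n : ℕ => A ^ n / (n.factorial : ℝ) := Real.summable_pow_div_factorial A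
  have hs : HasSum (fun n : ℕ => ∫ ζ, (Cz α ζ) ^ n / (n.factorial : ℂ) * α ζ * (z - ζ)⁻¹)
      (∫ ζ, Complex.exp (Cz α ζ) * α ζ * (z - ζ)⁻¹) := by
    refine hasSum_integral_of_dominated_convergence
      (fun n ζ => A ^ n / (n.factorial : ℝ) * (‖α ζ‖ * ‖z - ζ‖⁻¹)) (fun n => ?_) (fun n => ?_) ?_ ?_ ?_
    · have := (Cz_cont hα).measurable
      have := hα.meas
      exact Measurable.aestronglyMeasurable (by fun_prop)
    · refine Eventually.of_forall fun ζ => ?_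
      rw [mul_assoc, norm_mul, norm_mul (α ζ), norm_div, norm_pow, norm_inv]
      simp only [Complex.norm_natCast]
      gcongr
      exact hA ζ
    · exact Eventually.of_forall fun ζ => hA'.mul_right _
    · simp only [tsum_mul_right]
      exact (hα.ker_norm_integrable z).const_mul _
    · refine Eventually.of_forall fun ζ => ?_
      simp only [mul_assoc]
      exact (hes _).mul_right _
  have h2 := (hs.mul_left ((Real.pi : ℂ)⁻¹))
  have h3 : ∀ n : ℕ, (Real.pi : ℂ)⁻¹ * ∫ ζ, (Cz α ζ) ^ n / (n.factorial : ℂ) * α ζ * (z - ζ)⁻¹ =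
      (Cz α z) ^ (n + 1) / ((n + 1).factorial : ℂ) := by
    intro n
    rw [Cz_pow hα, Cz_smul, Nat.factorial_succ]
    have : (n.factorial : ℂ) ≠ 0 := by exact_mod_cast n.factorial_ne_zero
    have h4 : ((n:ℂ) + 1) ≠ 0 := by exact_mod_cast n.succ_ne_zero
    have h5 : Cz (fun ζ => (Cz α ζ) ^ n * α ζ) z =
        (n.factorial : ℂ) * Cz (fun ζ => (Cz α ζ) ^ n / (n.factorial : ℂ) * α ζ) z := by
      rw [← Cz_smul]; congr 1; ext ζ; field_simp
    have h6 : (Real.pi : ℂ)⁻¹ * ∫ ζ, (Cz α ζ) ^ n / (n.factorial : ℂ) * α ζ * (z - ζ)⁻¹ =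
        Cz (fun ζ => (Cz α ζ) ^ n / (n.factorial : ℂ) * α ζ) z := rfl
    rw [h5, h6]
    push_cast
    generalize Cz (fun ζ => (Cz α ζ) ^ n / (n.factorial : ℂ) * α ζ) z = X
    field_simp
  simp only [h3] at h2
  have h4 := (hasSum_nat_add_iff' 1).2 (hes (Cz α z))
  simp only [Finset.range_one, Finset.sum_singleton, pow_zero, Nat.factorial_zero, Nat.cast_one,
    div_one] at h4
  have h5 := h4.unique h2
  rw [sub_eq_iff_eq_add'] at h5
  exact h5

/-- Conjugation by an exponential: if `Q = Cz k` then `e^{Cα}·Q` is again a Cauchy transform, with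
the density corrected by `α Q`. -/
lemma Cz_exp_mul {α k : ℂ → ℂ} (hα : Dens α) (hk : Dens k) (z : ℂ) :
    Complex.exp (Cz α z) * Cz k z =
      Cz (fun ζ => Complex.exp (Cz α ζ) * (k ζ + α ζ * Cz k ζ)) z := by
  have he : Dens (fun ζ => Complex.exp (Cz α ζ) * α ζ) :=
    hα.mul_cont (Complex.continuous_exp.comp (Cz_cont hα))
  have hd : Dens (fun ζ => (fun ζ => Complex.exp (Cz α ζ) * α ζ) ζ * Cz k ζ +
      k ζ * Cz (fun ζ => Complex.exp (Cz α ζ) * α ζ) ζ) :=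
    (by simpa [mul_comm] using (he.mul_cont (Cz_cont hk)) : Dens _).add
      (by simpa [mul_comm] using (hk.mul_cont (Cz_cont he)) : Dens _)
  rw [Cz_exp hα, add_mul, one_mul, Cz_mul he hk, ← Cz_add hk hd]
  congr 1
  ext ζ
  have := Cz_exp hα ζ
  have e : Cz (fun ζ => Complex.exp (Cz α ζ) * α ζ) ζ = Complex.exp (Cz α ζ) - 1 := by
    rw [this]; ring
  rw [e]; ring

/-! ### Continuity modulus of Cauchy transforms -/

lemma inv_mul_inv_le {a b : ℝ} (ha : 0 < a) (hb : 0 < b) (hab : 1 ≤ a + b) :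
    a⁻¹ * b⁻¹ ≤ 4 * ((1 + a ^ 2)⁻¹ + (1 + b ^ 2)⁻¹) + 4 * (if a < 1 then a⁻¹ else 0) +
      4 * (if b < 1 then b⁻¹ else 0) := by
  wlog h : a ≤ b generalizing a b
  · have := this hb ha (by linarith) (le_of_not_ge h)
    linarith [mul_comm a⁻¹ b⁻¹]
  have hb2 : 1 / 2 ≤ b := by linarith
  have h1 : 0 ≤ (1 + b ^ 2)⁻¹ := by positivity
  have h1' : 0 ≤ (1 + a ^ 2)⁻¹ := by positivity
  have h2 : 0 ≤ (if b < 1 then b⁻¹ else 0) := by split_ifs <;> positivity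
  split_ifs with h3 h4 h4
  all_goals try have hbi : 0 ≤ b⁻¹ := by positivity
  · have : b⁻¹ ≤ 2 := by rw [inv_le_comm₀ hb two_pos]; linarith
    have : a⁻¹ * b⁻¹ ≤ a⁻¹ * 2 := by gcongr
    have : 0 ≤ a⁻¹ := by positivity
    linarith
  · have : b⁻¹ ≤ 2 := by rw [inv_le_comm₀ hb two_pos]; linarith
    have : a⁻¹ * b⁻¹ ≤ a⁻¹ * 2 := by gcongr
    have : 0 ≤ a⁻¹ := by positivity
    linarith
  · exact absurd (h.trans_lt h4) h3
  · push Not at h3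
    have e1 : a⁻¹ * b⁻¹ ≤ a⁻¹ * a⁻¹ := by gcongr
    have e2 : a⁻¹ * a⁻¹ ≤ 2 * (1 + a ^ 2)⁻¹ := by
      rw [← mul_inv, inv_le_comm₀ (by positivity) (by positivity), mul_inv, inv_inv]
      nlinarith
    linarith

/-- At distances at least one, the Cauchy transform of a bounded density on a disc of radius `T`
is Lipschitz with constant `O(1 + log (1 + T²))`. -/
lemma Cz_logLip_far {f : ℂ → ℂ} (hf : Dens f) {M T : ℝ} (hT : 1 ≤ T) (hM : ∀ ζ, ‖f ζ‖ ≤ M)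
    (hs : ∀ ζ, ζ ∉ ball (0:ℂ) T → f ζ = 0) {z z' : ℂ} (hz : 1 ≤ ‖z - z'‖) :
    ‖Cz f z - Cz f z'‖ ≤ 24 * (1 + Real.log (1 + T ^ 2)) * M * ‖z - z'‖ := by
  have hM0 : 0 ≤ M := (norm_nonneg _).trans (hM 0)
  have hT0 : 0 ≤ T := by linarith
  have hlog : 0 ≤ Real.log (1 + T ^ 2) := Real.log_nonneg (by nlinarith)
  obtain ⟨hi1, hb1⟩ := LOG hT0 z
  obtain ⟨hi2, hb2⟩ := LOG hT0 z'
  unfold Cz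
  rw [← mul_sub, ← integral_sub (hf.ker_integrable z) (hf.ker_integrable z'), norm_mul, norm_inv,
    Complex.norm_real, Real.norm_of_nonneg Real.pi_pos.le]
  rw [← integrable_indicator_iff measurableSet_ball] at hi1 hi2
  rw [← integral_indicator measurableSet_ball] at hb1 hb2
  set g1 := (ball (0:ℂ) T).indicator (fun ζ => (1 + ‖z - ζ‖ ^ 2)⁻¹)
  set g2 := (ball (0:ℂ) T).indicator (fun ζ => (1 + ‖z' - ζ‖ ^ 2)⁻¹)
  have hi := ((hi1.add hi2).add ((ckrc_integrable 1 z).add (ckrc_integrable 1 z'))).const_mul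
    (4 * M * ‖z - z'‖)
  have hz0 : ∀ᵐ a : ℂ, a ≠ z := Measure.ae_ne volume z
  have hz1 : ∀ᵐ a : ℂ, a ≠ z' := Measure.ae_ne volume z'
  have key := norm_integral_le_of_norm_le
    (f := fun ζ => f ζ * (z - ζ)⁻¹ - f ζ * (z' - ζ)⁻¹) hi (by
    filter_upwards [hz0, hz1] with ζ h0 h1
    have e0 : z - ζ ≠ 0 := sub_ne_zero.2 h0.symm
    have e1 : z' - ζ ≠ 0 := sub_ne_zero.2 h1.symm
    simp only [Pi.add_apply]
    by_cases hζ : ζ ∈ ball (0:ℂ) T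
    · have : f ζ * (z - ζ)⁻¹ - f ζ * (z' - ζ)⁻¹ =
        f ζ * (z' - z) * ((z - ζ)⁻¹ * (z' - ζ)⁻¹) := by field_simp; ring
      rw [this, norm_mul, norm_mul, norm_mul, norm_inv, norm_inv, norm_sub_rev z' z]
      have tri : 1 ≤ ‖z - ζ‖ + ‖z' - ζ‖ := by
        refine hz.trans ?_
        have := norm_sub_le (z - ζ) (z' - ζ)
        simpa using this
      have := inv_mul_inv_le (norm_pos_iff.2 e0) (norm_pos_iff.2 e1) tri
      simp only [g1, g2, indicator_of_mem hζ, ckr]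
      calc _ ≤ M * ‖z - z'‖ * _ := by gcongr; exact hM ζ
        _ ≤ M * ‖z - z'‖ * _ := mul_le_mul_of_nonneg_left this (by positivity)
        _ = _ := by ring
    · rw [hs ζ hζ]
      have := ckr_nonneg 1 (z - ζ)
      have := ckr_nonneg 1 (z' - ζ)
      simp only [g1, g2, indicator_of_notMem hζ]
      simp; positivity)
  rw [integral_const_mul] at key
  have e : (∫ a, ((g1 + g2) + ((fun ζ => ckr 1 (z - ζ)) + fun ζ => ckr 1 (z' - ζ))) a) =
      (∫ a, g1 a) + (∫ a, g2 a) + ((2 * Real.pi * 1) + (2 * Real.pi * 1)) := by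
    rw [integral_add' (hi1.add hi2) ((ckrc_integrable 1 z).add (ckrc_integrable 1 z')),
      integral_add' hi1 hi2, integral_add' (ckrc_integrable 1 z) (ckrc_integrable 1 z'),
      kerc_eq z, kerc_eq z']
  rw [e] at key
  have hpi := Real.pi_pos
  calc _ ≤ Real.pi⁻¹ * (4 * M * ‖z - z'‖ * ((∫ a, g1 a) + (∫ a, g2 a) +
        ((2 * Real.pi * 1) + (2 * Real.pi * 1)))) := by gcongr
    _ ≤ Real.pi⁻¹ * (4 * M * ‖z - z'‖ * (Real.pi * (6 * (1 + Real.log (1 + T ^ 2))))) := by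
        gcongr; nlinarith
    _ = _ := by field_simp; ring
where
  kerc_eq (z : ℂ) : ∫ ζ, ckr 1 (z - ζ) = 2 * Real.pi * 1 := ckrc_integral zero_le_one z

/-- The estimate `Cz_logLip_far` for arbitrary pairs of points: close points are compared through
an intermediate point at distance two. -/
lemma Cz_logLip {f : ℂ → ℂ} (hf : Dens f) {M T : ℝ} (hT : 1 ≤ T) (hM : ∀ ζ, ‖f ζ‖ ≤ M)
    (hs : ∀ ζ, ζ ∉ ball (0:ℂ) T → f ζ = 0) (z z' : ℂ) :
    ‖Cz f z - Cz f z'‖ ≤ 24 * (1 + Real.log (1 + T ^ 2)) * M * (‖z - z'‖ + 4) := by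
  have hM0 : 0 ≤ M := (norm_nonneg _).trans (hM 0)
  have hlog : 0 ≤ Real.log (1 + T ^ 2) := Real.log_nonneg (by nlinarith)
  set c := 24 * (1 + Real.log (1 + T ^ 2)) * M
  have hc : 0 ≤ c := by positivity
  rcases le_total 1 ‖z - z'‖ with h | h
  · refine (Cz_logLip_far hf hT hM hs h).trans ?_
    gcongr; linarith
  · have e1 : ‖z - (z + 2)‖ = 2 := by simp
    have t1 : 1 ≤ ‖(z + 2) - z'‖ ∧ ‖(z + 2) - z'‖ ≤ 2 + ‖z - z'‖ := by
      have e : (z + 2) - z' = 2 + (z - z') := by ring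
      rw [e]
      have h1 := norm_sub_norm_le (2:ℂ) (-(z - z'))
      have h2 := norm_add_le (2:ℂ) (z - z')
      simp only [sub_neg_eq_add, norm_neg, Complex.norm_ofNat] at h1 h2
      constructor <;> linarith
    have h1 := Cz_logLip_far hf hT hM hs (z := z) (z' := z + 2) (by rw [e1]; norm_num)
    have h2 := Cz_logLip_far hf hT hM hs (z := z + 2) (z' := z') t1.1
    rw [e1] at h1
    calc _ ≤ _ := norm_sub_le_norm_sub_add_norm_sub _ (Cz f (z + 2)) _
      _ ≤ c * 2 + c * ‖z + 2 - z'‖ := add_le_add h1 h2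
      _ ≤ c * 2 + c * (2 + ‖z - z'‖) := by gcongr; exact t1.2
      _ = _ := by ring

/-! ### Wirtinger derivatives -/


/-- The operator `∂/∂z̄` on complex-valued functions. -/
noncomputable def dbar (f : ℂ → ℂ) (z : ℂ) : ℂ :=
  (fderiv ℝ f z 1 + Complex.I * fderiv ℝ f z Complex.I) / 2

/-- The operator `∂/∂z` on real-valued functions. -/
noncomputable def dU (u : ℂ → ℝ) (z : ℂ) : ℂ :=
  ((fderiv ℝ u z 1 : ℝ) - Complex.I * (fderiv ℝ u z Complex.I : ℝ)) / 2

lemma dbar_mul {f g : ℂ → ℂ} {z : ℂ} (hf : DifferentiableAt ℝ f z) (hg : DifferentiableAt ℝ g z) :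
    dbar (fun w => f w * g w) z = dbar f z * g z + f z * dbar g z := by
  unfold dbar
  rw [fderiv_fun_mul hf hg]
  simp; ring

lemma dbar_ofReal {u : ℂ → ℝ} {z : ℂ} (hu : DifferentiableAt ℝ u z) :
    dbar (fun w => (u w : ℂ)) z = (starRingEnd ℂ) (dU u z) := by
  have : HasFDerivAt (fun w => (u w : ℂ)) (Complex.ofRealCLM.comp (fderiv ℝ u z)) z :=
    Complex.ofRealCLM.hasFDerivAt.comp z hu.hasFDerivAt
  unfold dbar dU
  rw [this.fderiv]
  simp [Complex.conj_ofNat]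

lemma dbar_holo {f : ℂ → ℂ} {z : ℂ} (hf : DifferentiableAt ℂ f z) : dbar f z = 0 := by
  unfold dbar
  rw [(hf.hasFDerivAt.restrictScalars ℝ).fderiv]
  have : (fderiv ℂ f z) Complex.I = Complex.I * fderiv ℂ f z 1 := by
    rw [← smul_eq_mul, ← map_smul]; simp
  simp only [ContinuousLinearMap.coe_restrictScalars', this]
  rw [← mul_assoc, Complex.I_mul_I]; simp

lemma fderiv_eq_dU (u : ℂ → ℝ) (z v : ℂ) : fderiv ℝ u z v = 2 * (dU u z * v).re := by
  have e : v = v.re • (1:ℂ) + v.im • Complex.I := by simp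
  have h : fderiv ℝ u z v = v.re * fderiv ℝ u z 1 + v.im * fderiv ℝ u z Complex.I := by
    conv_lhs => rw [e]
    rw [map_add, map_smul, map_smul]; simp
  rw [h]
  unfold dU
  simp
  ring

lemma abs_fderiv_le (u : ℂ → ℝ) (z v : ℂ) : |fderiv ℝ u z v| ≤ 2 * ‖dU u z‖ * ‖v‖ := by
  rw [fderiv_eq_dU, abs_mul, abs_two, mul_assoc, ← norm_mul]
  gcongr
  exact Complex.abs_re_le_norm _

lemma norm_dU_le (u : ℂ → ℝ) (z : ℂ) : ‖dU u z‖ ≤ ‖fderiv ℝ u z‖ := by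
  unfold dU
  rw [norm_div, Complex.norm_ofNat]
  have h1 := (fderiv ℝ u z).le_opNorm 1
  have h2 := (fderiv ℝ u z).le_opNorm Complex.I
  have h3 := norm_sub_le ((fderiv ℝ u z 1 : ℝ) : ℂ) (Complex.I * (fderiv ℝ u z Complex.I : ℝ))
  simp only [norm_one, mul_one, Complex.norm_I, norm_mul, Complex.norm_real, one_mul] at *
  linarith

lemma dU_cont {u : ℂ → ℝ} (hu : ContDiff ℝ 1 u) : Continuous (dU u) := by
  unfold dU
  have h := hu.continuous_fderiv (by simp)
  fun_prop

lemma contDiff_fderiv_apply {u : ℂ → ℝ} (hu : ContDiff ℝ 2 u) (v : ℂ) :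
    ContDiff ℝ 1 (fun z => fderiv ℝ u z v) :=
  (hu.fderiv_right (m := 1) (by norm_num)).clm_apply contDiff_const

lemma dU_contDiff {u : ℂ → ℝ} (hu : ContDiff ℝ 2 u) : ContDiff ℝ 1 (dU u) := by
  unfold dU
  have h1 := contDiff_fderiv_apply hu 1
  have h2 := contDiff_fderiv_apply hu Complex.I
  exact ((Complex.ofRealCLM.contDiff.comp h1).sub
    (contDiff_const.mul (Complex.ofRealCLM.contDiff.comp h2))).div_const 2

lemma lap_cont {u : ℂ → ℝ} (hu : ContDiff ℝ 2 u) : Continuous (lap u) := by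
  unfold lap
  have h1 := (contDiff_fderiv_apply hu 1).continuous_fderiv (by simp)
  have h2 := (contDiff_fderiv_apply hu Complex.I).continuous_fderiv (by simp)
  fun_prop

lemma dbar_cont {f : ℂ → ℂ} (hf : ContDiff ℝ 1 f) : Continuous (dbar f) := by
  unfold dbar
  have h := hf.continuous_fderiv (by simp)
  fun_prop

/-- The factorisation `4 ∂̄ ∂ = Δ`. -/
lemma dbar_dU {u : ℂ → ℝ} (hu : ContDiff ℝ 2 u) (z : ℂ) :
    dbar (dU u) z = (lap u z : ℂ) / 4 := by
  have h1 := ((contDiff_fderiv_apply hu 1).differentiable (by simp) z).hasFDerivAt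
  have h2 := ((contDiff_fderiv_apply hu Complex.I).differentiable (by simp) z).hasFDerivAt
  have h3 : HasFDerivAt (dU u) _ z :=
    (((Complex.ofRealCLM.hasFDerivAt.comp z h1).sub
      ((Complex.ofRealCLM.hasFDerivAt.comp z h2).const_mul Complex.I)).mul_const ((2:ℂ)⁻¹))
  unfold dbar
  rw [h3.fderiv]
  have hsymm : fderiv ℝ (fun w => fderiv ℝ u w 1) z Complex.I =
      fderiv ℝ (fun w => fderiv ℝ u w Complex.I) z 1 := by
    have hs : IsSymmSndFDerivAt ℝ u z := hu.contDiffAt.isSymmSndFDerivAt (by simp)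
    have hd : DifferentiableAt ℝ (fderiv ℝ u) z :=
      (hu.fderiv_right (m := 1) (by norm_num)).differentiable (by simp) z
    rw [fderiv_clm_apply hd (by fun_prop), fderiv_clm_apply hd (by fun_prop)]
    simpa using hs Complex.I 1
  unfold lap
  simp [hsymm]
  ring_nf
  simp
  ring

/-! ### The Cauchy–Pompeiu formula -/

/-- The operator `∂/∂z̄` in terms of the radial and angular derivatives. -/
lemma polar_deriv_identity {f : ℂ → ℂ} (z : ℂ) (θ : ℝ) :
    2 * (dbar f z * Complex.exp (-(θ * Complex.I))) =
      fderiv ℝ f z (Complex.exp (θ * Complex.I)) +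
        Complex.I * fderiv ℝ f z (Complex.I * Complex.exp (θ * Complex.I)) := by
  have h : ∀ v : ℂ, fderiv ℝ f z v = v.re * fderiv ℝ f z 1 + v.im * fderiv ℝ f z Complex.I := by
    intro v
    have e : v = v.re • (1:ℂ) + v.im • Complex.I := by simp
    conv_lhs => rw [e]
    rw [map_add, map_smul, map_smul]; simp
  rw [h (Complex.exp _), h (Complex.I * _)]
  rw [← neg_mul, ← Complex.ofReal_neg, Complex.exp_mul_I, Complex.exp_mul_I]
  unfold dbar
  have e1 : (Complex.cos θ + Complex.sin θ * Complex.I).re = Real.cos θ := by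
    rw [← Complex.ofReal_cos, ← Complex.ofReal_sin, ← Complex.mk_eq_add_mul_I]
  have e2 : (Complex.cos θ + Complex.sin θ * Complex.I).im = Real.sin θ := by
    rw [← Complex.ofReal_cos, ← Complex.ofReal_sin, ← Complex.mk_eq_add_mul_I]
  rw [Complex.mul_re, Complex.mul_im, e1, e2]
  push_cast
  simp
  linear_combination (-Complex.sin θ * fderiv ℝ f z Complex.I) * Complex.I_sq

/-- Cauchy–Pompeiu formula at the origin: in polar coordinates the angular derivative integrates
to zero and the radial one to the value at the centre. -/
lemma pompeiu_zero {g : ℂ → ℂ} (hg : ContDiff ℝ 1 g) (hs : HasCompactSupport g) :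
    ∫ w, dbar g w * w⁻¹ = - (Real.pi : ℂ) * g 0 := by
  obtain ⟨R, hR0, hR⟩ : ∃ R : ℝ, 0 < R ∧ ∀ w, R ≤ ‖w‖ → w ∉ tsupport g := by
    obtain ⟨R, hR⟩ := hs.isCompact.isBounded.subset_ball (0:ℂ)
    refine ⟨max R 1, by positivity, fun w hw h => ?_⟩
    have := hR h
    simp at this
    exact absurd (le_max_left R 1) (by linarith)
  have hg0 : ∀ w, R ≤ ‖w‖ → g w = 0 := fun w hw => image_eq_zero_of_notMem_tsupport (hR w hw)
  have hdg0 : ∀ w, R ≤ ‖w‖ → fderiv ℝ g w = 0 := fun w hw =>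
    image_eq_zero_of_notMem_tsupport fun h => hR w hw (tsupport_fderiv_subset ℝ h)
  have hgd := hg.differentiable (by simp)
  have hcd := hg.continuous_fderiv (by simp)
  set E : ℝ → ℂ := fun θ => Complex.exp (θ * Complex.I) with hE
  have hEc : Continuous E := by fun_prop
  have hEn : ∀ θ, ‖E θ‖ = 1 := fun θ => Complex.norm_exp_ofReal_mul_I θ
  have hEd : ∀ θ, HasDerivAt E (Complex.I * E θ) θ := by
    intro θ
    have := ((Complex.ofRealCLM.hasDerivAt (x := θ)).mul_const Complex.I).cexp
    exact this.congr_deriv (by simp [hE]; ring)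
  set F1 : ℝ × ℝ → ℂ := fun p => fderiv ℝ g (p.1 * E p.2) (E p.2) with hF1
  set F2 : ℝ × ℝ → ℂ := fun p => fderiv ℝ g (p.1 * E p.2) (Complex.I * E p.2) with hF2
  have hF1c : Continuous F1 := by
    refine Continuous.clm_apply (hcd.comp (by fun_prop)) (by fun_prop)
  have hF2c : Continuous F2 := by
    refine Continuous.clm_apply (hcd.comp (by fun_prop)) (by fun_prop)
  have hn : ∀ p : ℝ × ℝ, ‖(p.1 : ℂ) * E p.2‖ = |p.1| := by
    intro p; rw [norm_mul, hEn]; simp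
  -- reduction to a bounded rectangle in polar coordinates
  have h1 : ∫ w, dbar g w * w⁻¹ =
      ∫ p in Ioi (0:ℝ) ×ˢ Ioo (-Real.pi) Real.pi, (F1 p + Complex.I * F2 p) / 2 := by
    rw [← Complex.integral_comp_polarCoord_symm]
    have ht : polarCoord.target = Ioi (0:ℝ) ×ˢ Ioo (-Real.pi) Real.pi := rfl
    rw [ht]
    refine setIntegral_congr_fun (measurableSet_Ioi.prod measurableSet_Ioo) fun p hp => ?_
    have hp1 : (p.1 : ℂ) ≠ 0 := by
      have : 0 < p.1 := hp.1
      exact_mod_cast this.ne'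
    have e : Complex.polarCoord.symm p = p.1 * E p.2 := by
      rw [Complex.polarCoord_symm_apply, hE]
      simp only [Complex.exp_mul_I]
      push_cast; ring
    simp only [hF1, hF2]
    rw [← polar_deriv_identity, e, Complex.real_smul, Complex.exp_neg]
    have : E p.2 ≠ 0 := Complex.exp_ne_zero _
    simp only [hE] at this ⊢
    field_simp
  have h2 : ∀ F : ℝ × ℝ → ℂ, (∀ p, R ≤ p.1 → F p = 0) →
      ∫ p in Ioi (0:ℝ) ×ˢ Ioo (-Real.pi) Real.pi, F p =
        ∫ p in Ioc (0:ℝ) R ×ˢ Ioo (-Real.pi) Real.pi, F p := by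
    intro F hF
    refine setIntegral_eq_of_subset_of_forall_sdiff_eq_zero
      (measurableSet_Ioi.prod measurableSet_Ioo) (prod_mono Ioc_subset_Ioi_self le_rfl) ?_
    rintro p ⟨hp, hp'⟩
    apply hF
    by_contra h
    exact hp' ⟨⟨hp.1, (not_le.1 h).le⟩, hp.2⟩
  have hIntg : ∀ F : ℝ × ℝ → ℂ, Continuous F →
      IntegrableOn F (Ioc (0:ℝ) R ×ˢ Ioo (-Real.pi) Real.pi) := by
    intro F hF
    refine (hF.continuousOn.integrableOn_compact
      (isCompact_Icc.prod (isCompact_Icc (a := -Real.pi) (b := Real.pi)))).mono_set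
      (prod_mono Ioc_subset_Icc_self Ioo_subset_Icc_self)
  have hF10 : ∀ p : ℝ × ℝ, R ≤ p.1 → F1 p = 0 := by
    intro p hp
    simp only [hF1]
    rw [hdg0 _ (by rw [hn]; exact hp.trans (le_abs_self _))]; simp
  have hF20 : ∀ p : ℝ × ℝ, R ≤ p.1 → F2 p = 0 := by
    intro p hp
    simp only [hF2]
    rw [hdg0 _ (by rw [hn]; exact hp.trans (le_abs_self _))]; simp
  rw [h1, h2 _ (fun p hp => by rw [hF10 p hp, hF20 p hp]; simp), integral_div,
    integral_add (hIntg _ hF1c) ((hIntg _ hF2c).const_mul _), integral_const_mul]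
  -- the angular part vanishes by periodicity
  have hA : ∫ p in Ioc (0:ℝ) R ×ˢ Ioo (-Real.pi) Real.pi, F2 p = 0 := by
    rw [Measure.volume_eq_prod, setIntegral_prod _ (hIntg _ hF2c)]
    refine setIntegral_eq_zero_of_forall_eq_zero fun r hr => ?_
    rw [← integral_Ioc_eq_integral_Ioo, ← intervalIntegral.integral_of_le (by linarith [Real.pi_pos])]
    have hd : ∀ θ : ℝ, HasDerivAt (fun θ : ℝ => g (r * E θ) * (r:ℂ)⁻¹) (F2 (r, θ)) θ := by
      intro θ
      have h := (hgd (r * E θ)).hasFDerivAt.comp_hasDerivAt θ ((hEd θ).const_mul (r:ℂ))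
      have h' := h.mul_const ((r:ℂ)⁻¹)
      refine h'.congr_deriv ?_
      have hr0 : (r:ℂ) ≠ 0 := by exact_mod_cast hr.1.ne'
      have : (r:ℂ) * (Complex.I * E θ) = r • (Complex.I * E θ) := by simp
      rw [this, map_smul]
      simp only [hF2, Complex.real_smul]
      field_simp
    rw [intervalIntegral.integral_eq_sub_of_hasDerivAt (fun θ _ => hd θ)
      ((hF2c.comp (by fun_prop : Continuous fun θ : ℝ => (r, θ))).intervalIntegrable _ _)]
    have : E Real.pi = E (-Real.pi) := by
      simp [hE, Complex.exp_neg, Complex.exp_pi_mul_I]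
    simp only [this]
    ring
  have hB : ∫ p in Ioc (0:ℝ) R ×ˢ Ioo (-Real.pi) Real.pi, F1 p = -(2 * Real.pi) * g 0 := by
    rw [Measure.volume_eq_prod, ← setIntegral_prod_swap]
    rw [setIntegral_prod (fun z : ℝ × ℝ => F1 z.swap) (hIntg _ hF1c).swap]
    have : ∀ θ ∈ Ioo (-Real.pi) Real.pi, ∫ r in Ioc 0 R, F1 (Prod.swap (θ, r)) = - g 0 := by
      intro θ _
      rw [← intervalIntegral.integral_of_le hR0.le]
      have hd : ∀ r : ℝ, HasDerivAt (fun r : ℝ => g (r * E θ)) (F1 (r, θ)) r := by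
        intro r
        have h := (hgd (r * E θ)).hasFDerivAt.comp_hasDerivAt r
          ((Complex.ofRealCLM.hasDerivAt (x := r)).mul_const (E θ))
        exact h.congr_deriv (by simp [hF1])
      simp only [Prod.swap_prod_mk]
      rw [intervalIntegral.integral_eq_sub_of_hasDerivAt (fun θ _ => hd θ)
        ((hF1c.comp (by fun_prop : Continuous fun r : ℝ => (r, θ))).intervalIntegrable _ _)]
      have h0 := hg0 (R * E θ) (by rw [norm_mul, hEn]; simp [abs_of_pos hR0])
      rw [h0]; simp
    rw [setIntegral_congr_fun measurableSet_Ioo this]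
    rw [setIntegral_const]
    have hpi := Real.pi_pos
    simp [Measure.real]
    rw [ENNReal.toReal_ofReal (by positivity)]
    left; push_cast; ring
  rw [hA, hB]; ring

/-- Cauchy–Pompeiu formula for compactly supported functions. -/
lemma pompeiu {f : ℂ → ℂ} (hf : ContDiff ℝ 1 f) (hs : HasCompactSupport f) (z : ℂ) :
    f z = Cz (dbar f) z := by
  have hg : ContDiff ℝ 1 (fun w => f (z + w)) := hf.comp (contDiff_const.add contDiff_id)
  have hgs : HasCompactSupport (fun w => f (z + w)) :=
    hs.comp_homeomorph (Homeomorph.addLeft z)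
  have h := pompeiu_zero hg hgs
  have e : ∀ w, dbar (fun w => f (z + w)) w = dbar f (z + w) := by
    intro w
    unfold dbar
    rw [fderiv_comp_add_left]
  unfold Cz
  rw [← integral_add_left_eq_self _ z]
  have h2 : ∫ w, dbar f (z + w) * (z - (z + w))⁻¹ = - ∫ w, dbar (fun w => f (z + w)) w * w⁻¹ := by
    rw [← integral_neg]
    refine integral_congr_ae (Eventually.of_forall fun w => ?_)
    simp only [e]
    have : z - (z + w) = - w := by ring
    rw [this, inv_neg]; ring
  rw [h2, h]
  have : (Real.pi : ℂ) ≠ 0 := by exact_mod_cast Real.pi_ne_zero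
  simp [this]

lemma dbar_dens {f : ℂ → ℂ} (hf : ContDiff ℝ 1 f) (hs : HasCompactSupport f) : Dens (dbar f) := by
  refine Dens.of_cont (dbar_cont hf) ?_
  refine HasCompactSupport.intro hs.isCompact fun x hx => ?_
  have : fderiv ℝ f x = 0 :=
    image_eq_zero_of_notMem_tsupport fun h => hx (tsupport_fderiv_subset ℝ h)
  simp [dbar, this]

/-! ### Bump functions, mean values and gradient estimates -/


lemma maxpow_hasDerivAt (k : ℕ) (hk : 1 ≤ k) (x : ℝ) :
    HasDerivAt (fun x : ℝ => (max 0 x) ^ (k + 1)) (((k : ℝ) + 1) * (max 0 x) ^ k) x := by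
  rcases lt_trichotomy x 0 with h | h | h
  · rw [max_eq_left h.le, zero_pow (by omega), mul_zero]
    refine (hasDerivAt_const x (0:ℝ)).congr_of_eventuallyEq ?_
    filter_upwards [gt_mem_nhds h] with y hy
    rw [max_eq_left hy.le, zero_pow (by omega)]
  · subst h
    rw [max_self, zero_pow (by omega), mul_zero, hasDerivAt_iff_isLittleO]
    simp only [max_self, smul_zero, sub_zero, zero_pow (by omega : k + 1 ≠ 0)]
    have h1 : (fun x : ℝ => (max 0 x) ^ (k + 1)) =O[𝓝 0] fun x => x ^ (k + 1) := by
      refine Asymptotics.IsBigO.of_bound 1 (Eventually.of_forall fun x => ?_)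
      rw [norm_pow, norm_pow, one_mul]
      gcongr
      rw [Real.norm_of_nonneg (le_max_left _ _)]
      exact max_le (norm_nonneg _) (le_abs_self _)
    have h2 : (fun x : ℝ => x ^ (k + 1)) =o[𝓝 0] fun x => x ^ 1 :=
      Asymptotics.isLittleO_pow_pow (by omega)
    simpa using h1.trans_isLittleO h2
  · rw [max_eq_right h.le]
    have := (hasDerivAt_pow (k + 1) x)
    have h2 : HasDerivAt (fun x : ℝ => (max 0 x) ^ (k + 1)) (((k + 1 : ℕ) : ℝ) * x ^ (k + 1 - 1)) x := by
      refine this.congr_of_eventuallyEq ?_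
      filter_upwards [lt_mem_nhds h] with y hy
      rw [max_eq_right hy.le]
    simpa using h2

lemma bet_hasFDerivAt (k : ℕ) (hk : 1 ≤ k) (z : ℂ) :
    HasFDerivAt (bet (k + 1)) ((-(2 * ((k : ℝ) + 1) * bet k z)) • innerSL ℝ z) z := by
  have h1 : HasFDerivAt (fun z : ℂ => 1 - ‖z‖ ^ 2) (-(2 • innerSL ℝ z)) z :=
    (hasStrictFDerivAt_norm_sq z).hasFDerivAt.const_sub 1
  have h2 := (maxpow_hasDerivAt k hk (1 - ‖z‖ ^ 2)).comp_hasFDerivAt z h1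
  refine h2.congr_fderiv ?_
  ext v
  simp [bet]; ring

lemma fderiv_bet (k : ℕ) (hk : 1 ≤ k) (z v : ℂ) :
    fderiv ℝ (bet (k + 1)) z v = -(2 * ((k : ℝ) + 1) * bet k z) * (v.re * z.re + v.im * z.im) := by
  rw [(bet_hasFDerivAt k hk z).fderiv]
  simp [Complex.inner]

lemma bet_contDiff (k : ℕ) (hk : 1 ≤ k) : ContDiff ℝ 1 (bet (k + 1)) := by
  rw [contDiff_one_iff_fderiv]
  refine ⟨fun z => (bet_hasFDerivAt k hk z).differentiableAt, ?_⟩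
  have : fderiv ℝ (bet (k + 1)) = fun z => (-(2 * ((k : ℝ) + 1) * bet k z)) • innerSL ℝ z := by
    ext1 z; exact (bet_hasFDerivAt k hk z).fderiv
  rw [this]
  have := bet_cont k
  fun_prop

lemma dU_bet (k : ℕ) (hk : 1 ≤ k) (z : ℂ) :
    dU (bet (k + 1)) z = -(((k:ℝ) + 1) * bet k z : ℝ) * (starRingEnd ℂ) z := by
  unfold dU
  rw [fderiv_bet k hk, fderiv_bet k hk]
  apply Complex.ext <;> simp <;> ring

/-- Integration by parts for the derivative in the direction `v`. -/
lemma ibp {f g : ℂ → ℝ} (hf : ContDiff ℝ 1 f) (hg : ContDiff ℝ 1 g) (hs : HasCompactSupport g)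
    (v : ℂ) : ∫ x, f x * fderiv ℝ g x v = - ∫ x, fderiv ℝ f x v * g x := by
  have hf' : Continuous (fun x => fderiv ℝ f x v) :=
    (hf.continuous_fderiv (by simp)).clm_apply continuous_const
  have hg' : Continuous (fun x => fderiv ℝ g x v) :=
    (hg.continuous_fderiv (by simp)).clm_apply continuous_const
  have hgs : HasCompactSupport (fun x => fderiv ℝ g x v) := hs.fderiv_apply ℝ v
  exact integral_mul_fderiv_eq_neg_fderiv_mul_of_integrable
    ((hf'.mul hg.continuous).integrable_of_hasCompactSupport hs.mul_left)
    ((hf.continuous.mul hg').integrable_of_hasCompactSupport hgs.mul_left)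
    ((hf.continuous.mul hg.continuous).integrable_of_hasCompactSupport hs.mul_left)
    (fun x _ => hf.differentiable (by simp) x) (fun x _ => hg.differentiable (by simp) x)

/-- A weighted average of `u` over the disc of centre `z` and radius `r`. -/
noncomputable def mean (u : ℂ → ℝ) (z : ℂ) (r : ℝ) : ℝ :=
  3 / Real.pi * ∫ ζ, u (z + r • ζ) * bet 2 ζ

lemma bet_mul_integrable {k : ℕ} (hk : k ≠ 0) {f : ℂ → ℝ} (hf : Continuous f) :
    Integrable (fun ζ => f ζ * bet k ζ) :=
  (hf.mul (bet_cont k)).integrable_of_hasCompactSupport (bet_support hk).mul_left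

lemma mean_zero (u : ℂ → ℝ) (z : ℂ) : mean u z 0 = u z := by
  unfold mean
  simp only [zero_smul, add_zero]
  rw [integral_const_mul, bet2_integral]
  field_simp

lemma mean_hasDerivAt {u : ℂ → ℝ} (hu : ContDiff ℝ 1 u) (z : ℂ) (r : ℝ) :
    HasDerivAt (mean u z) (3 / Real.pi * ∫ ζ, fderiv ℝ u (z + r • ζ) ζ * bet 2 ζ) r := by
  unfold mean
  refine HasDerivAt.const_mul _ ?_
  have hdc := hu.continuous_fderiv (by simp)
  obtain ⟨B, hB⟩ := (isCompact_closedBall z (|r| + 1)).exists_bound_of_continuousOn hdc.continuousOn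
  have hc : ∀ t : ℝ, Continuous (fun ζ : ℂ => u (z + t • ζ)) := fun t =>
    hu.continuous.comp (by fun_prop)
  have hc' : ∀ t : ℝ, Continuous (fun ζ : ℂ => fderiv ℝ u (z + t • ζ) ζ) := fun t =>
    (hdc.comp (by fun_prop)).clm_apply continuous_id
  refine (hasDerivAt_integral_of_dominated_loc_of_deriv_le
    (F := fun t ζ => u (z + t • ζ) * bet 2 ζ)
    (F' := fun t ζ => fderiv ℝ u (z + t • ζ) ζ * bet 2 ζ)
    (bound := fun ζ => B * bet 2 ζ) (ball_mem_nhds r one_pos)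
    (Eventually.of_forall fun t => (bet_mul_integrable two_ne_zero (hc t)).aestronglyMeasurable)
    (bet_mul_integrable two_ne_zero (hc r)) (bet_mul_integrable two_ne_zero (hc' r)).aestronglyMeasurable
    (Eventually.of_forall fun ζ t ht => ?_) ((bet_integrable two_ne_zero).const_mul B)
    (Eventually.of_forall fun ζ t _ => ?_)).2
  · rcases le_or_gt 1 ‖ζ‖ with h | h
    · rw [bet_zero two_ne_zero h]; simp
    · rw [norm_mul, Real.norm_of_nonneg (bet_nonneg 2 ζ)]
      refine mul_le_mul_of_nonneg_right ?_ (bet_nonneg 2 ζ)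
      have hmem : z + t • ζ ∈ closedBall z (|r| + 1) := by
        rw [mem_closedBall, dist_self_add_left, norm_smul, Real.norm_eq_abs]
        have h1 : |t| ≤ |r| + 1 := by
          have : |t - r| < 1 := ht
          have := abs_sub_abs_le_abs_sub t r
          linarith
        have := abs_nonneg t
        nlinarith [norm_nonneg ζ]
      have h1 := (fderiv ℝ u (z + t • ζ)).le_opNorm ζ
      have h2 := hB _ hmem
      nlinarith [norm_nonneg ζ, norm_nonneg (fderiv ℝ u (z + t • ζ))]
  · have h1 : HasDerivAt (fun t : ℝ => z + t • ζ) ζ t := by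
      simpa using ((hasDerivAt_id t).smul_const ζ).const_add z
    exact (((hu.differentiable (by simp) _).hasFDerivAt.comp_hasDerivAt t h1)).mul_const _

/-- Integration by parts turns the radial derivative of the average into a weighted average of the
Laplacian, because `bet 2` times the position vector is a multiple of the gradient of `bet 3`. -/
lemma mean_deriv_eq {u : ℂ → ℝ} (hu : ContDiff ℝ 2 u) (z : ℂ) (r : ℝ) :
    3 / Real.pi * ∫ ζ, fderiv ℝ u (z + r • ζ) ζ * bet 2 ζ =
      r / (2 * Real.pi) * ∫ ζ, lap u (z + r • ζ) * bet 3 ζ := by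
  have hcd : ∀ v : ℂ, ContDiff ℝ 1 (fun ζ : ℂ => fderiv ℝ u (z + r • ζ) v) := fun v =>
    (contDiff_fderiv_apply hu v).comp (contDiff_const.add (contDiff_id.const_smul r))
  have hb := bet_contDiff 2 one_le_two
  have hi := fun v => ibp (hcd v) hb (bet_support three_ne_zero) v
  have hd : ∀ v ζ, fderiv ℝ (fun ζ : ℂ => fderiv ℝ u (z + r • ζ) v) ζ v =
      r * fderiv ℝ (fun w => fderiv ℝ u w v) (z + r • ζ) v := by
    intro v ζ
    have h1 : HasFDerivAt (fun ζ : ℂ => z + r • ζ) (r • ContinuousLinearMap.id ℝ ℂ) ζ :=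
      ((hasFDerivAt_id ζ).const_smul r).const_add z
    have h2 := ((contDiff_fderiv_apply hu v).differentiable (by simp) (z + r • ζ)).hasFDerivAt.comp ζ h1
    have h3 := h2.fderiv
    simp only [Function.comp_def] at h3
    rw [h3]; simp
  have hc' : ∀ v, Continuous (fun ζ : ℂ => fderiv ℝ (fun w => fderiv ℝ u w v) (z + r • ζ) v) := fun v =>
    (((contDiff_fderiv_apply hu v).continuous_fderiv (by simp)).comp (by fun_prop)).clm_apply continuous_const
  have e1 : ∀ ζ, fderiv ℝ u (z + r • ζ) ζ * bet 2 ζ =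
      -(1/6) * (fderiv ℝ u (z + r • ζ) 1 * fderiv ℝ (bet 3) ζ 1) +
      -(1/6) * (fderiv ℝ u (z + r • ζ) Complex.I * fderiv ℝ (bet 3) ζ Complex.I) := by
    intro ζ
    rw [fderiv_bet 2 one_le_two, fderiv_bet 2 one_le_two]
    have e : ζ = ζ.re • (1:ℂ) + ζ.im • Complex.I := by simp
    have h : fderiv ℝ u (z + r • ζ) ζ = ζ.re * fderiv ℝ u (z + r • ζ) 1 +
        ζ.im * fderiv ℝ u (z + r • ζ) Complex.I := by
      generalize fderiv ℝ u (z + r • ζ) = L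
      conv_lhs => rw [e]
      rw [map_add, map_smul, map_smul]; simp
    rw [h]
    simp; ring
  have hI : ∀ v, Integrable (fun ζ => fderiv ℝ u (z + r • ζ) v * fderiv ℝ (bet 3) ζ v) := fun v =>
    ((hcd v).continuous.mul ((hb.continuous_fderiv (by simp)).clm_apply continuous_const)).integrable_of_hasCompactSupport
      ((bet_support three_ne_zero).fderiv_apply ℝ v).mul_left
  simp only [e1]
  rw [integral_add ((hI 1).const_mul _) ((hI Complex.I).const_mul _), integral_const_mul,
    integral_const_mul]
  rw [hi, hi]
  simp only [hd, lap, add_mul, mul_assoc]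
  rw [integral_add (bet_mul_integrable three_ne_zero (hc' 1))
    (bet_mul_integrable three_ne_zero (hc' Complex.I)), integral_const_mul, integral_const_mul]
  ring

lemma bet_anti (z : ℂ) : bet 3 z ≤ bet 2 z := by
  unfold bet
  exact pow_le_pow_of_le_one (le_max_left _ _) (by simp) (by norm_num)

lemma bet3_integral_le : ∫ ζ, bet 3 ζ ≤ Real.pi / 3 := by
  rw [← bet2_integral]
  exact integral_mono (bet_integrable three_ne_zero) (bet_integrable two_ne_zero) bet_anti

/-- Approximate mean value property. -/
lemma mean_sub_le {u : ℂ → ℝ} (hu : ContDiff ℝ 2 u) (z : ℂ) {r S : ℝ} (hr : 0 ≤ r)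
    (hS : ∀ w ∈ closedBall z r, |lap u w| ≤ S) : |mean u z r - u z| ≤ r ^ 2 * S := by
  have hS0 : 0 ≤ S := (abs_nonneg _).trans (hS z (mem_closedBall_self hr))
  have hd : ∀ t ∈ Icc 0 r, HasDerivWithinAt (mean u z)
      (t / (2 * Real.pi) * ∫ ζ, lap u (z + t • ζ) * bet 3 ζ) (Icc 0 r) t := by
    intro t _
    rw [← mean_deriv_eq hu]
    exact (mean_hasDerivAt (hu.of_le (by norm_num)) z t).hasDerivWithinAt
  have hb : ∀ t ∈ Icc 0 r, ‖t / (2 * Real.pi) * ∫ ζ, lap u (z + t • ζ) * bet 3 ζ‖ ≤ r * S := by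
    intro t ht
    have h1 : ‖∫ ζ, lap u (z + t • ζ) * bet 3 ζ‖ ≤ S * (Real.pi / 3) := by
      refine (norm_integral_le_of_norm_le ((bet_integrable three_ne_zero).const_mul S)
        (Eventually.of_forall fun ζ => ?_)).trans ?_
      · rcases le_or_gt 1 ‖ζ‖ with h | h
        · rw [bet_zero three_ne_zero h]; simp
        · rw [norm_mul, Real.norm_of_nonneg (bet_nonneg 3 ζ)]
          refine mul_le_mul_of_nonneg_right ?_ (bet_nonneg 3 ζ)
          apply hS
          rw [mem_closedBall, dist_self_add_left, norm_smul, Real.norm_of_nonneg ht.1]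
          nlinarith [ht.1, ht.2, norm_nonneg ζ]
      · rw [integral_const_mul]; gcongr; exact bet3_integral_le
    have hpi := Real.pi_pos
    have ht0 := ht.1
    rw [norm_mul, Real.norm_of_nonneg (by positivity)]
    calc _ ≤ r / (2 * Real.pi) * (S * (Real.pi / 3)) := by
          gcongr; exact ht.2
      _ = r * S / 6 := by field_simp; ring
      _ ≤ r * S := by nlinarith [mul_nonneg hr hS0]
  have := Convex.norm_image_sub_le_of_norm_hasDerivWithin_le hd hb (convex_Icc 0 r)
    (left_mem_Icc.2 hr) (right_mem_Icc.2 hr)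
  rw [mean_zero, sub_zero, Real.norm_eq_abs, Real.norm_eq_abs, abs_of_nonneg hr] at this
  linarith

lemma mean_change (u : ℂ → ℝ) (z : ℂ) {r : ℝ} (hr : 0 < r) :
    mean u z r = 3 / Real.pi * (r ^ 2)⁻¹ * ∫ w, u w * bet 2 (r⁻¹ • (w - z)) := by
  unfold mean
  have h := Measure.integral_comp_smul (volume : Measure ℂ)
    (fun w => u (z + w) * bet 2 (r⁻¹ • w)) r
  have h2 := integral_add_left_eq_self (μ := (volume : Measure ℂ))
    (fun w => u w * bet 2 (r⁻¹ • (w - z))) z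
  simp only [add_sub_cancel_left] at h2
  rw [h2, Complex.finrank_real_complex, abs_of_nonneg (by positivity)] at h
  simp only [smul_smul, inv_mul_cancel₀ hr.ne', one_smul, smul_eq_mul] at h
  rw [h]; ring

/-- Comparison of averages of a nonnegative function over nested discs. -/
lemma mean_compare {h : ℂ → ℝ} (hc : Continuous h) {z z' : ℂ} {r ρ r' : ℝ} (hr : 0 < r)
    (hρ : ‖z - z'‖ + r ≤ ρ) (hρ' : ρ < r') (h0 : ∀ w ∈ ball z' r', 0 ≤ h w) :
    (r / r') ^ 2 * (1 - (ρ / r') ^ 2) ^ 2 * mean h z r ≤ mean h z' r' := by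
  have hρ0 : 0 < ρ := by have := norm_nonneg (z - z'); linarith
  have hr' : 0 < r' := by linarith
  have hx : ρ / r' < 1 := by rw [div_lt_one hr']; exact hρ'
  have hx0 : 0 < ρ / r' := by positivity
  have hI : ∀ (c : ℂ) (s : ℝ), 0 < s → Integrable (fun w => h w * bet 2 (s⁻¹ • (w - c))) := by
    intro c s hs
    have hcc : Continuous (fun w => h w * bet 2 (s⁻¹ • (w - c))) :=
      hc.mul ((bet_cont 2).comp (by fun_prop))
    refine hcc.integrable_of_hasCompactSupport
      (HasCompactSupport.intro (isCompact_closedBall c s) fun w hw => ?_)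
    rw [bet_zero two_ne_zero, mul_zero]
    rw [mem_closedBall, dist_eq_norm, not_le] at hw
    rw [norm_smul, norm_inv, Real.norm_of_nonneg hs.le, inv_mul_eq_div, le_div_iff₀ hs]
    linarith
  rw [mean_change h z hr, mean_change h z' hr']
  have key : ∫ w, (1 - (ρ / r') ^ 2) ^ 2 * (h w * bet 2 (r⁻¹ • (w - z))) ≤
      ∫ w, h w * bet 2 (r'⁻¹ • (w - z')) := by
    refine integral_mono ((hI z r hr).const_mul _) (hI z' r' hr') fun w => ?_
    simp only
    rcases le_or_gt r ‖w - z‖ with hw | hw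
    · rw [bet_zero two_ne_zero (z := r⁻¹ • (w - z)), mul_zero, mul_zero]
      · rcases le_or_gt r' ‖w - z'‖ with hw' | hw'
        · rw [bet_zero two_ne_zero, mul_zero]
          rw [norm_smul, norm_inv, Real.norm_of_nonneg hr'.le, inv_mul_eq_div, le_div_iff₀ hr']
          linarith
        · exact mul_nonneg (h0 w (by simpa [dist_eq_norm] using hw')) (bet_nonneg _ _)
      · rw [norm_smul, norm_inv, Real.norm_of_nonneg hr.le, inv_mul_eq_div, le_div_iff₀ hr]
        linarith
    · have hw1 : ‖w - z'‖ ≤ ρ := by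
        have := norm_sub_le_norm_sub_add_norm_sub w z z'
        linarith
      have hw2 : w ∈ ball z' r' := by rw [mem_ball, dist_eq_norm]; linarith
      have hb : (1 - (ρ / r') ^ 2) ^ 2 ≤ bet 2 (r'⁻¹ • (w - z')) := by
        unfold bet
        have h3 : ‖r'⁻¹ • (w - z')‖ ≤ ρ / r' := by
          rw [norm_smul, norm_inv, Real.norm_of_nonneg hr'.le, inv_mul_eq_div]
          gcongr
        have h4 : 0 ≤ 1 - (ρ / r') ^ 2 := by nlinarith
        refine pow_le_pow_left₀ h4 (le_max_of_le_right ?_) 2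
        have := norm_nonneg (r'⁻¹ • (w - z'))
        nlinarith
      have h5 := h0 w hw2
      calc _ ≤ (1 - (ρ / r') ^ 2) ^ 2 * (h w * 1) := by
            gcongr; exact bet_le_one _ _
        _ = h w * (1 - (ρ / r') ^ 2) ^ 2 := by ring
        _ ≤ _ := by gcongr
  rw [integral_const_mul] at key
  have hpi := Real.pi_pos
  calc _ = 3 / Real.pi * (r' ^ 2)⁻¹ * ((1 - (ρ / r') ^ 2) ^ 2 *
        ∫ w, h w * bet 2 (r⁻¹ • (w - z))) := by field_simp
    _ ≤ _ := by gcongr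

/-- Interior gradient estimate. -/
lemma grad_est {u : ℂ → ℝ} (hu : ContDiff ℝ 2 u) {z : ℂ} {S : ℝ}
    (h1 : ∀ w ∈ ball z 1, |u w| ≤ S) (h2 : ∀ w ∈ ball z 1, |lap u w| ≤ S) :
    ‖dU u z‖ ≤ 20 * S := by
  have hS0 : 0 ≤ S := (abs_nonneg _).trans (h1 z (mem_ball_self one_pos))
  set b : ℂ → ℝ := fun w => bet 3 (w - z) with hb
  have hbc : ContDiff ℝ 1 b := (bet_contDiff 2 one_le_two).comp (contDiff_id.sub contDiff_const)
  have hbs : HasCompactSupport b := by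
    refine HasCompactSupport.intro (isCompact_closedBall z 1) fun w hw => ?_
    rw [mem_closedBall, dist_eq_norm, not_le] at hw
    exact bet_zero three_ne_zero hw.le
  have hbd : ∀ w, (starRingEnd ℂ) (dU b w) = (-(3 * bet 2 (w - z)) : ℝ) * (w - z) := by
    intro w
    have e : dU b w = dU (bet 3) (w - z) := by
      simp only [dU, hb]
      rw [fderiv_comp_sub]
    rw [e, dU_bet 2 one_le_two]
    norm_num [Complex.conj_ofNat]
    try ring_nf
    try simp
  set f : ℂ → ℂ := fun w => (b w : ℂ) * (2 * dU u w) with hf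
  have hbC : ContDiff ℝ 1 (fun w => (b w : ℂ)) := Complex.ofRealCLM.contDiff.comp hbc
  have hdu := dU_contDiff hu
  have hdu2 : ContDiff ℝ 1 (fun w => 2 * dU u w) := contDiff_const.mul hdu
  have hfc : ContDiff ℝ 1 f := hbC.mul hdu2
  have hfs : HasCompactSupport f :=
    (hbs.comp_left (g := fun x : ℝ => (x : ℂ)) (by simp)).mul_right
  set g1 : ℂ → ℂ := fun w => ((b w * lap u w / 2 : ℝ) : ℂ) with hg1
  set g2 : ℂ → ℂ := fun w => (-(6 * bet 2 (w - z)) : ℝ) * (w - z) * dU u w with hg2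
  have hdb : dbar f = fun w => g1 w + g2 w := by
    ext w
    simp only [hf]
    rw [dbar_mul (hbC.differentiable (by simp) w) (hdu2.differentiable (by simp) w),
      dbar_ofReal (hbc.differentiable (by simp) w), hbd,
      dbar_mul (differentiableAt_const _) (hdu.differentiable (by simp) w), dbar_dU hu]
    have : dbar (fun _ => (2:ℂ)) w = 0 := dbar_holo (differentiableAt_const _)
    rw [this]
    simp only [hg1, hg2]
    push_cast; ring
  have hbs2 : HasCompactSupport (fun w => bet 2 (w - z)) := by
    refine HasCompactSupport.intro (isCompact_closedBall z 1) fun w hw => ?_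
    rw [mem_closedBall, dist_eq_norm, not_le] at hw
    exact bet_zero two_ne_zero hw.le
  have hc2 : Continuous (fun w => bet 2 (w - z)) := (bet_cont 2).comp (by fun_prop)
  have hd1 : Dens g1 := by
    refine Dens.of_cont ?_ ?_
    · have := lap_cont hu
      have := hbc.continuous
      fun_prop
    · refine HasCompactSupport.intro hbs.isCompact fun w hw => ?_
      simp [hg1, image_eq_zero_of_notMem_tsupport hw]
  have hd2 : Dens g2 := by
    refine Dens.of_cont ?_ ?_
    · have := hdu.continuous
      fun_prop
    · refine HasCompactSupport.intro hbs2.isCompact fun w hw => ?_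
      have := image_eq_zero_of_notMem_tsupport hw
      have h0 : bet 2 (w - z) = 0 := this
      simp [hg2, h0]
  have hp := pompeiu hfc hfs z
  rw [hdb, Cz_add hd1 hd2] at hp
  have hb0 : b z = 1 := by simp [hb, bet]
  have e1 : ‖Cz g1 z‖ ≤ 6 * 1 * (S / 2) := by
    have hout : ∀ ζ, ζ ∉ ball z 1 → g1 ζ = 0 := by
      intro ζ hζ
      have : b ζ = 0 := bet_zero three_ne_zero (by simpa [dist_eq_norm] using hζ)
      simp [hg1, this]
    refine Cz_bound_ball hd1 one_pos (fun ζ => ?_) hout z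
    by_cases hζ : ζ ∈ ball z 1
    · simp only [hg1, Complex.norm_real, Real.norm_eq_abs]
      rw [abs_div, abs_mul, abs_two]
      have := h2 ζ hζ
      have hh1 : |b ζ| ≤ 1 := by
        rw [abs_of_nonneg (bet_nonneg _ _)]; exact bet_le_one _ _
      gcongr
      nlinarith [abs_nonneg (lap u ζ), abs_nonneg (b ζ)]
    · rw [hout ζ hζ]; simp; linarith
  have hv : ∀ v : ℂ, ‖v‖ ≤ 1 → |∫ w, fderiv ℝ u w v * bet 2 (w - z)| ≤ 4 * S * Real.pi := by
    intro v hv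
    have hb2 : ContDiff ℝ 1 (fun w => bet 2 (w - z)) :=
      (bet_contDiff 1 le_rfl).comp (contDiff_id.sub contDiff_const)
    have := ibp (hu.of_le (by norm_num)) hb2 hbs2 v
    have e : |∫ w, fderiv ℝ u w v * bet 2 (w - z)| =
        ‖∫ w, u w * fderiv ℝ (fun w => bet 2 (w - z)) w v‖ := by
      rw [this]; simp
    rw [e]
    have hout : ∀ w, w ∉ ball z 1 → u w * fderiv ℝ (fun w => bet 2 (w - z)) w v = 0 := by
      intro w hw
      rw [fderiv_comp_sub (f := bet 2), fderiv_bet 1 le_rfl, bet_zero one_ne_zero]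
      · simp
      · simpa [dist_eq_norm] using hw
    rw [← setIntegral_eq_integral_of_forall_compl_eq_zero hout]
    have hvol : volume.real (ball z 1) = Real.pi := by
      simp [Measure.real, Complex.volume_ball]
    rw [← hvol]
    refine norm_setIntegral_le_of_norm_le_const measure_ball_lt_top fun w hw => ?_
    rw [fderiv_comp_sub (f := bet 2), norm_mul, Real.norm_eq_abs]
    have h3 : ‖fderiv ℝ (bet 2) (w - z) v‖ ≤ 4 := by
      rw [(bet_hasFDerivAt 1 le_rfl (w - z)).fderiv]
      simp only [smul_apply, innerSL_apply_apply, norm_smul]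
      have hi := norm_inner_le_norm (𝕜 := ℝ) (w - z) v
      have hw' : ‖w - z‖ < 1 := by simpa [dist_eq_norm] using hw
      have hbb := bet_le_one 1 (w - z)
      have hbb0 := bet_nonneg 1 (w - z)
      have e5 : ‖-(2 * (((1:ℕ):ℝ) + 1) * bet 1 (w - z))‖ ≤ 4 := by
        rw [norm_neg, Real.norm_of_nonneg (by positivity)]; norm_num; linarith
      have e6 : ‖inner ℝ (w - z) v‖ ≤ 1 := by
        nlinarith [norm_nonneg v, norm_nonneg (w - z)]
      calc _ ≤ 4 * 1 := mul_le_mul e5 e6 (norm_nonneg _) (by norm_num)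
        _ = 4 := by norm_num
    have h4 := h1 w hw
    calc _ ≤ S * 4 := mul_le_mul h4 h3 (norm_nonneg _) hS0
      _ = _ := by ring
  have hIv : ∀ v : ℂ, Integrable (fun w => fderiv ℝ u w v * bet 2 (w - z)) := fun v =>
    ((contDiff_fderiv_apply hu v).continuous.mul hc2).integrable_of_hasCompactSupport hbs2.mul_left
  have e2 : ‖Cz g2 z‖ ≤ 24 * S := by
    have hz : ∀ᵐ a : ℂ, a ≠ z := Measure.ae_ne volume z
    have e : Cz g2 z = 3 * (Real.pi : ℂ)⁻¹ *
        (((∫ w, fderiv ℝ u w 1 * bet 2 (w - z) : ℝ) : ℂ) -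
          Complex.I * ((∫ w, fderiv ℝ u w Complex.I * bet 2 (w - z) : ℝ) : ℂ)) := by
      have hR : (((∫ w, fderiv ℝ u w 1 * bet 2 (w - z) : ℝ) : ℂ) -
          Complex.I * ((∫ w, fderiv ℝ u w Complex.I * bet 2 (w - z) : ℝ) : ℂ)) =
          ∫ w, (((fderiv ℝ u w 1 * bet 2 (w - z) : ℝ) : ℂ) -
            Complex.I * ((fderiv ℝ u w Complex.I * bet 2 (w - z) : ℝ) : ℂ)) := by
        have i1 : Integrable (fun w => ((fderiv ℝ u w 1 * bet 2 (w - z) : ℝ) : ℂ)) :=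
          (hIv 1).ofReal
        have i2 : Integrable (fun w => Complex.I *
            ((fderiv ℝ u w Complex.I * bet 2 (w - z) : ℝ) : ℂ)) :=
          ((hIv Complex.I).ofReal (𝕜 := ℂ)).const_mul Complex.I
        rw [integral_sub i1 i2, integral_const_mul, integral_complex_ofReal,
          integral_complex_ofReal]
      rw [hR]
      unfold Cz
      rw [← integral_const_mul, ← integral_const_mul]
      refine integral_congr_ae ?_
      filter_upwards [hz] with w hw
      have : z - w ≠ 0 := sub_ne_zero.2 hw.symm
      simp only [hg2, dU]
      push_cast
      field_simp
      ring
    rw [e, norm_mul, norm_mul, norm_inv, Complex.norm_real, Real.norm_of_nonneg Real.pi_pos.le]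
    have h3 := norm_sub_le (((∫ w, fderiv ℝ u w 1 * bet 2 (w - z) : ℝ) : ℂ))
      (Complex.I * ((∫ w, fderiv ℝ u w Complex.I * bet 2 (w - z) : ℝ) : ℂ))
    rw [norm_mul, Complex.norm_I, one_mul, Complex.norm_real, Complex.norm_real,
      Real.norm_eq_abs, Real.norm_eq_abs] at h3
    have h4 := hv 1 (by simp)
    have h5 := hv Complex.I (by simp)
    have hpi := Real.pi_pos
    calc _ ≤ ‖(3:ℂ)‖ * Real.pi⁻¹ * (8 * S * Real.pi) := by gcongr; linarith
      _ = 24 * S := by simp; field_simp; ring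
  have e3 : f z = 2 * dU u z := by simp [hf, hb0]
  rw [e3] at hp
  have : ‖2 * dU u z‖ ≤ 6 * 1 * (S / 2) + 24 * S := by
    rw [hp]; exact (norm_add_le _ _).trans (add_le_add e1 e2)
  rw [norm_mul, Complex.norm_ofNat] at this
  linarith

/-! ### Patches near zeros -/


/-- Squared length of the gradient. -/
noncomputable def gsq (u : ℂ → ℝ) (z : ℂ) : ℝ :=
  (fderiv ℝ u z 1) ^ 2 + (fderiv ℝ u z Complex.I) ^ 2

/-- Chain rule for the Laplacian of `s ∘ u`. -/
lemma lap_comp {s s1 s2 : ℝ → ℝ} (h1 : ∀ t, HasDerivAt s (s1 t) t)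
    (h2 : ∀ t, HasDerivAt s1 (s2 t) t) {u : ℂ → ℝ} (hu : ContDiff ℝ 2 u) (z : ℂ) :
    lap (fun w => s (u w)) z = s1 (u z) * lap u z + s2 (u z) * gsq u z := by
  have e : ∀ v w, fderiv ℝ (fun w => s (u w)) w v = s1 (u w) * fderiv ℝ u w v := by
    intro v w
    have := (h1 (u w)).comp_hasFDerivAt w (hu.differentiable (by simp) w).hasFDerivAt
    have h := this.fderiv
    simp only [Function.comp_def] at h
    rw [h]; simp
  have e2 : ∀ v, fderiv ℝ (fun w => fderiv ℝ (fun w => s (u w)) w v) z v =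
      s1 (u z) * fderiv ℝ (fun w => fderiv ℝ u w v) z v + s2 (u z) * (fderiv ℝ u z v) ^ 2 := by
    intro v
    simp only [e]
    have a := (h2 (u z)).comp_hasFDerivAt z (hu.differentiable (by simp) z).hasFDerivAt
    have b := ((contDiff_fderiv_apply hu v).differentiable (by simp) z).hasFDerivAt
    have h := (a.mul b).fderiv
    simp only [Function.comp_def] at h
    have h' : (fun w => s1 (u w) * fderiv ℝ u w v) =
      (fun x => s1 (u x)) * fun z => (fderiv ℝ u z) v := rfl
    rw [h', h]; simp; ring
  unfold lap
  rw [e2, e2]; unfold gsq; ring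

/-- Regularised absolute value. -/
noncomputable def sab (a t : ℝ) : ℝ := Real.sqrt (t ^ 2 + a ^ 2)

lemma sab_pos {a : ℝ} (ha : 0 < a) (t : ℝ) : 0 < sab a t :=
  Real.sqrt_pos.2 (add_pos_of_nonneg_of_pos (sq_nonneg t) (by positivity))

lemma sab_sq {a : ℝ} (ha : 0 < a) (t : ℝ) : sab a t ^ 2 = t ^ 2 + a ^ 2 := by
  unfold sab; exact Real.sq_sqrt (by positivity)

lemma abs_le_sab {a : ℝ} (ha : 0 < a) (t : ℝ) : |t| ≤ sab a t := by
  unfold sab; rw [← Real.sqrt_sq_eq_abs]; exact Real.sqrt_le_sqrt (le_add_of_nonneg_right (sq_nonneg a))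

lemma sab_le {a : ℝ} (ha : 0 < a) (t : ℝ) : sab a t ≤ |t| + a := by
  unfold sab
  rw [Real.sqrt_le_left (by positivity)]
  nlinarith [abs_nonneg t, sq_abs t]

lemma a_le_sab {a : ℝ} (ha : 0 < a) (t : ℝ) : a ≤ sab a t := by
  have := abs_le_sab ha t
  have h := sab_sq ha t
  nlinarith [sab_pos ha t]

lemma sab_deriv {a : ℝ} (ha : 0 < a) (t : ℝ) : HasDerivAt (sab a) (t / sab a t) t := by
  have h := ((hasDerivAt_pow 2 t).add_const (a ^ 2)).sqrt (by positivity)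
  have hs := sab_pos ha t
  refine h.congr_deriv ?_
  change _ / (2 * sab a t) = _
  field_simp
  norm_num

lemma sab_deriv2 {a : ℝ} (ha : 0 < a) (t : ℝ) : HasDerivAt (fun t => t / sab a t) (a ^ 2 / sab a t ^ 3) t := by
  have hs := sab_pos ha t
  have h := (hasDerivAt_id t).div (sab_deriv ha t) hs.ne'
  refine h.congr_deriv ?_
  have := sab_sq ha t
  simp only [id]
  field_simp
  nlinarith

lemma sab_contDiff {a : ℝ} (ha : 0 < a) : ContDiff ℝ 2 (sab a) := by
  unfold sab
  refine ContDiff.sqrt (by fun_prop) fun x => by positivity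

lemma abs_sab1 {a : ℝ} (ha : 0 < a) (t : ℝ) : |t / sab a t| ≤ 1 := by
  rw [abs_div, abs_of_pos (sab_pos ha t)]
  exact div_le_one_of_le₀ (abs_le_sab ha t) (sab_pos ha t).le

lemma sab2_nonneg {a : ℝ} (ha : 0 < a) (t : ℝ) : 0 ≤ a ^ 2 / sab a t ^ 3 := by
  have := sab_pos ha t; positivity

lemma mul_sab2 {a : ℝ} (ha : 0 < a) (t : ℝ) : |t| * (a ^ 2 / sab a t ^ 3) ≤ 1 := by
  have hs := sab_pos ha t
  rw [mul_div_assoc', div_le_one (by positivity)]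
  calc |t| * a ^ 2 ≤ sab a t * sab a t ^ 2 := by
        gcongr
        · exact abs_le_sab ha t
        · exact a_le_sab ha t
    _ = _ := by ring

lemma mul_sab2' {b : ℝ} (hb : 0 < b) (t : ℝ) :
    |t| * ((b ^ 2) ^ 2 / sab (b ^ 2) t ^ 3) ≤ b * ((b ^ 2) ^ 2 / sab (b ^ 2) t ^ 3) + b ^ 2 := by
  have ha : 0 < b ^ 2 := by positivity
  have hs := sab_pos ha t
  rcases le_total |t| b with h | h
  · have := sab2_nonneg ha t
    nlinarith [sq_nonneg b]
  · have h0 : 0 < |t| := hb.trans_le h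
    have h1 : |t| * ((b ^ 2) ^ 2 / sab (b ^ 2) t ^ 3) ≤ b ^ 2 := by
      have h3 := abs_le_sab ha t
      rw [mul_div_assoc', div_le_iff₀ (by positivity)]
      have : b ^ 2 * |t| ≤ sab (b ^ 2) t ^ 3 := by
        calc b ^ 2 * |t| ≤ |t| ^ 2 * |t| := by gcongr
          _ = |t| ^ 3 := by ring
          _ ≤ _ := by gcongr
      nlinarith
    have := sab2_nonneg ha t
    nlinarith

/-- If `U` had no zero near `y`, its averages would be comparable up to constants on discs of
comparable size by positivity, which contradicts the exponential decay to the left of `y`. -/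
lemma patch_zero {U : ℂ → ℝ} (hU : ContDiff ℝ 2 U) {y : ℂ} (h1 : U y = 1)
    (hb : ∀ z ∈ ball y 100, |U z| ≤ Real.exp ((z - y).re + 0.35 * ‖z - y‖))
    (hl : ∀ z ∈ ball y 100, |lap U z| ≤ 1 / 1000000) : ∃ z1 ∈ closedBall y 32, U z1 = 0 := by
  by_contra! hne
  have hpos : ∀ w ∈ closedBall y 32, 0 ≤ U w := by
    intro w hw
    by_contra! hlt
    obtain ⟨v, hv, hv0⟩ := (convex_closedBall y 32).isPreconnected.intermediate_value hw
      (mem_closedBall_self (by norm_num)) hU.continuous.continuousOn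
      (show (0:ℝ) ∈ Icc (U w) (U y) from ⟨hlt.le, by rw [h1]; norm_num⟩)
    exact hne v hv hv0
  have hc := mean_compare hU.continuous (z := y) (z' := y - 8) (r := 8) (ρ := 16) (r' := 24)
    (by norm_num) (by norm_num) (by norm_num) (fun w hw => hpos w (by
      rw [mem_ball, dist_eq_norm] at hw
      rw [mem_closedBall, dist_eq_norm]
      have := norm_sub_le (w - (y - 8)) 8
      have e : w - y = w - (y - 8) - 8 := by ring
      rw [e]
      norm_num at this ⊢
      linarith))
  have m1 := mean_sub_le hU y (r := 8) (S := 1 / 1000000) (by norm_num) fun w hw =>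
    hl w (closedBall_subset_ball (by norm_num) hw)
  have m2 := mean_sub_le hU (y - 8) (r := 24) (S := 1 / 1000000) (by norm_num) fun w hw =>
    hl w (by
      rw [mem_closedBall, dist_eq_norm] at hw
      rw [mem_ball, dist_eq_norm]
      have := norm_sub_le (w - (y - 8)) 8
      have e : w - y = w - (y - 8) - 8 := by ring
      rw [e]
      norm_num at this ⊢
      linarith)
  have h3 := hb (y - 8) (by rw [mem_ball, dist_eq_norm]; norm_num)
  have h4 : Real.exp ((y - 8 - y).re + 0.35 * ‖y - 8 - y‖) ≤ 0.01 := by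
    have e : y - 8 - y = -8 := by ring
    rw [e]
    have h5 : Real.exp ((-8 : ℂ).re + 0.35 * ‖(-8:ℂ)‖) ≤ Real.exp (-5) := by
      gcongr
      norm_num
    refine h5.trans ?_
    rw [Real.exp_neg]
    have h6 : (2.7 : ℝ) ^ 5 ≤ Real.exp 5 := by
      have := Real.exp_one_gt_d9
      have e5 : Real.exp 5 = Real.exp 1 ^ 5 := by rw [← Real.exp_nat_mul]; norm_num
      rw [e5]; gcongr; linarith
    rw [inv_le_comm₀ (Real.exp_pos _) (by norm_num)]
    norm_num at h6 ⊢; linarith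
  have h5 := (le_abs_self _).trans (h3.trans h4)
  rw [abs_le] at m1 m2
  norm_num at hc m1 m2 h5
  linarith [m1.1, m2.2]

lemma integral_scale (f : ℂ → ℝ) (z : ℂ) {r : ℝ} (hr : 0 < r) :
    ∫ ζ, f (z + r • ζ) = (r ^ 2)⁻¹ * ∫ w, f w := by
  have h := Measure.integral_comp_smul (volume : Measure ℂ) (fun x => f (z + x)) r
  rw [h, integral_add_left_eq_self f z]
  simp [abs_of_pos hr]

lemma mean_le_of_le {u : ℂ → ℝ} (hu : Continuous u) {z : ℂ} {r K : ℝ} (hr : 0 ≤ r)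
    (h : ∀ w ∈ closedBall z r, u w ≤ K) : mean u z r ≤ K := by
  have hpi := Real.pi_pos
  have : ∫ ζ, u (z + r • ζ) * bet 2 ζ ≤ ∫ ζ, K * bet 2 ζ := by
    refine integral_mono (bet_mul_integrable two_ne_zero (by fun_prop))
      ((bet_integrable two_ne_zero).const_mul K) fun ζ => ?_
    rcases le_total 1 ‖ζ‖ with h1 | h1
    · simp [bet_zero two_ne_zero h1]
    · refine mul_le_mul_of_nonneg_right (h _ ?_) (bet_nonneg _ _)
      simp only [mem_closedBall, dist_eq_norm, add_sub_cancel_left, norm_smul,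
        Real.norm_of_nonneg hr]
      nlinarith
  rw [integral_const_mul, bet2_integral] at this
  unfold mean
  calc _ ≤ 3 / Real.pi * (K * (Real.pi / 3)) := by gcongr
    _ = K := by field_simp

lemma mean_mono {u v : ℂ → ℝ} (hu : Continuous u) (hv : Continuous v) (h : ∀ w, u w ≤ v w)
    (z : ℂ) (r : ℝ) : mean u z r ≤ mean v z r := by
  unfold mean
  have := Real.pi_pos
  refine mul_le_mul_of_nonneg_left ?_ (by positivity)
  have h1 : Continuous fun ζ : ℂ => u (z + r • ζ) := by fun_prop
  have h2 : Continuous fun ζ : ℂ => v (z + r • ζ) := by fun_prop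
  refine integral_mono (bet_mul_integrable two_ne_zero h1)
    (bet_mul_integrable two_ne_zero h2) fun ζ => ?_
  exact mul_le_mul_of_nonneg_right (h _) (bet_nonneg _ _)

/-- A large bound for the solution on the patch region. -/
noncomputable def bigM : ℝ := Real.exp 135

lemma bigM_ge : 1 ≤ bigM := Real.one_le_exp (by norm_num)

/-- Data at a zero: the averages of `|U|` about a zero must grow, so the regularised `|U|` has a
definite amount of Laplacian at some radius. -/
lemma patch_radius {U : ℂ → ℝ} (hU : ContDiff ℝ 2 U) {y z1 : ℂ} (h1 : U y = 1)
    (hz1 : z1 ∈ closedBall y 32) (hz : U z1 = 0)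
    (hb : ∀ z ∈ ball y 100, |U z| ≤ bigM)
    (hd : ∀ z ∈ closedBall y 98, ‖dU U z‖ ≤ 20 * bigM)
    (hl : ∀ z ∈ ball y 100, |lap U z| ≤ 1 / 1000000) {a : ℝ} (ha : 0 < a) (ha' : a ≤ 1 / 1600) :
    ∃ r, 1 / (64000 * bigM) < r ∧ r < 66 ∧
      1 / 198000 ≤ ∫ ζ, lap (fun w => sab a (U w)) (z1 + r • ζ) * bet 3 ζ ∧
      r * ∫ ζ, lap (fun w => sab a (U w)) (z1 + r • ζ) * bet 3 ζ ≤ 2 * Real.pi * (bigM + 1) := by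
  have hM := bigM_ge
  set r1 : ℝ := 1 / (64000 * bigM) with hr1
  have hr1p : 0 < r1 := by positivity
  have hr1s : r1 ≤ 1 := by rw [hr1, div_le_one (by positivity)]; linarith
  rw [mem_closedBall, dist_eq_norm] at hz1
  have hY : ContDiff ℝ 2 (fun w => sab a (U w)) := (sab_contDiff ha).comp hU
  set Y : ℂ → ℝ := fun w => sab a (U w) with hYdef
  have hsub : ∀ w ∈ closedBall z1 66, w ∈ closedBall y 98 := by
    intro w hw
    rw [mem_closedBall, dist_eq_norm] at *
    have := norm_add_le (w - z1) (z1 - y)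
    rw [sub_add_sub_cancel] at this; linarith
  -- lower bound for the large average
  have hlow : 1 / 200 ≤ mean Y z1 66 := by
    have hc := mean_compare (hU.continuous.abs) (z := y) (z' := z1) (r := 8) (ρ := 40) (r' := 66)
      (by norm_num) (by rw [norm_sub_rev]; linarith) (by norm_num) (fun w _ => abs_nonneg _)
    have m1 := mean_sub_le hU y (r := 8) (S := 1 / 1000000) (by norm_num) fun w hw =>
      hl w (closedBall_subset_ball (by norm_num) hw)
    have m3 := mean_mono hU.continuous hU.continuous.abs (fun w => le_abs_self _) y 8
    have m4 := mean_mono hU.continuous.abs hY.continuous (fun w => abs_le_sab ha (U w)) z1 66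
    rw [abs_le] at m1
    have m2 := m1.1
    rw [h1] at m2
    have m5 : 0.99 ≤ mean (fun x => |U x|) y 8 := by norm_num at m2 ⊢; linarith
    have : (1:ℝ) / 200 ≤ (8 / 66) ^ 2 * (1 - (40 / 66) ^ 2) ^ 2 * 0.99 := by norm_num
    have h6 : ((8:ℝ) / 66) ^ 2 * (1 - (40 / 66) ^ 2) ^ 2 * 0.99 ≤
      (8 / 66) ^ 2 * (1 - (40 / 66) ^ 2) ^ 2 * mean (fun x => |U x|) y 8 := by gcongr
    linarith
  -- upper bound for the small average
  have hup : mean Y z1 r1 ≤ 1 / 800 := by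
    refine mean_le_of_le hY.continuous hr1p.le fun w hw => ?_
    have hlip : |U w - U z1| ≤ 40 * bigM * ‖w - z1‖ := by
      have := (convex_closedBall z1 66).norm_image_sub_le_of_norm_fderiv_le (𝕜 := ℝ) (f := U)
        (C := 40 * bigM)
        (fun x _ => hU.differentiable (by simp) x) (fun x hx => ?_)
        (mem_closedBall_self (by norm_num)) (closedBall_subset_closedBall (by linarith) hw)
      · simpa using this
      · refine ContinuousLinearMap.opNorm_le_bound _ (by positivity) fun v => ?_
        have h3 := abs_fderiv_le U x v
        have h4 := hd x (hsub x hx)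
        rw [Real.norm_eq_abs]
        refine h3.trans ?_
        have h5 : 2 * ‖dU U x‖ ≤ 40 * bigM := by linarith
        gcongr
    rw [mem_closedBall, dist_eq_norm] at hw
    rw [hz, sub_zero] at hlip
    have h5 : 40 * bigM * ‖w - z1‖ ≤ 40 * bigM * r1 := by gcongr
    have h6 : 40 * bigM * r1 = 1 / 1600 := by rw [hr1]; field_simp; norm_num
    have := sab_le ha (U w)
    simp only [hYdef]; linarith
  have hup2 : mean Y z1 66 ≤ bigM + 1 := by
    refine mean_le_of_le hY.continuous (by norm_num) fun w hw => ?_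
    have := sab_le ha (U w)
    have := hb w (closedBall_subset_ball (by norm_num) (hsub w hw))
    simp only [hYdef]; linarith
  have hlow2 : 0 ≤ mean Y z1 r1 := by
    have h0 := mean_mono (u := fun _ => 0) continuous_const hY.continuous
      (fun w => (sab_pos ha (U w)).le) z1 r1
    simpa [mean] using h0
  obtain ⟨r, ⟨hr, hr'⟩, he⟩ := exists_hasDerivAt_eq_slope (mean Y z1) _
    (show r1 < 66 by linarith)
    (fun x _ => (mean_hasDerivAt (hY.of_le (by norm_num)) z1 x).continuousAt.continuousWithinAt)
    (fun x _ => mean_hasDerivAt (hY.of_le (by norm_num)) z1 x)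
  rw [mean_deriv_eq hY] at he
  have hpi := Real.pi_gt_three
  have hr0 : 0 < r := hr1p.trans hr
  refine ⟨r, hr, hr', ?_, ?_⟩
  · set I := ∫ ζ, lap Y (z1 + r • ζ) * bet 3 ζ
    have h7 : 1 / 18000 ≤ r / (2 * Real.pi) * I := by
      rw [he, le_div_iff₀ (by linarith)]; linarith
    have h8 : 0 < I := by
      by_contra! hneg
      have : r / (2 * Real.pi) * I ≤ 0 := mul_nonpos_of_nonneg_of_nonpos (by positivity) hneg
      linarith
    have h9 : r / (2 * Real.pi) * I ≤ 66 / (2 * 3) * I := by gcongr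
    linarith
  · set I := ∫ ζ, lap Y (z1 + r • ζ) * bet 3 ζ
    have h7 : r / (2 * Real.pi) * I ≤ bigM + 1 := by
      rw [he, div_le_iff₀ (by linarith)]
      nlinarith
    have : r * I = 2 * Real.pi * (r / (2 * Real.pi) * I) := by field_simp
    rw [this]; gcongr

lemma gsq_eq (u : ℂ → ℝ) (z : ℂ) : gsq u z = 4 * ‖dU u z‖ ^ 2 := by
  have : ‖dU u z‖ ^ 2 = (fderiv ℝ u z 1 / 2) ^ 2 + (fderiv ℝ u z Complex.I / 2) ^ 2 := by
    rw [← Complex.normSq_eq_norm_sq, Complex.normSq_apply]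
    simp [dU]; ring
  rw [this]; unfold gsq; ring

set_option maxHeartbeats 1000000 in
/-- Patch lemma, normalised so that `U y = 1`. -/
lemma patch_norm : ∃ K : ℝ, 1 ≤ K ∧ ∀ (U : ℂ → ℝ) (y : ℂ), ContDiff ℝ 2 U → U y = 1 →
    (∀ z ∈ ball y 100, |U z| ≤ Real.exp ((z - y).re + 0.35 * ‖z - y‖)) →
    (∀ z ∈ ball y 100, |lap U z| ≤ 1 / 1000000) →
    ∀ b : ℝ, 0 < b → b ≤ 1 / 40 → ∃ φ : ℂ → ℝ, Continuous φ ∧ (∀ z, 0 ≤ φ z) ∧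
      (∀ z, z ∉ ball y 100 → φ z = 0) ∧ 1 / K ≤ ∫ z, φ z ∧ ∫ z, φ z ≤ K ∧
      (∀ z, ‖Cz (fun ζ => (φ ζ : ℂ)) z‖ ≤ K) ∧ (∀ z, |U z| * φ z ≤ K) ∧
      ∫ z, |U z| * φ z ≤ b * K := by
  have hM := bigM_ge
  set r1 : ℝ := 1 / (64000 * bigM) with hr1
  have hr1p : 0 < r1 := by positivity
  have hr1s : r1 ≤ 1 := by rw [hr1, div_le_one (by positivity)]; linarith
  have hpi := Real.pi_gt_three
  have hpi4 := Real.pi_lt_four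
  set A1 : ℝ := 1000000 / r1 ^ 2 with hA1
  set A2 : ℝ := 66 * (8 * (bigM + 1)) + 66 ^ 2 with hA2
  set A3 : ℝ := 80 * bigM + 6 * 66 * (240 * bigM / r1) + 6 * 66 with hA3
  set A4 : ℝ := 1600 * bigM ^ 2 with hA4
  have p1 : 0 < A1 := by positivity
  have p2 : 0 < A2 := by positivity
  have p3 : 0 < A3 := by positivity
  have p4 : 0 < A4 := by positivity
  refine ⟨1 + A1 + A2 + A3 + A4 + A4 * (4 * 66 ^ 2), by nlinarith, ?_⟩
  intro U y hU h1 hb hl b hb0 hb1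
  have hbM : ∀ z ∈ ball y 100, |U z| ≤ bigM := by
    intro z hz
    refine (hb z hz).trans (Real.exp_le_exp.2 ?_)
    rw [mem_ball, dist_eq_norm] at hz
    have := Complex.re_le_norm (z - y); linarith
  have hd : ∀ z ∈ closedBall y 98, ‖dU U z‖ ≤ 20 * bigM := by
    intro z hz
    have hs : ∀ w ∈ ball z 1, w ∈ ball y 100 := by
      intro w hw
      rw [mem_ball, mem_closedBall] at *
      linarith [dist_triangle w z y]
    refine grad_est hU (fun w hw => hbM w (hs w hw)) fun w hw => (hl w (hs w hw)).trans ?_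
    linarith
  obtain ⟨z1, hz1, hz⟩ := patch_zero hU h1 hb hl
  have ha : 0 < b ^ 2 := by positivity
  obtain ⟨r, hr, hr', hI1, hI2⟩ := patch_radius hU h1 hz1 hz hbM hd hl ha (by nlinarith)
  rw [← hr1] at hr
  set a := b ^ 2 with hadef
  have hr0 : 0 < r := hr1p.trans hr
  have hY : ContDiff ℝ 2 (fun w => sab a (U w)) := (sab_contDiff ha).comp hU
  set Y : ℂ → ℝ := fun w => sab a (U w) with hYdef
  set χ : ℂ → ℝ := fun w => bet 3 (r⁻¹ • (w - z1)) with hχ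
  have hχ0 : ∀ w, w ∉ ball z1 r → χ w = 0 := by
    intro w hw
    refine bet_zero three_ne_zero ?_
    rw [norm_smul, norm_inv, Real.norm_of_nonneg hr0.le, ← div_eq_inv_mul, le_div_iff₀ hr0, one_mul]
    simpa [dist_eq_norm] using hw
  have hχn : ∀ w, 0 ≤ χ w := fun w => bet_nonneg _ _
  have hχ1 : ∀ w, χ w ≤ 1 := fun w => bet_le_one _ _
  have hχc : ContDiff ℝ 1 χ :=
    (bet_contDiff 2 one_le_two).comp ((contDiff_id.sub contDiff_const).const_smul r⁻¹)
  have hχs : HasCompactSupport χ := by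
    refine HasCompactSupport.intro (isCompact_closedBall z1 r) fun w hw =>
      hχ0 w fun h => hw (ball_subset_closedBall h)
  have hsub : ∀ w ∈ ball z1 r, w ∈ closedBall y 98 := by
    intro w hw
    rw [mem_ball] at hw; rw [mem_closedBall] at *
    linarith [dist_triangle w z1 y]
  have hsub2 : ∀ w ∈ ball z1 r, w ∈ ball y 100 := fun w hw =>
    closedBall_subset_ball (by norm_num) (hsub w hw)
  set φ : ℂ → ℝ := fun w => χ w * (a ^ 2 / sab a (U w) ^ 3 * gsq U w) with hφ
  set e : ℂ → ℝ := fun w => χ w * (U w / sab a (U w) * lap U w) with he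
  have hlapY : ∀ w, χ w * lap Y w = e w + φ w := by
    intro w
    have := lap_comp (sab_deriv ha) (sab_deriv2 ha) hU w
    simp only [hYdef, he, hφ, this]; ring
  have hgc : Continuous (gsq U) := by
    unfold gsq
    have h1 := (contDiff_fderiv_apply hU 1).continuous
    have h2 := (contDiff_fderiv_apply hU Complex.I).continuous
    fun_prop
  have hsc : Continuous fun w => sab a (U w) := hY.continuous
  have hφc : Continuous φ := by
    have := hχc.continuous
    have h2 := hU.continuous
    refine this.mul ((continuous_const.div (hsc.pow 3) fun w => ?_).mul hgc)
    exact (pow_pos (sab_pos ha _) 3).ne'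
  have hec : Continuous e := by
    have := hχc.continuous
    have h2 := hU.continuous
    refine this.mul ((h2.div hsc fun w => ?_).mul (lap_cont hU))
    exact (sab_pos ha _).ne'
  have hφn : ∀ w, 0 ≤ φ w := fun w =>
    mul_nonneg (hχn w) (mul_nonneg (sab2_nonneg ha _) (by rw [gsq_eq]; positivity))
  have hφ0 : ∀ w, w ∉ ball z1 r → φ w = 0 := fun w hw => by simp [hφ, hχ0 w hw]
  have he0 : ∀ w, w ∉ ball z1 r → e w = 0 := fun w hw => by simp [he, hχ0 w hw]
  have hφs : HasCompactSupport φ := hχs.mul_right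
  have hes : HasCompactSupport e := hχs.mul_right
  have heb : ∀ w, |e w| ≤ 1 / 1000000 := by
    intro w
    by_cases hw : w ∈ ball z1 r
    · have h3 := hl w (hsub2 w hw)
      have h4 := abs_sab1 ha (U w)
      simp only [he]
      rw [abs_mul, abs_mul, abs_of_nonneg (hχn w)]
      calc χ w * (|U w / sab a (U w)| * |lap U w|) ≤ 1 * (1 * (1 / 1000000)) := by
            gcongr; exact hχ1 w
        _ = _ := by norm_num
    · rw [he0 w hw]; norm_num
  have hgs : ∀ w ∈ ball z1 r, gsq U w ≤ A4 := by
    intro w hw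
    have := hd w (hsub w hw)
    rw [gsq_eq, hA4]
    calc 4 * ‖dU U w‖ ^ 2 ≤ 4 * (20 * bigM) ^ 2 := by gcongr
      _ = _ := by ring
  have hball : volume.real (ball z1 r) = Real.pi * r ^ 2 := by
    simp [Measure.real, Complex.volume_ball, hr0.le]; ring
  have hφI : Integrable φ := hφc.integrable_of_hasCompactSupport hφs
  have heI : Integrable e := hec.integrable_of_hasCompactSupport hes
  have hIe : |∫ w, e w| ≤ Real.pi * r ^ 2 / 1000000 := by
    rw [← setIntegral_eq_integral_of_forall_compl_eq_zero he0, ← Real.norm_eq_abs]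
    have := norm_setIntegral_le_of_norm_le_const (μ := volume) (s := ball z1 r) (f := e)
      (C := 1 / 1000000) measure_ball_lt_top fun w _ => heb w
    rw [hball] at this
    linarith
  set I := ∫ ζ, lap Y (z1 + r • ζ) * bet 3 ζ with hI
  have hIeq : ∫ w, φ w = r ^ 2 * I - ∫ w, e w := by
    have h3 := integral_scale (fun w => χ w * lap Y w) z1 hr0
    have h4 : ∫ ζ, χ (z1 + r • ζ) * lap Y (z1 + r • ζ) = I := by
      rw [hI]
      refine integral_congr_ae (Eventually.of_forall fun ζ => ?_)
      simp only [hχ, add_sub_cancel_left, smul_smul, inv_mul_cancel₀ hr0.ne', one_smul]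
      ring
    rw [h4] at h3
    have h5 : ∫ w, χ w * lap Y w = (∫ w, e w) + ∫ w, φ w := by
      rw [← integral_add heI hφI]
      exact integral_congr_ae (Eventually.of_forall hlapY)
    rw [h3, h5]; field_simp; ring
  rw [abs_le] at hIe
  have hφup : ∫ w, φ w ≤ A2 := by
    rw [hIeq, hA2]
    have h3 : r * (r * I) ≤ 66 * (8 * (bigM + 1)) := by
      have h4 : r * I ≤ 8 * (bigM + 1) := by
        refine hI2.trans ?_
        have : 2 * Real.pi ≤ 8 := by linarith
        gcongr
      gcongr
    have h5 : Real.pi * r ^ 2 / 1000000 ≤ 4 * 66 ^ 2 / 1000000 := by gcongr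
    nlinarith [hIe.1]
  have hφlow : 1 / A1 ≤ ∫ w, φ w := by
    rw [hIeq, hA1, one_div_div]
    have h3 : r1 ^ 2 ≤ r ^ 2 := by gcongr
    have h5 : Real.pi * r ^ 2 / 1000000 ≤ 4 * r ^ 2 / 1000000 := by gcongr
    have h6 : r ^ 2 * (1 / 198000) ≤ r ^ 2 * I := by gcongr
    nlinarith [hIe.2, sq_nonneg r]
  have hCz : ∀ z, ‖Cz (fun ζ => (φ ζ : ℂ)) z‖ ≤ A3 := by
    intro z
    have hr66 : ball z1 r ⊆ ball z1 66 := ball_subset_ball hr'.le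
    have hdY : ∀ w, dU Y w = (U w / sab a (U w) : ℝ) * dU U w := by
      intro w
      have h := ((sab_deriv ha (U w)).comp_hasFDerivAt w
        (hU.differentiable (by simp) w).hasFDerivAt).fderiv
      have h' : fderiv ℝ Y w = (U w / sab a (U w)) • fderiv ℝ U w := h
      simp only [dU, h', smul_apply, smul_eq_mul]
      push_cast; ring
    have hdYb : ∀ w ∈ ball z1 r, ‖dU Y w‖ ≤ 20 * bigM := by
      intro w hw
      rw [hdY, norm_mul, Complex.norm_real, Real.norm_eq_abs]
      have h3 := abs_sab1 ha (U w)
      have h4 := hd w (hsub w hw)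
      calc _ ≤ 1 * (20 * bigM) := by gcongr
        _ = _ := one_mul _
    have hdχ : ∀ w, ‖dU χ w‖ ≤ 3 / r1 := by
      intro w
      have h := ((bet_hasFDerivAt 2 one_le_two (r⁻¹ • (w - z1))).comp w
        (((hasFDerivAt_id w).sub_const z1).const_smul r⁻¹)).fderiv
      have h' : ∀ v, fderiv ℝ χ w v = r⁻¹ * fderiv ℝ (bet 3) (r⁻¹ • (w - z1)) v := by
        intro v
        have h2 : fderiv ℝ χ w = _ := h
        rw [h2, (bet_hasFDerivAt 2 one_le_two _).fderiv]
        simp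
      have h3 : dU χ w = (r⁻¹ : ℝ) * dU (bet 3) (r⁻¹ • (w - z1)) := by
        simp only [dU, h']; push_cast; ring
      rw [h3, dU_bet 2 one_le_two, norm_mul, norm_mul, norm_neg, Complex.norm_real, Complex.norm_real,
        Real.norm_of_nonneg (inv_nonneg.2 hr0.le),
        Real.norm_of_nonneg (mul_nonneg (by positivity) (bet_nonneg _ _)), RCLike.norm_conj]
      have h4 : bet 2 (r⁻¹ • (w - z1)) * ‖r⁻¹ • (w - z1)‖ ≤ 1 := by
        rcases le_total 1 ‖r⁻¹ • (w - z1)‖ with h5 | h5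
        · rw [bet_zero two_ne_zero h5]; simp
        · exact mul_le_one₀ (bet_le_one _ _) (norm_nonneg _) h5
      have h6 : r⁻¹ ≤ r1⁻¹ := inv_anti₀ hr1p hr.le
      have h7 : 0 ≤ bet 2 (r⁻¹ • (w - z1)) * ‖r⁻¹ • (w - z1)‖ :=
        mul_nonneg (bet_nonneg _ _) (norm_nonneg _)
      calc _ = r⁻¹ * (3 * (bet 2 (r⁻¹ • (w - z1)) * ‖r⁻¹ • (w - z1)‖)) := by push_cast; ring
        _ ≤ r1⁻¹ * (3 * 1) := by gcongr
        _ = 3 / r1 := by ring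
    have hχC : ContDiff ℝ 1 (fun w => (χ w : ℂ)) := Complex.ofRealCLM.contDiff.comp hχc
    have hdYc : ContDiff ℝ 1 (fun w => 4 * dU Y w) := contDiff_const.mul (dU_contDiff hY)
    have hχC' : HasCompactSupport (fun w => (χ w : ℂ)) :=
      hχs.comp_left (g := fun x : ℝ => (x : ℂ)) (by simp)
    set f : ℂ → ℂ := fun w => (χ w : ℂ) * (4 * dU Y w) with hf
    set g : ℂ → ℂ := fun w => 4 * (starRingEnd ℂ) (dU χ w) * dU Y w with hg
    have hdb : dbar f = fun w => (g w + (e w : ℂ)) + (φ w : ℂ) := by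
      ext w
      have h3 := hlapY w
      simp only [hf]
      rw [dbar_mul (hχC.differentiable (by simp) w) (hdYc.differentiable (by simp) w),
        dbar_ofReal (hχc.differentiable (by simp) w),
        dbar_mul (differentiableAt_const _) ((dU_contDiff hY).differentiable (by simp) w),
        dbar_dU hY, dbar_holo (differentiableAt_const _)]
      have h4 : ((χ w : ℂ)) * (lap Y w : ℂ) = e w + φ w := by exact_mod_cast h3
      simp only [hg]
      linear_combination h4
    have hdχ0 : ∀ w, w ∉ ball z1 66 → dU χ w = 0 := by
      intro w hw
      have : fderiv ℝ χ w = 0 := by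
        refine image_eq_zero_of_notMem_tsupport fun h => hw ?_
        have h2 := tsupport_fderiv_subset ℝ h
        have h3 : tsupport χ ⊆ closedBall z1 r := closure_minimal (fun x hx => by
          by_contra h4
          exact hx (hχ0 x fun h => h4 (ball_subset_closedBall h))) isClosed_closedBall
        exact closedBall_subset_ball hr' (h3 h2)
      simp [dU, this]
    have hdχ1 : ∀ w, w ∉ ball z1 r → dU χ w = 0 := by
      intro w hw
      have hmin : IsLocalMin χ w := Eventually.of_forall fun x => by
        rw [hχ0 w hw]; exact hχn x
      simp [dU, hmin.fderiv_eq_zero]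
    have hgD : Dens g := by
      have h1 := (dU_cont hχc)
      have h2 := (dU_contDiff hY).continuous
      refine Dens.of_cont (by fun_prop) (HasCompactSupport.intro (isCompact_closedBall z1 66)
        fun w hw => ?_)
      simp [hg, hdχ0 w fun h => hw (ball_subset_closedBall h)]
    have heD : Dens (fun w => (e w : ℂ)) :=
      Dens.of_cont (by fun_prop) (hes.comp_left (g := fun x : ℝ => (x : ℂ)) (by simp))
    have hφD : Dens (fun w => (φ w : ℂ)) :=
      Dens.of_cont (by fun_prop) (hφs.comp_left (g := fun x : ℝ => (x : ℂ)) (by simp))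
    have hp := pompeiu (hχC.mul hdYc) hχC'.mul_right z
    change f z = Cz (dbar f) z at hp
    rw [hdb, Cz_add (hgD.add heD) hφD, Cz_add hgD heD] at hp
    have b1 : ‖Cz g z‖ ≤ 6 * 66 * (240 * bigM / r1) := by
      refine Cz_bound_ball hgD (c := z1) (by norm_num) (fun w => ?_) (fun w hw => by simp [hg, hdχ0 w hw]) z
      by_cases hw : w ∈ ball z1 r
      · simp only [hg]
        rw [norm_mul, norm_mul, RCLike.norm_conj]
        have := hdχ w
        have := hdYb w hw
        calc _ ≤ ‖(4:ℂ)‖ * (3 / r1) * (20 * bigM) := by gcongr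
          _ = _ := by norm_num; ring
      · simp only [hg, hdχ1 w hw]; simp; positivity
    have b2 : ‖Cz (fun w => (e w : ℂ)) z‖ ≤ 6 * 66 * (1 / 1000000) := by
      refine Cz_bound_ball heD (c := z1) (by norm_num) (fun w => ?_) (fun w hw => ?_) z
      · simpa using heb w
      · rw [he0 w fun h => hw (hr66 h)]; simp
    have b3 : ‖f z‖ ≤ 80 * bigM := by
      by_cases hw : z ∈ ball z1 r
      · simp only [hf]
        rw [norm_mul, norm_mul, Complex.norm_real, Real.norm_of_nonneg (hχn z)]
        have := hdYb z hw
        have := hχ1 z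
        calc _ ≤ 1 * (‖(4:ℂ)‖ * (20 * bigM)) := by gcongr
          _ = _ := by norm_num; ring
      · simp only [hf, hχ0 z hw]; simp; positivity
    have e4 : Cz (fun w => (φ w : ℂ)) z = f z - (Cz g z + Cz (fun w => (e w : ℂ)) z) := by
      rw [hp]; ring
    rw [e4]
    have := norm_sub_le (f z) (Cz g z + Cz (fun w => (e w : ℂ)) z)
    have := norm_add_le (Cz g z) (Cz (fun w => (e w : ℂ)) z)
    rw [hA3]; linarith
  have hUφ : ∀ w, |U w| * φ w ≤ A4 := by
    intro w
    by_cases hw : w ∈ ball z1 r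
    · have h3 := mul_sab2 ha (U w)
      have h4 := hgs w hw
      have h5 : 0 ≤ gsq U w := by rw [gsq_eq]; positivity
      calc |U w| * φ w = χ w * (|U w| * (a ^ 2 / sab a (U w) ^ 3) * gsq U w) := by
            simp only [hφ]; ring
        _ ≤ 1 * (1 * A4) := by
            have := mul_nonneg (abs_nonneg (U w)) (sab2_nonneg ha (U w))
            gcongr
            exact hχ1 w
        _ = A4 := by ring
    · rw [hφ0 w hw, mul_zero]; exact p4.le
  refine ⟨φ, hφc, hφn, fun w hw => hφ0 w fun h => hw (hsub2 w h), ?_, ?_, ?_, ?_, ?_⟩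
  · refine le_trans ?_ hφlow
    refine one_div_le_one_div_of_le p1 ?_
    nlinarith
  · nlinarith
  · intro z; have := hCz z; nlinarith
  · intro z; have := hUφ z; nlinarith
  · have hle : ∫ w, |U w| * φ w ≤ ∫ w, (b * φ w + (ball z1 r).indicator (fun _ => b ^ 2 * A4) w) := by
      refine integral_mono ?_ ?_ fun w => ?_
      · exact (hU.continuous.abs.mul hφc).integrable_of_hasCompactSupport hφs.mul_left
      · refine (hφI.const_mul b).add ?_
        exact (integrable_indicator_iff measurableSet_ball).2
          (integrableOn_const measure_ball_lt_top.ne)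
      · by_cases hw : w ∈ ball z1 r
        · rw [indicator_of_mem hw]
          have h3 := mul_sab2' hb0 (U w)
          have h4 := hgs w hw
          have h5 : 0 ≤ gsq U w := by rw [gsq_eq]; positivity
          calc |U w| * φ w = χ w * gsq U w * (|U w| * (a ^ 2 / sab a (U w) ^ 3)) := by
                simp only [hφ]; ring
            _ ≤ χ w * gsq U w * (b * (a ^ 2 / sab a (U w) ^ 3) + b ^ 2) := by
                have := mul_nonneg (hχn w) h5
                exact mul_le_mul_of_nonneg_left h3 this
            _ = b * φ w + b ^ 2 * (χ w * gsq U w) := by simp only [hφ]; ring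
            _ ≤ b * φ w + b ^ 2 * (1 * A4) := by
                have := hχ1 w
                gcongr
            _ = _ := by ring
        · rw [indicator_of_notMem hw, hφ0 w hw]; simp
    rw [integral_add (hφI.const_mul b) ((integrable_indicator_iff measurableSet_ball).2
          (integrableOn_const measure_ball_lt_top.ne)), integral_const_mul,
      integral_indicator measurableSet_ball, setIntegral_const, hball, smul_eq_mul] at hle
    have h5 : Real.pi * r ^ 2 * (b ^ 2 * A4) ≤ 4 * 66 ^ 2 * (b * A4) := by
      have : b ^ 2 ≤ b := by nlinarith
      gcongr
    have h6 : b * ∫ w, φ w ≤ b * A2 := by gcongr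
    nlinarith

lemma lap_const_mul (c : ℝ) {u : ℂ → ℝ} (hu : ContDiff ℝ 2 u) (z : ℂ) :
    lap (fun w => c * u w) z = c * lap u z := by
  have h := lap_comp (s := fun t => c * t) (s1 := fun _ => c) (s2 := fun _ => 0)
    (fun t => by simpa using (hasDerivAt_id t).const_mul c) (fun t => hasDerivAt_const t c) hu z
  simpa using h

/-- Patch lemma. If `U` is dominated near `y` by a function growing like `exp (Re (z - y))` up to
a small opening, then there is a nonnegative density `φ` near `y`, of definite mass and bounded
Cauchy transform, such that `|U| φ` has arbitrarily small integral. Near a zero of `U` it is the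
term `s₂(U) |∇U|²` of the Laplacian of `sab a (U ·)`, with `s₂` the second derivative of `sab a`, cut
off and multiplied by a constant. -/
theorem patch : ∃ K : ℝ, 1 ≤ K ∧ ∀ (U : ℂ → ℝ) (y : ℂ) (δ : ℝ), ContDiff ℝ 2 U → U y ≠ 0 →
    0 ≤ δ → δ ≤ 1 / K →
    (∀ z ∈ ball y 100, |U z| ≤ |U y| * Real.exp ((z - y).re + 0.35 * ‖z - y‖)) →
    (∀ z ∈ ball y 100, |lap U z| ≤ δ * |U z|) →
    ∀ η : ℝ, 0 < η → ∃ φ : ℂ → ℝ, Continuous φ ∧ (∀ z, 0 ≤ φ z) ∧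
      (∀ z, z ∉ ball y 100 → φ z = 0) ∧ 1 / K ≤ ∫ z, φ z ∧ ∫ z, φ z ≤ K ∧
      (∀ z, ‖Cz (fun ζ => (φ ζ : ℂ)) z‖ ≤ K) ∧ (∀ z, |U z| * φ z ≤ K * |U y|) ∧
      ∫ z, |U z| * φ z ≤ η * |U y| := by
  obtain ⟨K, hK, h⟩ := patch_norm
  have hM := bigM_ge
  refine ⟨K + 1000000 * bigM, by linarith, fun U y δ hU hy hδ0 hδ hb hl η hη => ?_⟩
  have hK0 : 0 < K := by linarith
  have hy0 : 0 < |U y| := abs_pos.2 hy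
  have hV : ContDiff ℝ 2 (fun w => (U y)⁻¹ * U w) := contDiff_const.mul hU
  have hb' : ∀ z ∈ ball y 100,
      |(U y)⁻¹ * U z| ≤ Real.exp ((z - y).re + 0.35 * ‖z - y‖) := by
    intro z hz
    rw [abs_mul, abs_inv, inv_mul_le_iff₀ hy0]
    exact hb z hz
  have hl' : ∀ z ∈ ball y 100, |lap (fun w => (U y)⁻¹ * U w) z| ≤ 1 / 1000000 := by
    intro z hz
    rw [lap_const_mul _ hU, abs_mul, abs_inv, inv_mul_le_iff₀ hy0]
    have h1 : |U z| ≤ |U y| * bigM := by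
      refine (hb z hz).trans ?_
      refine mul_le_mul_of_nonneg_left (Real.exp_le_exp.2 ?_) hy0.le
      rw [mem_ball, dist_eq_norm] at hz
      have := Complex.re_le_norm (z - y); linarith
    have h2 : δ * bigM ≤ 1 / 1000000 := by
      have h3 : δ ≤ 1 / (1000000 * bigM) :=
      hδ.trans (one_div_le_one_div_of_le (by positivity) (by linarith))
      calc δ * bigM ≤ 1 / (1000000 * bigM) * bigM := by gcongr
        _ = _ := by field_simp
    calc _ ≤ δ * |U z| := hl z hz
      _ ≤ δ * (|U y| * bigM) := by gcongr
      _ = |U y| * (δ * bigM) := by ring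
      _ ≤ _ := by gcongr
  obtain ⟨φ, h1, h2, h3, h4, h5, h6, h7, h8⟩ := h (fun w => (U y)⁻¹ * U w) y hV
    (inv_mul_cancel₀ hy) hb' hl' (min (1 / 40) (η / K)) (by positivity) (min_le_left _ _)
  have e : ∀ z, |U z| * φ z = |U y| * (|(U y)⁻¹ * U z| * φ z) := by
    intro z; rw [abs_mul, abs_inv]; field_simp
  refine ⟨φ, h1, h2, h3, (one_div_le_one_div_of_le hK0 (by linarith)).trans h4, by linarith, fun z => (h6 z).trans
    (by linarith), fun z => ?_, ?_⟩
  · rw [e, mul_comm]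
    exact mul_le_mul_of_nonneg_right ((h7 z).trans (by linarith)) hy0.le
  · simp only [e]
    rw [integral_const_mul, mul_comm]
    gcongr
    refine h8.trans ?_
    calc _ ≤ η / K * K := by gcongr; exact min_le_right _ _
      _ = η := by field_simp

/-! ### A bounded right inverse modulo patches -/


/-- Half-open unit squares with integer corners. -/
def cell (j : ℤ × ℤ) : Set ℂ := {z | ⌊z.re⌋ = j.1 ∧ ⌊z.im⌋ = j.2}

/-- The lower left corner of a cell. -/
def corner (j : ℤ × ℤ) : ℂ := ⟨j.1, j.2⟩

/-- The index of the cell containing a point. -/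
noncomputable def idx (z : ℂ) : ℤ × ℤ := (⌊z.re⌋, ⌊z.im⌋)

lemma mem_cell_idx (z : ℂ) : z ∈ cell (idx z) := ⟨rfl, rfl⟩

lemma mem_cell_iff {z : ℂ} {j : ℤ × ℤ} : z ∈ cell j ↔ idx z = j := by
  simp [cell, idx, Prod.ext_iff]

lemma cell_eq (j : ℤ × ℤ) :
    cell j = Complex.measurableEquivRealProd ⁻¹' (Ico (j.1:ℝ) (j.1 + 1) ×ˢ Ico (j.2:ℝ) (j.2 + 1)) := by
  ext z
  simp [cell, Int.floor_eq_iff, Complex.measurableEquivRealProd]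

lemma cell_meas (j : ℤ × ℤ) : MeasurableSet (cell j) := by
  rw [cell_eq]
  exact Complex.measurableEquivRealProd.measurable (measurableSet_Ico.prod measurableSet_Ico)

lemma cell_vol (j : ℤ × ℤ) : volume (cell j) = 1 := by
  rw [cell_eq, Complex.volume_preserving_equiv_real_prod.measure_preimage
    (measurableSet_Ico.prod measurableSet_Ico).nullMeasurableSet, Measure.volume_eq_prod,
    Measure.prod_prod]
  simp

lemma cell_vol' (j : ℤ × ℤ) : volume.real (cell j) = 1 := by simp [Measure.real, cell_vol]

lemma cell_near {j : ℤ × ℤ} {z : ℂ} (hz : z ∈ cell j) : ‖z - corner j‖ < 2 := by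
  obtain ⟨h1, h2⟩ := hz
  rw [Int.floor_eq_iff] at h1 h2
  have := Complex.norm_le_abs_re_add_abs_im (z - corner j)
  have e1 : |(z - corner j).re| < 1 := by
    simp only [corner, Complex.sub_re]; rw [abs_lt]; constructor <;> linarith
  have e2 : |(z - corner j).im| < 1 := by
    simp only [corner, Complex.sub_im]; rw [abs_lt]; constructor <;> linarith
  linarith

lemma cell_disj : Pairwise (Function.onFun Disjoint cell) := by
  intro i j hij
  rw [Function.onFun, Set.disjoint_left]
  intro z hi hj
  rw [mem_cell_iff] at hi hj
  exact hij (hi.symm.trans hj)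

lemma cell_int_bound {σ : ℂ → ℝ} {M : ℝ} (hM : ∀ z, |σ z| ≤ M) (j : ℤ × ℤ) :
    |∫ z in cell j, σ z| ≤ M := by
  have h := norm_setIntegral_le_of_norm_le_const (μ := volume) (s := cell j) (f := σ) (C := M)
    (by rw [cell_vol]; exact ENNReal.one_lt_top) fun z _ => hM z
  rwa [cell_vol', mul_one] at h

/-- Far-field bound for a density of total mass zero. -/
lemma Cz_far {f : ℂ → ℂ} (hf : Dens f) (h0 : ∫ z, f z = 0) {c z : ℂ} {ℓ L : ℝ} (hℓ : 0 < ℓ)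
    (hs : ∀ ζ, f ζ ≠ 0 → ‖ζ - c‖ ≤ ℓ / 2) (hz : 2 * ℓ ≤ ‖z - c‖) (hL : ∫ ζ, ‖f ζ‖ ≤ L) :
    ‖Cz f z‖ ≤ ℓ * L / ‖z - c‖ ^ 2 := by
  set d := ‖z - c‖ with hd
  have hd0 : 0 < d := by linarith
  have hzc : z - c ≠ 0 := norm_pos_iff.1 hd0
  have e : Cz f z = (Real.pi : ℂ)⁻¹ * ∫ ζ, f ζ * ((z - ζ)⁻¹ - (z - c)⁻¹) := by
    unfold Cz
    simp only [mul_sub]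
    rw [integral_sub (hf.ker_integrable z) (hf.integrable.mul_const _), integral_mul_const, h0]
    simp
  rw [e, norm_mul, norm_inv, Complex.norm_real, Real.norm_of_nonneg Real.pi_pos.le]
  have hb : ‖∫ ζ, f ζ * ((z - ζ)⁻¹ - (z - c)⁻¹)‖ ≤ ∫ ζ, ‖f ζ‖ * (ℓ / d ^ 2) := by
    refine norm_integral_le_of_norm_le (hf.integrable.norm.mul_const _)
      (Eventually.of_forall fun ζ => ?_)
    rw [norm_mul]
    by_cases h : f ζ = 0
    · simp [h]
    refine mul_le_mul_of_nonneg_left ?_ (norm_nonneg _)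
    have h1 := hs ζ h
    have h2 : 3 / 4 * d ≤ ‖z - ζ‖ := by
      have := norm_sub_norm_le (z - c) (ζ - c)
      rw [sub_sub_sub_cancel_right] at this
      linarith
    have hzζ : z - ζ ≠ 0 := norm_pos_iff.1 (by nlinarith)
    have e2 : (z - ζ)⁻¹ - (z - c)⁻¹ = (ζ - c) * ((z - ζ)⁻¹ * (z - c)⁻¹) := by
      field_simp; ring
    rw [e2, norm_mul, norm_mul, norm_inv, norm_inv, ← hd]
    calc _ ≤ ℓ / 2 * ((3 / 4 * d)⁻¹ * d⁻¹) := by gcongr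
      _ = 2 / 3 * (ℓ / d ^ 2) := by field_simp; ring
      _ ≤ 1 * (ℓ / d ^ 2) := by gcongr; norm_num
      _ = _ := one_mul _
  rw [integral_mul_const] at hb
  have hpi : Real.pi⁻¹ ≤ 1 := inv_le_one_of_one_le₀ (by linarith [Real.pi_gt_three])
  calc _ ≤ 1 * ((∫ ζ, ‖f ζ‖) * (ℓ / d ^ 2)) := by gcongr
    _ ≤ 1 * (L * (ℓ / d ^ 2)) := by gcongr
    _ = _ := by ring

/-- Correction coefficient making the density on the `j`-th cell have total mass zero. -/
noncomputable def cof (φ : ℤ × ℤ → ℂ → ℝ) (σ : ℂ → ℝ) (j : ℤ × ℤ) : ℝ :=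
  -(∫ z in cell j, σ z) / ∫ z, φ j z

/-- The corrected density on one cell. -/
noncomputable def dn1 (φ : ℤ × ℤ → ℂ → ℝ) (σ : ℂ → ℝ) (j : ℤ × ℤ) (z : ℂ) : ℝ :=
  (cell j).indicator σ z + cof φ σ j * φ j z

/-- The corrected density on a finite family of cells. -/
noncomputable def dn (J : Finset (ℤ × ℤ)) (φ : ℤ × ℤ → ℂ → ℝ) (σ : ℂ → ℝ) (z : ℂ) : ℝ :=
  ∑ j ∈ J, dn1 φ σ j z

/-- A family of patches attached to a finite set of cells. -/
structure Patches (J : Finset (ℤ × ℤ)) (φ : ℤ × ℤ → ℂ → ℝ) (K ℓ : ℝ) : Prop where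
  hK : 1 ≤ K
  hℓ : 4 ≤ ℓ
  cont : ∀ j ∈ J, Continuous (φ j)
  nn : ∀ j ∈ J, ∀ z, 0 ≤ φ j z
  supp : ∀ j ∈ J, ∀ z, φ j z ≠ 0 → ‖z - corner j‖ ≤ ℓ / 2
  low : ∀ j ∈ J, 1 / K ≤ ∫ z, φ j z
  up : ∀ j ∈ J, ∫ z, φ j z ≤ K
  cz : ∀ j ∈ J, ∀ z, ‖Cz (fun ζ => (φ j ζ : ℂ)) z‖ ≤ K

/-- Bounded measurable real functions. -/
def BM (σ : ℂ → ℝ) (M : ℝ) : Prop := Measurable σ ∧ ∀ z, |σ z| ≤ M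

section patches
variable {J : Finset (ℤ × ℤ)} {φ : ℤ × ℤ → ℂ → ℝ} {K ℓ : ℝ}

lemma Patches.cs (P : Patches J φ K ℓ) {j : ℤ × ℤ} (hj : j ∈ J) : HasCompactSupport (φ j) := by
  refine HasCompactSupport.intro (isCompact_closedBall (corner j) (ℓ / 2)) fun z hz => ?_
  by_contra h
  exact hz (by rw [mem_closedBall, dist_eq_norm]; exact P.supp j hj z h)

lemma Patches.dens (P : Patches J φ K ℓ) {j : ℤ × ℤ} (hj : j ∈ J) :
    Dens (fun z => (φ j z : ℂ)) := by
  have := P.cont j hj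
  exact Dens.of_cont (by fun_prop) ((P.cs hj).comp_left (g := fun x : ℝ => (x : ℂ)) (by simp))

lemma Patches.int (P : Patches J φ K ℓ) {j : ℤ × ℤ} (hj : j ∈ J) : Integrable (φ j) :=
  (P.cont j hj).integrable_of_hasCompactSupport (P.cs hj)

lemma Patches.cof_le (P : Patches J φ K ℓ) {σ : ℂ → ℝ} {M : ℝ} (hσ : BM σ M) {j : ℤ × ℤ}
    (hj : j ∈ J) : |cof φ σ j| ≤ M * K := by
  have h1 := cell_int_bound hσ.2 j
  have h2 := P.low j hj
  have hK := P.hK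
  have h3 : 0 < ∫ z, φ j z := lt_of_lt_of_le (by positivity) h2
  have hM : 0 ≤ M := (abs_nonneg _).trans (hσ.2 0)
  unfold cof
  rw [abs_div, abs_neg, abs_of_pos h3, div_le_iff₀ h3]
  calc _ ≤ M * (K * (1 / K)) := by rw [mul_one_div_cancel (by positivity)]; simpa using h1
    _ ≤ M * (K * ∫ z, φ j z) := by gcongr
    _ = _ := by ring

lemma cellind_dens {σ : ℂ → ℝ} {M : ℝ} (hσ : BM σ M) (j : ℤ × ℤ) :
    Dens (fun z => (((cell j).indicator σ z : ℝ) : ℂ)) := by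
  refine Dens.of_bound (M := M) (R := ‖corner j‖ + 2)
    (Complex.measurable_ofReal.comp (hσ.1.indicator (cell_meas j))) (fun z => ?_) fun z hz => ?_
  · rw [Complex.norm_real, Real.norm_eq_abs]
    by_cases h : z ∈ cell j
    · rw [indicator_of_mem h]; exact hσ.2 z
    · rw [indicator_of_notMem h]; simpa using (abs_nonneg _).trans (hσ.2 0)
  · have : z ∉ cell j := fun h => by
      have := cell_near h
      have := norm_sub_norm_le z (corner j)
      linarith
    simp [this]

lemma Patches.dn1_dens (P : Patches J φ K ℓ) {σ : ℂ → ℝ} {M : ℝ} (hσ : BM σ M) {j : ℤ × ℤ}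
    (hj : j ∈ J) : Dens (fun z => (dn1 φ σ j z : ℂ)) := by
  have := (cellind_dens hσ j).add ((P.dens hj).smul (cof φ σ j))
  simpa [dn1] using this

/-- Quadratic decay of the field of one corrected cell, since its total mass is zero. -/
lemma Patches.dn1_bound (P : Patches J φ K ℓ) {σ : ℂ → ℝ} {M : ℝ} (hσ : BM σ M) {j : ℤ × ℤ}
    (hj : j ∈ J) (z : ℂ) : ‖Cz (fun z => (dn1 φ σ j z : ℂ)) z‖ ≤
      65 * K ^ 2 * ℓ ^ 2 * M * (1 + ‖z - corner j‖ ^ 2)⁻¹ := by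
  have hK := P.hK
  have hℓ := P.hℓ
  have hM : 0 ≤ M := (abs_nonneg _).trans (hσ.2 0)
  have hc := P.cof_le hσ hj
  have hd := P.dn1_dens hσ hj
  have hd1 := cellind_dens hσ j
  have hb1 : ∀ ζ, ‖(((cell j).indicator σ ζ : ℝ) : ℂ)‖ ≤ M := fun ζ => by
    rw [Complex.norm_real, Real.norm_eq_abs]
    by_cases h : ζ ∈ cell j
    · rw [indicator_of_mem h]; exact hσ.2 ζ
    · rw [indicator_of_notMem h]; simpa using hM
  rcases le_total (‖z - corner j‖) (2 * ℓ) with h | h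
  · have e : Cz (fun z => (dn1 φ σ j z : ℂ)) z = Cz (fun z => (((cell j).indicator σ z : ℝ) : ℂ)) z +
        cof φ σ j * Cz (fun z => (φ j z : ℂ)) z := by
      rw [← Cz_smul, ← Cz_add hd1 ((P.dens hj).smul _)]
      simp [dn1]
    have h1 : ‖Cz (fun z => (((cell j).indicator σ z : ℝ) : ℂ)) z‖ ≤ 6 * 2 * M := by
      refine Cz_bound_ball hd1 (c := corner j) two_pos hb1 (fun ζ hζ => ?_) z
      rw [indicator_of_notMem fun h => hζ (by rw [mem_ball, dist_eq_norm]; exact cell_near h)]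
      simp
    have h2 := P.cz j hj z
    have h3 : ‖(cof φ σ j : ℂ) * Cz (fun z => (φ j z : ℂ)) z‖ ≤ M * K * K := by
      rw [norm_mul, Complex.norm_real, Real.norm_eq_abs]; gcongr
    have h4 : ‖Cz (fun z => (dn1 φ σ j z : ℂ)) z‖ ≤ 13 * K ^ 2 * M := by
      rw [e]
      refine (norm_add_le _ _).trans ?_
      have : M ≤ K ^ 2 * M := le_mul_of_one_le_left hM (by nlinarith)
      nlinarith
    rw [← div_eq_mul_inv, le_div_iff₀ (by positivity)]
    have h5 : 1 + ‖z - corner j‖ ^ 2 ≤ 5 * ℓ ^ 2 := by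
      have : ‖z - corner j‖ ^ 2 ≤ (2 * ℓ) ^ 2 := by gcongr
      nlinarith
    calc _ ≤ 13 * K ^ 2 * M * (5 * ℓ ^ 2) := by gcongr
      _ = _ := by ring
  · have hi : Integrable (fun z => (cell j).indicator σ z) := by
      have h1 := hd1.integrable.re
      simpa using h1
    have h0 : ∫ z, (dn1 φ σ j z : ℂ) = 0 := by
      rw [integral_complex_ofReal]
      have hp : 0 < ∫ z, φ j z := lt_of_lt_of_le (by positivity) (P.low j hj)
      have : ∫ z, dn1 φ σ j z = 0 := by
        unfold dn1
        rw [integral_add hi ((P.int hj).const_mul _), integral_const_mul,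
          integral_indicator (cell_meas j), cof, div_mul_cancel₀ _ hp.ne']
        ring
      rw [this]; simp
    have hL : ∫ ζ, ‖(dn1 φ σ j ζ : ℂ)‖ ≤ 2 * K ^ 2 * M := by
      have h1 : ∫ ζ, ‖(dn1 φ σ j ζ : ℂ)‖ ≤
          ∫ ζ, ((cell j).indicator (fun _ => M) ζ + M * K * φ j ζ) := by
        refine integral_mono hd.integrable.norm ?_ fun ζ => ?_
        · refine Integrable.add ?_ ((P.int hj).const_mul _)
          exact (integrable_indicator_iff (cell_meas j)).2
            (integrableOn_const (by rw [cell_vol]; simp))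
        · simp only [Complex.norm_real, Real.norm_eq_abs, dn1]
          refine (abs_add_le _ _).trans (add_le_add ?_ ?_)
          · by_cases h : ζ ∈ cell j
            · rw [indicator_of_mem h, indicator_of_mem h]; exact hσ.2 ζ
            · rw [indicator_of_notMem h, indicator_of_notMem h]; simp
          · rw [abs_mul, abs_of_nonneg (P.nn j hj ζ)]
            have := P.nn j hj ζ
            gcongr
      refine h1.trans ?_
      rw [integral_add ((integrable_indicator_iff (cell_meas j)).2
            (integrableOn_const (by rw [cell_vol]; simp))) ((P.int hj).const_mul _),
        integral_const_mul, integral_indicator (cell_meas j), setIntegral_const, cell_vol']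
      have h2 : M * K * ∫ z, φ j z ≤ M * K * K := by gcongr; exact P.up j hj
      have : M ≤ K ^ 2 * M := le_mul_of_one_le_left hM (by nlinarith)
      simp only [smul_eq_mul, one_mul]
      nlinarith
    have h3 := Cz_far hd h0 (c := corner j) (z := z) (ℓ := ℓ) (by linarith) (fun ζ hζ => ?_) h hL
    · refine h3.trans ?_
      rw [← div_eq_mul_inv, div_le_div_iff₀ (by nlinarith) (by positivity)]
      have h4 : 1 + ‖z - corner j‖ ^ 2 ≤ 2 * ‖z - corner j‖ ^ 2 := by nlinarith
      calc _ ≤ ℓ * (2 * K ^ 2 * M) * (2 * ‖z - corner j‖ ^ 2) := by gcongr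
        _ = (4 * ℓ) * (K ^ 2 * M * ‖z - corner j‖ ^ 2) := by ring
        _ ≤ (65 * ℓ ^ 2) * (K ^ 2 * M * ‖z - corner j‖ ^ 2) := by
          have : 4 * ℓ ≤ 65 * ℓ ^ 2 := by nlinarith
          exact mul_le_mul_of_nonneg_right this (by positivity)
        _ = _ := by ring
    · by_cases hc : ζ ∈ cell j
      · linarith [cell_near hc]
      · refine P.supp j hj ζ fun h => hζ ?_
        simp [dn1, hc, h]

/-- Bound for the Cauchy transform of the corrected density. -/
lemma Patches.dn_bound (P : Patches J φ K ℓ) {σ : ℂ → ℝ} {M : ℝ} (hσ : BM σ M) {T : ℝ}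
    (hT : 0 ≤ T) (hT2 : Real.log (1 + T ^ 2) ≤ ℓ) (hJ : ∀ j ∈ J, cell j ⊆ ball 0 T) (z : ℂ) :
    ‖Cz (fun z => (dn J φ σ z : ℂ)) z‖ ≤ 2925 * K ^ 2 * ℓ ^ 3 * M := by
  have hK := P.hK
  have hℓ := P.hℓ
  have hM : 0 ≤ M := (abs_nonneg _).trans (hσ.2 0)
  have e : Cz (fun z => (dn J φ σ z : ℂ)) z = ∑ j ∈ J, Cz (fun z => (dn1 φ σ j z : ℂ)) z := by
    rw [← Cz_sum J (fun j hj => P.dn1_dens hσ hj)]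
    simp [dn]
  obtain ⟨hi, hL⟩ := LOG hT z
  have hc : ∀ j ∈ J, (1 + ‖z - corner j‖ ^ 2)⁻¹ ≤ 9 * ∫ ζ in cell j, (1 + ‖z - ζ‖ ^ 2)⁻¹ := by
    intro j hj
    have h1 : ∫ ζ in cell j, (9 * (1 + ‖z - corner j‖ ^ 2))⁻¹ ≤
        ∫ ζ in cell j, (1 + ‖z - ζ‖ ^ 2)⁻¹ := by
      refine setIntegral_mono_on (integrableOn_const (by rw [cell_vol]; simp))
        (hi.mono_set (hJ j hj)) (cell_meas j) fun ζ hζ => ?_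
      refine inv_anti₀ (by positivity) ?_
      have h2 := cell_near hζ
      have h3 := norm_sub_le (z - corner j) (ζ - corner j)
      rw [sub_sub_sub_cancel_right] at h3
      have h4 : ‖z - ζ‖ ^ 2 ≤ (‖z - corner j‖ + 2) ^ 2 := by gcongr; linarith
      nlinarith [sq_nonneg (‖z - corner j‖ - 2)]
    rw [setIntegral_const, cell_vol', smul_eq_mul, one_mul, mul_inv] at h1
    linarith
  have hsum : ∑ j ∈ J, (1 + ‖z - corner j‖ ^ 2)⁻¹ ≤ 45 * ℓ := by
    have h1 : ∑ j ∈ J, ∫ ζ in cell j, (1 + ‖z - ζ‖ ^ 2)⁻¹ ≤ ∫ ζ in ball 0 T, (1 + ‖z - ζ‖ ^ 2)⁻¹ := by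
      rw [← integral_biUnion_finset J (fun j _ => cell_meas j)
        (fun i _ j _ h => cell_disj h) fun j hj => hi.mono_set (hJ j hj)]
      exact setIntegral_mono_set hi (Eventually.of_forall fun ζ => by
        simp only [Pi.zero_apply]; positivity)
        (HasSubset.Subset.eventuallyLE (iUnion₂_subset hJ))
    have h2 : Real.pi * Real.log (1 + T ^ 2) ≤ 4 * ℓ := by
      have : 0 ≤ Real.log (1 + T ^ 2) := Real.log_nonneg (by nlinarith)
      have := Real.pi_le_four
      nlinarith
    calc _ ≤ ∑ j ∈ J, 9 * ∫ ζ in cell j, (1 + ‖z - ζ‖ ^ 2)⁻¹ := Finset.sum_le_sum hc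
      _ = 9 * ∑ j ∈ J, ∫ ζ in cell j, (1 + ‖z - ζ‖ ^ 2)⁻¹ := by rw [Finset.mul_sum]
      _ ≤ 45 * ℓ := by linarith [Real.pi_le_four]
  rw [e]
  calc _ ≤ ∑ j ∈ J, ‖Cz (fun z => (dn1 φ σ j z : ℂ)) z‖ := norm_sum_le _ _
    _ ≤ ∑ j ∈ J, 65 * K ^ 2 * ℓ ^ 2 * M * (1 + ‖z - corner j‖ ^ 2)⁻¹ :=
      Finset.sum_le_sum fun j hj => P.dn1_bound hσ hj z
    _ = 65 * K ^ 2 * ℓ ^ 2 * M * ∑ j ∈ J, (1 + ‖z - corner j‖ ^ 2)⁻¹ := by rw [Finset.mul_sum]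
    _ ≤ 65 * K ^ 2 * ℓ ^ 2 * M * (45 * ℓ) := by gcongr
    _ = _ := by ring

end patches

section patches
variable {J : Finset (ℤ × ℤ)} {φ : ℤ × ℤ → ℂ → ℝ} {K ℓ : ℝ}

lemma Patches.dn_dens (P : Patches J φ K ℓ) {σ : ℂ → ℝ} {M : ℝ} (hσ : BM σ M) :
    Dens (fun z => (dn J φ σ z : ℂ)) := by
  have := Dens.sum J (fun j hj => P.dn1_dens hσ hj)
  simpa [dn] using this

lemma Patches.dn_sub {σ σ' : ℂ → ℝ} {M : ℝ} (hσ : BM σ M)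
    (hσ' : BM σ' M) (z : ℂ) : dn J φ (fun z => σ z - σ' z) z = dn J φ σ z - dn J φ σ' z := by
  have hi : ∀ {σ : ℂ → ℝ}, BM σ M → ∀ j, IntegrableOn σ (cell j) := fun {σ} h j =>
    Measure.integrableOn_of_bounded (M := M) (by rw [cell_vol]; simp)
      h.1.aestronglyMeasurable (Eventually.of_forall h.2)
  unfold dn
  rw [← Finset.sum_sub_distrib]
  refine Finset.sum_congr rfl fun j _ => ?_
  unfold dn1 cof
  rw [integral_sub (hi hσ j) (hi hσ' j)]
  have : (cell j).indicator (fun z => σ z - σ' z) z =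
      (cell j).indicator σ z - (cell j).indicator σ' z := by
    by_cases h : z ∈ cell j <;> simp [h]
  rw [this]; ring

lemma dn_eq (J : Finset (ℤ × ℤ)) (φ : ℤ × ℤ → ℂ → ℝ) (σ : ℂ → ℝ) (z : ℂ) :
    dn J φ σ z = (if idx z ∈ J then σ z else 0) + ∑ j ∈ J, cof φ σ j * φ j z := by
  unfold dn dn1
  rw [Finset.sum_add_distrib]
  congr 1
  have : ∀ j, (cell j).indicator σ z = if idx z = j then σ z else 0 := fun j => by
    simp only [indicator, mem_cell_iff]
  simp only [this]
  simp

/-- Iterates for the equation `4 ∂̄p + 4 |p|² = V` modulo corrections. -/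
noncomputable def itp (J : Finset (ℤ × ℤ)) (φ : ℤ × ℤ → ℂ → ℝ) (Vt : ℂ → ℝ) : ℕ → ℂ → ℂ
  | 0 => fun _ => 0
  | k + 1 => fun z => (1 / 4 : ℝ) * Cz (fun ζ => (dn J φ (fun z => Vt z - 4 * ‖itp J φ Vt k z‖ ^ 2) ζ : ℂ)) z

/-- The iteration gains a factor `1/2` at each step, up to inactive cells and patches. -/
theorem Patches.sys (P : Patches J φ K ℓ) {T : ℝ} (hT : 0 ≤ T) (hT2 : Real.log (1 + T ^ 2) ≤ ℓ)
    (hJ : ∀ j ∈ J, cell j ⊆ ball 0 T) {Vt : ℂ → ℝ} {A δ : ℝ} (hA : 2925 * K ^ 2 * ℓ ^ 3 ≤ A)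
    (hV : BM Vt δ) (hδ : 32 * A ^ 2 * δ ≤ 1) (k : ℕ) :
    ∃ (p : ℂ → ℂ) (q : ℂ → ℝ), Dens (fun z => (q z : ℂ)) ∧
      (∀ z, p z = (1 / 4 : ℝ) * Cz (fun ζ => (q ζ : ℂ)) z) ∧ Continuous p ∧
      (∀ z, ‖p z‖ ≤ 2 * A * δ) ∧
      ∀ z, |Vt z - 4 * ‖p z‖ ^ 2 - q z| ≤
        (if idx z ∈ J then (1 / 2) ^ k else 2 * δ) + ∑ j ∈ J, 2 * δ * K * φ j z := by
  have hK := P.hK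
  have hℓ := P.hℓ
  have hA1 : 1 ≤ A := by
    have h1 : (1:ℝ) ≤ K ^ 2 := one_le_pow₀ hK
    have h2 : (1:ℝ) ≤ ℓ ^ 3 := one_le_pow₀ (by linarith)
    nlinarith [mul_le_mul h1 h2 zero_le_one (by positivity)]
  have hδ0 : 0 ≤ δ := (abs_nonneg _).trans (hV.2 0)
  set p := itp J φ Vt with hp
  have hA2 : A * δ ≤ A ^ 2 * δ := mul_le_mul_of_nonneg_right (by nlinarith) hδ0
  have hσ : ∀ {f : ℂ → ℂ}, Continuous f → (∀ z, ‖f z‖ ≤ 2 * A * δ) →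
      BM (fun z => Vt z - 4 * ‖f z‖ ^ 2) (2 * δ) := by
    intro f hc hb
    refine ⟨hV.1.sub (by fun_prop), fun z => ?_⟩
    have h1 := hV.2 z
    have h2 : ‖f z‖ ^ 2 ≤ (2 * A * δ) ^ 2 := by gcongr; exact hb z
    have h3 : (2 * A * δ) ^ 2 ≤ δ / 4 := by nlinarith
    rw [abs_le] at h1 ⊢
    have := sq_nonneg ‖f z‖
    constructor <;> nlinarith
  have hmain : ∀ k, Continuous (p k) ∧ ∀ z, ‖p k z‖ ≤ 2 * A * δ := by
    intro k
    induction k with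
    | zero => exact ⟨continuous_const, fun z => by simp [hp, itp]; positivity⟩
    | succ k ih =>
      have hs := hσ ih.1 ih.2
      refine ⟨continuous_const.mul (Cz_cont (P.dn_dens hs)), fun z => ?_⟩
      have := P.dn_bound hs hT hT2 hJ z
      change ‖((1 / 4 : ℝ) : ℂ) * Cz _ z‖ ≤ _
      rw [norm_mul, Complex.norm_real, Real.norm_of_nonneg (by norm_num)]
      have h2 : 2925 * K ^ 2 * ℓ ^ 3 * (2 * δ) ≤ A * (2 * δ) := by gcongr
      linarith [norm_nonneg (Cz (fun z => (dn J φ (fun z => Vt z - 4 * ‖p k z‖ ^ 2) z : ℂ)) z)]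
  have hsq : ∀ {a b : ℂ}, ‖a‖ ≤ 2 * A * δ → ‖b‖ ≤ 2 * A * δ →
      |4 * ‖a‖ ^ 2 - 4 * ‖b‖ ^ 2| ≤ 16 * A * δ * ‖a - b‖ := by
    intro a b ha hb
    have h1 := abs_norm_sub_norm_le a b
    have e : 4 * ‖a‖ ^ 2 - 4 * ‖b‖ ^ 2 = 4 * ((‖a‖ + ‖b‖) * (‖a‖ - ‖b‖)) := by ring
    rw [e, abs_mul, abs_mul, abs_of_nonneg (by positivity : 0 ≤ ‖a‖ + ‖b‖), abs_of_pos four_pos]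
    have h2 : (‖a‖ + ‖b‖) * |‖a‖ - ‖b‖| ≤ (2 * A * δ + 2 * A * δ) * ‖a - b‖ := by gcongr
    linarith
  have hdiff : ∀ k z, ‖p (k + 1) z - p k z‖ ≤ (1 / 2) ^ k := by
    intro k
    induction k with
    | zero =>
      intro z
      have h1 := (hmain 1).2 z
      have : p 0 z = 0 := rfl
      rw [this, sub_zero, pow_zero]
      nlinarith
    | succ k ih =>
      intro z
      have hs := hσ (hmain k).1 (hmain k).2
      have hs' := hσ (hmain (k + 1)).1 (hmain (k + 1)).2
      have hbm : BM (fun z => (Vt z - 4 * ‖p (k + 1) z‖ ^ 2) - (Vt z - 4 * ‖p k z‖ ^ 2))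
          (16 * A * δ * (1 / 2) ^ k) := by
        refine ⟨hs'.1.sub hs.1, fun z => ?_⟩
        have h1 := hsq ((hmain (k + 1)).2 z) ((hmain k).2 z)
        change |(Vt z - 4 * ‖p (k + 1) z‖ ^ 2) - (Vt z - 4 * ‖p k z‖ ^ 2)| ≤ _
        rw [show (Vt z - 4 * ‖p (k + 1) z‖ ^ 2) - (Vt z - 4 * ‖p k z‖ ^ 2) =
          -(4 * ‖p (k + 1) z‖ ^ 2 - 4 * ‖p k z‖ ^ 2) by ring, abs_neg]
        refine h1.trans ?_
        gcongr
        exact ih z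
      have hb := P.dn_bound hbm hT hT2 hJ z
      have e : p (k + 1 + 1) z - p (k + 1) z = ((1 / 4 : ℝ) : ℂ) * Cz (fun ζ => (dn J φ
          (fun z => (Vt z - 4 * ‖p (k + 1) z‖ ^ 2) - (Vt z - 4 * ‖p k z‖ ^ 2)) ζ : ℂ)) z := by
        have h1 : p (k + 1 + 1) z = ((1 / 4 : ℝ) : ℂ) *
          Cz (fun ζ => (dn J φ (fun z => Vt z - 4 * ‖p (k + 1) z‖ ^ 2) ζ : ℂ)) z := rfl
        have h2 : p (k + 1) z = ((1 / 4 : ℝ) : ℂ) *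
          Cz (fun ζ => (dn J φ (fun z => Vt z - 4 * ‖p k z‖ ^ 2) ζ : ℂ)) z := rfl
        rw [h1, h2, ← mul_sub, ← Cz_sub (P.dn_dens hs') (P.dn_dens hs)]
        congr 2
        funext ζ
        rw [Patches.dn_sub hs' hs]
        push_cast; rfl
      rw [e, norm_mul, Complex.norm_real, Real.norm_of_nonneg (by norm_num)]
      have h2 : 2925 * K ^ 2 * ℓ ^ 3 * (16 * A * δ * (1 / 2) ^ k) ≤
        A * (16 * A * δ * (1 / 2) ^ k) := by gcongr
      have h3 : A * (16 * A * δ * (1 / 2) ^ k) ≤ 1 / 2 * (1 / 2) ^ k := by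
        have : 0 ≤ (1 / 2 : ℝ) ^ k := by positivity
        nlinarith
      rw [pow_succ]
      linarith [norm_nonneg (Cz (fun ζ => (dn J φ
          (fun z => (Vt z - 4 * ‖p (k + 1) z‖ ^ 2) - (Vt z - 4 * ‖p k z‖ ^ 2)) ζ : ℂ)) z)]
  have hs := hσ (hmain k).1 (hmain k).2
  have hs' := hσ (hmain (k + 1)).1 (hmain (k + 1)).2
  refine ⟨p (k + 1), dn J φ (fun z => Vt z - 4 * ‖p k z‖ ^ 2), P.dn_dens hs, fun z => rfl,
    (hmain (k + 1)).1, (hmain (k + 1)).2, fun z => ?_⟩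
  rw [dn_eq, ← sub_sub]
  refine (abs_sub _ _).trans (add_le_add ?_ ?_)
  · split_ifs with h
    · have h1 := hsq ((hmain (k + 1)).2 z) ((hmain k).2 z)
      rw [show Vt z - 4 * ‖p (k + 1) z‖ ^ 2 - (Vt z - 4 * ‖p k z‖ ^ 2) =
          -(4 * ‖p (k + 1) z‖ ^ 2 - 4 * ‖p k z‖ ^ 2) by ring, abs_neg]
      have h2 := hdiff k z
      have h3 : 16 * A * δ ≤ 1 := by nlinarith
      have := norm_nonneg (p (k + 1) z - p k z)
      nlinarith
    · rw [sub_zero]; exact hs'.2 z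
  · refine (Finset.abs_sum_le_sum_abs _ _).trans (Finset.sum_le_sum fun j hj => ?_)
    rw [abs_mul, abs_of_nonneg (P.nn j hj z)]
    have := P.cof_le hs hj
    have := P.nn j hj z
    gcongr

end patches

/-! ### A smooth cutoff -/

section cutoff

/-- A `C²` function equal to one at depth `≥ 5/2` in `D`, vanishing at depth `≤ 1`, with
gradient bounded by one: a mollified truncated distance function. -/
lemma exists_cutoff (D : Set ℂ) : ∃ χ : ℂ → ℝ, ContDiff ℝ 2 χ ∧ (∀ z, 0 ≤ χ z) ∧ (∀ z, χ z ≤ 1) ∧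
    (∀ z, infDist z Dᶜ ≤ 1 → χ z = 0) ∧ (∀ z, 5 / 2 ≤ infDist z Dᶜ → χ z = 1) ∧
    (∀ z, ‖fderiv ℝ χ z‖ ≤ 1) := by
  set g : ℂ → ℝ := fun z => max 0 (min 1 (infDist z Dᶜ - 5 / 4)) with hg
  have hgl : LipschitzWith 1 g := by
    have h1 : LipschitzWith 1 fun z : ℂ => infDist z Dᶜ - 5 / 4 := by
      refine LipschitzWith.of_dist_le_mul fun x y => ?_
      have := (lipschitz_infDist_pt Dᶜ).dist_le_mul x y
      simpa [Real.dist_eq] using this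
    exact (h1.const_min 1).const_max 0
  let ρ : ContDiffBump (0 : ℂ) := ⟨1 / 8, 1 / 4, by norm_num, by norm_num⟩
  set χ : ℂ → ℝ := fun z => ∫ t, ρ.normed volume t * g (z - t) with hχ
  have hc : Continuous g := hgl.continuous
  have hρi : Integrable (ρ.normed volume) := ρ.integrable_normed
  have hρc : Continuous (ρ.normed (volume : Measure ℂ)) := ρ.contDiff_normed (n := 0) |>.continuous
  have hIntg : ∀ z, Integrable fun t => ρ.normed volume t * g (z - t) := fun z =>
    (hρc.mul (by fun_prop)).integrable_of_hasCompactSupport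
      (ρ.hasCompactSupport_normed.mul_right)
  have hg0 : ∀ z, 0 ≤ g z := fun z => le_max_left _ _
  have hg1 : ∀ z, g z ≤ 1 := fun z => max_le zero_le_one (min_le_left _ _)
  have hloc : ∀ z c, (∀ t ∈ ball (0:ℂ) (1 / 4), g (z - t) = c) → χ z = c := by
    intro z c h
    have e : ∀ t, ρ.normed volume t * g (z - t) = ρ.normed volume t * c := by
      intro t
      by_cases ht : t ∈ ball (0:ℂ) (1 / 4)
      · rw [h t ht]
      · have : ρ.normed volume t = 0 := by
          have := ρ.support_normed_eq (μ := volume)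
          by_contra h0
          exact ht (this ▸ (Function.mem_support.2 h0))
        simp [this]
    simp only [hχ, e]
    rw [integral_mul_const, ρ.integral_normed, one_mul]
  have hd : ∀ z t, |infDist (z - t) Dᶜ - infDist z Dᶜ| ≤ ‖t‖ := by
    intro z t
    have := (lipschitz_infDist_pt Dᶜ).dist_le_mul (z - t) z
    simpa [Real.dist_eq, dist_eq_norm] using this
  have hlip : LipschitzWith 1 χ := by
    refine LipschitzWith.of_dist_le_mul fun x y => ?_
    rw [Real.dist_eq, NNReal.coe_one, one_mul]
    simp only [hχ]
    rw [← integral_sub (hIntg x) (hIntg y)]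
    have := norm_integral_le_of_norm_le (μ := volume)
      (f := fun t => ρ.normed volume t * g (x - t) - ρ.normed volume t * g (y - t))
      (hρi.mul_const (dist x y)) (Eventually.of_forall fun t => ?_)
    · rw [integral_mul_const, ρ.integral_normed, one_mul] at this
      exact this
    · rw [← mul_sub, norm_mul, Real.norm_of_nonneg (ρ.nonneg_normed t)]
      have h2 := hgl.dist_le_mul (x - t) (y - t)
      rw [Real.dist_eq, NNReal.coe_one, one_mul, dist_sub_right] at h2
      exact mul_le_mul_of_nonneg_left h2 (ρ.nonneg_normed t)
  refine ⟨χ, ?_, fun z => integral_nonneg fun t => mul_nonneg (ρ.nonneg_normed t) (hg0 _),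
    fun z => ?_, fun z hz => hloc z 0 fun t ht => ?_, fun z hz => hloc z 1 fun t ht => ?_,
    fun z => by simpa using norm_fderiv_le_of_lipschitz ℝ hlip⟩
  · have := ρ.hasCompactSupport_normed (μ := volume) |>.contDiff_convolution_left
      (n := 2) (ContinuousLinearMap.lsmul ℝ ℝ) ρ.contDiff_normed (hc.locallyIntegrable (μ := volume))
    exact this
  · have h := integral_mono (hIntg z) hρi fun t =>
      mul_le_of_le_one_right (ρ.nonneg_normed t) (hg1 (z - t))
    rwa [ρ.integral_normed] at h
  · have h1 := hd z t
    rw [mem_ball_zero_iff] at ht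
    rw [abs_le] at h1
    exact max_eq_left ((min_le_right _ _).trans (by linarith))
  · have h1 := hd z t
    rw [mem_ball_zero_iff] at ht
    rw [abs_le] at h1
    simp only [hg]
    rw [min_eq_left (by linarith), max_eq_right zero_le_one]

end cutoff

/-! ### Active points and placement of patches -/

section place

/-- Data of the main estimate: `U` satisfies `|ΔU| ≤ δ |U|` on the bounded open set `D`, and the
holomorphic weight exponent `G` is close to the identity. -/
structure Dat (U : ℂ → ℝ) (G : ℂ → ℂ) (D : Set ℂ) (T δ : ℝ) : Prop where
  hU : ContDiff ℝ 2 U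
  hD : IsOpen D
  hDT : D ⊆ ball 0 T
  hT : 1 ≤ T
  hδ : 0 ≤ δ
  hlap : ∀ z ∈ D, |lap U z| ≤ δ * |U z|
  hG : Differentiable ℂ G
  hG1 : ∀ z ∈ D, ∀ z' ∈ D, ‖G z - G z' - (z - z')‖ ≤ (1 / 10) * ‖z - z'‖

/-- The weighted size of `U`. -/
noncomputable def wt (U : ℂ → ℝ) (G : ℂ → ℂ) (z : ℂ) : ℝ := Real.exp (-(G z).re) * |U z|

/-- Points deep inside `D` near which the weighted size does not jump up. -/
def Act (U : ℂ → ℝ) (G : ℂ → ℂ) (D : Set ℂ) (ℓ : ℝ) (z : ℂ) : Prop :=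
  ball z ℓ ⊆ D ∧ U z ≠ 0 ∧ ∀ z' ∈ ball z ℓ, wt U G z' ≤ Real.exp (ℓ / 10) * wt U G z

variable {U : ℂ → ℝ} {G : ℂ → ℂ} {D : Set ℂ} {T δ ℓ : ℝ}

lemma Dat.re_diff (H : Dat U G D T δ) {z z' : ℂ} (hz : z ∈ D) (hz' : z' ∈ D) :
    |(G z).re - (G z').re - (z - z').re| ≤ (1 / 10) * ‖z - z'‖ := by
  have := (Complex.abs_re_le_norm _).trans (H.hG1 z hz z' hz')
  simpa using this

lemma Dat.wt_cont (H : Dat U G D T δ) : Continuous (wt U G) := by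
  have h1 := H.hU.continuous
  have h2 := H.hG.continuous
  unfold wt
  fun_prop

/-- Near an active point there is a point from which the weighted size grows slowly. -/
lemma Dat.slow (H : Dat U G D T δ) (hℓ : 1100 ≤ ℓ) {z : ℂ} (hz : Act U G D ℓ z) :
    ∃ y, ‖y - z‖ ≤ (2 / 5) * ℓ ∧ U y ≠ 0 ∧
      ∀ z' ∈ ball y 100, |U z'| ≤ |U y| * Real.exp ((z' - y).re + 0.35 * ‖z' - y‖) := by
  obtain ⟨hb, hU0, hj⟩ := hz
  have hc : ContinuousOn (fun z' => wt U G z' * Real.exp (-(‖z' - z‖ / 4))) (closedBall z (ℓ / 2)) := by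
    have := H.wt_cont
    fun_prop
  obtain ⟨y, hy, hmax⟩ := (isCompact_closedBall z (ℓ / 2)).exists_isMaxOn
    ⟨z, mem_closedBall_self (by linarith)⟩ hc
  have hw0 : 0 < wt U G z := mul_pos (Real.exp_pos _) (abs_pos.2 hU0)
  rw [mem_closedBall, dist_eq_norm] at hy
  have hyb : y ∈ ball z ℓ := by rw [mem_ball, dist_eq_norm]; linarith
  have h1 : wt U G z ≤ wt U G y * Real.exp (-(‖y - z‖ / 4)) := by
    have := hmax (mem_closedBall_self (by linarith : 0 ≤ ℓ / 2))
    simpa using this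
  have h2 := hj y hyb
  have hyz : ‖y - z‖ ≤ 2 / 5 * ℓ := by
    have h3 : wt U G z * 1 ≤ wt U G z * Real.exp (ℓ / 10 - ‖y - z‖ / 4) := by
      rw [mul_one, sub_eq_add_neg, Real.exp_add]
      nlinarith [Real.exp_pos (-(‖y - z‖ / 4))]
    have h4 := le_of_mul_le_mul_left h3 hw0
    rw [Real.one_le_exp_iff] at h4
    linarith
  have hUy : U y ≠ 0 := by
    intro h
    rw [wt, wt, h] at h1
    simp only [abs_zero, mul_zero, zero_mul] at h1
    rw [wt] at hw0
    linarith
  refine ⟨y, hyz, hUy, fun z' hz' => ?_⟩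
  rw [mem_ball, dist_eq_norm] at hz'
  have h5 : ‖z' - z‖ ≤ ‖z' - y‖ + ‖y - z‖ := by
    simpa using norm_add_le (z' - y) (y - z)
  have h6 : wt U G z' * Real.exp (-(‖z' - z‖ / 4)) ≤ wt U G y * Real.exp (-(‖y - z‖ / 4)) :=
    hmax (by rw [mem_closedBall, dist_eq_norm]; linarith)
  have hz'b : z' ∈ ball z ℓ := by rw [mem_ball, dist_eq_norm]; linarith
  have h7 := H.re_diff (hb hz'b) (hb hyb)
  rw [abs_le] at h7
  have e : |U z'| = Real.exp ((G z').re + ‖z' - z‖ / 4) *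
      (wt U G z' * Real.exp (-(‖z' - z‖ / 4))) := by
    have : Real.exp ((G z').re + ‖z' - z‖ / 4) * Real.exp (-(G z').re) *
        Real.exp (-(‖z' - z‖ / 4)) = 1 := by
      rw [← Real.exp_add, ← Real.exp_add, Real.exp_eq_one_iff]; ring
    rw [wt]
    linear_combination (-|U z'|) * this
  rw [e]
  calc _ ≤ Real.exp ((G z').re + ‖z' - z‖ / 4) * (wt U G y * Real.exp (-(‖y - z‖ / 4))) := by gcongr
    _ = |U y| * Real.exp ((G z').re + ‖z' - z‖ / 4 + (-(G y).re + -(‖y - z‖ / 4))) := by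
      simp only [wt, Real.exp_add]; ring
    _ ≤ _ := by
      refine mul_le_mul_of_nonneg_left (Real.exp_le_exp.2 ?_) (abs_nonneg _)
      have := h7.2
      rw [show (0.35:ℝ) = 7 / 20 by norm_num]
      linarith

open scoped Classical in
/-- A patch system covering all active cells, on whose patches `|U|` is small in mean. The family `J`
of cells does not depend on the smallness parameter `η`. -/
theorem exists_patches : ∃ K ≥ (1:ℝ), ∀ (U : ℂ → ℝ) (G : ℂ → ℂ) (D : Set ℂ) (T δ ℓ : ℝ),
    Dat U G D T δ → 1100 ≤ ℓ → δ ≤ 1 / K → ∃ J : Finset (ℤ × ℤ),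
      (∀ j ∈ J, cell j ⊆ ball 0 T) ∧ (∀ z, Act U G D ℓ z → idx z ∈ J) ∧
      ∀ η > 0, ∃ φ : ℤ × ℤ → ℂ → ℝ, Patches J φ K ℓ ∧
        ∀ j ∈ J, ∃ y, ball y 100 ⊆ D ∧ (∀ z ∉ ball y 100, φ j z = 0) ∧
          (∀ z, |U z| * φ j z ≤ K * |U y|) ∧ ∫ z, |U z| * φ j z ≤ η * |U y| := by
  obtain ⟨K, hK, hp⟩ := patch
  refine ⟨K, hK, fun U G D T δ ℓ H hℓ hδ => ?_⟩
  obtain ⟨n, hn⟩ := exists_nat_gt (T + 1)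
  set J : Finset (ℤ × ℤ) := (Finset.Icc (-(n:ℤ)) n ×ˢ Finset.Icc (-(n:ℤ)) n).filter
    (fun j => ∃ z, Act U G D ℓ z ∧ idx z = j) with hJ
  have hmem : ∀ z, Act U G D ℓ z → idx z ∈ J := by
    intro z hz
    have hzD : z ∈ D := hz.1 (mem_ball_self (by linarith))
    have hzT := H.hDT hzD
    rw [mem_ball_zero_iff] at hzT
    have key : ∀ x : ℝ, |x| ≤ ‖z‖ → -(n:ℤ) ≤ ⌊x⌋ ∧ ⌊x⌋ ≤ (n:ℤ) := by
      intro x hx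
      rw [abs_le] at hx
      constructor
      · rw [Int.le_floor]; push_cast; linarith
      · have : (⌊x⌋:ℝ) ≤ n := (Int.floor_le x).trans (by linarith)
        exact_mod_cast this
    rw [hJ, Finset.mem_filter, Finset.mem_product, Finset.mem_Icc, Finset.mem_Icc]
    exact ⟨⟨key _ (Complex.abs_re_le_norm z), key _ (Complex.abs_im_le_norm z)⟩, z, hz, rfl⟩
  have hJe : ∀ j ∈ J, ∃ z, Act U G D ℓ z ∧ z ∈ cell j := fun j hj => by
    obtain ⟨z, h1, h2⟩ := (Finset.mem_filter.1 hj).2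
    exact ⟨z, h1, mem_cell_iff.2 h2⟩
  refine ⟨J, fun j hj ζ hζ => ?_, hmem, fun η hη => ?_⟩
  · obtain ⟨z, h1, h2⟩ := hJe j hj
    refine H.hDT (h1.1 ?_)
    have a1 := cell_near hζ
    have a2 := cell_near h2
    have := norm_sub_le (ζ - corner j) (z - corner j)
    rw [sub_sub_sub_cancel_right] at this
    rw [mem_ball, dist_eq_norm]; linarith
  · have hex : ∀ j ∈ J, ∃ (φ : ℂ → ℝ) (y : ℂ), (Continuous φ ∧ (∀ z, 0 ≤ φ z) ∧
        (∀ z, φ z ≠ 0 → ‖z - corner j‖ ≤ ℓ / 2) ∧ 1 / K ≤ ∫ z, φ z ∧ ∫ z, φ z ≤ K ∧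
        ∀ z, ‖Cz (fun ζ => (φ ζ : ℂ)) z‖ ≤ K) ∧ ball y 100 ⊆ D ∧ (∀ z ∉ ball y 100, φ z = 0) ∧
          (∀ z, |U z| * φ z ≤ K * |U y|) ∧ ∫ z, |U z| * φ z ≤ η * |U y| := by
      intro j hj
      obtain ⟨z, h1, h2⟩ := hJe j hj
      obtain ⟨y, hy1, hy2, hy3⟩ := H.slow hℓ h1
      have hyD : ball y 100 ⊆ D := by
        refine Subset.trans (ball_subset_ball' ?_) h1.1
        rw [dist_eq_norm]; linarith
      obtain ⟨φ, f1, f2, f3, f4, f5, f6, f7, f8⟩ := hp U y δ H.hU hy2 H.hδ hδ hy3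
        (fun z hz => H.hlap z (hyD hz)) η hη
      refine ⟨φ, y, ⟨f1, f2, fun ζ hζ => ?_, f4, f5, f6⟩, hyD, f3, f7, f8⟩
      have hζy : ζ ∈ ball y 100 := by
        by_contra h
        exact hζ (f3 ζ h)
      rw [mem_ball, dist_eq_norm] at hζy
      have a1 := cell_near h2
      have a2 : ‖ζ - corner j‖ ≤ ‖ζ - y‖ + ‖y - z‖ + ‖z - corner j‖ := by
        have := norm_add₃_le (a := ζ - y) (b := y - z) (c := z - corner j)
        simpa using this
      linarith
    choose! φ y h using hex
    exact ⟨φ, ⟨hK, by linarith, fun j hj => (h j hj).1.1, fun j hj => (h j hj).1.2.1,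
      fun j hj => (h j hj).1.2.2.1, fun j hj => (h j hj).1.2.2.2.1,
      fun j hj => (h j hj).1.2.2.2.2.1, fun j hj => (h j hj).1.2.2.2.2.2⟩,
      fun j hj => ⟨y j, (h j hj).2⟩⟩

end place

/-! ### Representation of the gauge-transformed gradient -/

section combo

/-- Bound for a Cauchy transform whose density is dominated by a constant plus finitely many
functions which are small in mean. -/
lemma Cz_combo {ι : Type*} {f : ℂ → ℂ} (hf : Dens f) {T M L a N : ℝ} (hT : 0 < T) (hM : 0 ≤ M)
    (hs : ∀ ζ, ζ ∉ ball (0:ℂ) T → f ζ = 0) (J : Finset ι) {g : ι → ℂ → ℝ}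
    (hgi : ∀ j ∈ J, Integrable (g j)) (hg0 : ∀ j ∈ J, ∀ ζ, 0 ≤ g j ζ) (hgN : ∀ j ∈ J, ∀ ζ, g j ζ ≤ N)
    (hgL : ∀ j ∈ J, ∫ ζ, g j ζ ≤ L) (ha : 0 < a)
    (hfg : ∀ ζ ∈ ball (0:ℂ) T, ‖f ζ‖ ≤ M + ∑ j ∈ J, g j ζ) (z : ℂ) :
    ‖Cz f z‖ ≤ 3 * T * M + J.card * (2 * a * N + L / a) := by
  have hpi := Real.pi_pos
  set g0 : ℂ → ℝ := (ball (0:ℂ) T).indicator fun _ => M with hg0d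
  have hv : volume (ball (0:ℂ) T) ≠ ⊤ := measure_ball_lt_top.ne
  have hg0i : Integrable g0 :=
    (integrable_indicator_iff measurableSet_ball).2 (integrableOn_const hv)
  have hg0I : ∫ ζ, g0 ζ ≤ Real.pi * T ^ 2 * M := by
    rw [integral_indicator measurableSet_ball, setIntegral_const, Measure.real, Complex.volume_ball]
    simp [ENNReal.toReal_ofReal hT.le]
    apply le_of_eq; ring
  have h00 : ∀ ζ, 0 ≤ g0 ζ := fun ζ => indicator_nonneg (fun _ _ => hM) ζ
  have h0M : ∀ ζ, g0 ζ ≤ M := fun ζ => indicator_le_self' (fun _ _ => hM) ζ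
  obtain ⟨a1, a2⟩ := K1 z hg0i h00 h0M hg0I hT
  have hJ := fun j hj => K1 z (hgi j hj) (hg0 j hj) (hgN j hj) (hgL j hj) ha
  refine (Cz_norm_le f z).trans ?_
  have hle : ∀ ζ, ‖f ζ‖ * ‖z - ζ‖⁻¹ ≤ g0 ζ * ‖z - ζ‖⁻¹ + ∑ j ∈ J, g j ζ * ‖z - ζ‖⁻¹ := by
    intro ζ
    rw [← Finset.sum_mul, ← add_mul]
    refine mul_le_mul_of_nonneg_right ?_ (by positivity)
    by_cases h : ζ ∈ ball (0:ℂ) T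
    · rw [hg0d, indicator_of_mem h]; exact hfg ζ h
    · rw [hs ζ h, norm_zero]
      exact add_nonneg (h00 ζ) (Finset.sum_nonneg fun j hj => hg0 j hj ζ)
  have hsi : Integrable (fun ζ => ∑ j ∈ J, g j ζ * ‖z - ζ‖⁻¹) :=
    integrable_finsetSum J fun j hj => (hJ j hj).1
  have h1 : ∫ ζ, ‖f ζ‖ * ‖z - ζ‖⁻¹ ≤ 3 * T * M * Real.pi + Real.pi * (J.card * (2 * a * N + L / a)) := by
    calc _ ≤ ∫ ζ, (g0 ζ * ‖z - ζ‖⁻¹ + ∑ j ∈ J, g j ζ * ‖z - ζ‖⁻¹) :=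
          integral_mono_of_nonneg (Eventually.of_forall fun ζ => by positivity)
            (a1.add hsi) (Eventually.of_forall hle)
      _ = (∫ ζ, g0 ζ * ‖z - ζ‖⁻¹) + ∑ j ∈ J, ∫ ζ, g j ζ * ‖z - ζ‖⁻¹ := by
          rw [integral_add a1 hsi, integral_finsetSum J fun j hj => (hJ j hj).1]
      _ ≤ 3 * T * M * Real.pi + ∑ j ∈ J, (2 * Real.pi * a * N + L / a) := by
          refine add_le_add (a2.trans (le_of_eq ?_)) (Finset.sum_le_sum fun j hj => (hJ j hj).2)
          field_simp; ring
      _ = 3 * T * M * Real.pi + J.card * (2 * Real.pi * a * N + L / a) := by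
          rw [Finset.sum_const, nsmul_eq_mul]
      _ ≤ _ := by
          rcases J.eq_empty_or_nonempty with h | ⟨j, hj⟩
          · simp [h]
          have hL : 0 ≤ L / a := div_nonneg ((integral_nonneg (hg0 j hj)).trans (hgL j hj)) ha.le
          have : L / a ≤ Real.pi * (L / a) := le_mul_of_one_le_left hL (by linarith [Real.pi_gt_three])
          have : (J.card:ℝ) * (2 * Real.pi * a * N + L / a) ≤
            J.card * (2 * Real.pi * a * N + Real.pi * (L / a)) := by gcongr
          linarith
  calc _ ≤ Real.pi⁻¹ * (3 * T * M * Real.pi + Real.pi * (J.card * (2 * a * N + L / a))) := by gcongr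
    _ = _ := by field_simp

end combo

section repr

/-- The gauge-transformed gradient `2 (∂U - p U)`. -/
noncomputable def QQ (U : ℂ → ℝ) (p : ℂ → ℂ) (z : ℂ) : ℂ := 2 * (dU U z - U z * p z)

/-- The localized, gauge-transformed and weighted gradient is a Cauchy transform with an explicit
density; all terms except the cut-off error and the error in the equation for `p` cancel. -/
lemma QQ_repr {U χ : ℂ → ℝ} {G p α : ℂ → ℂ} {q : ℂ → ℝ} (hU : ContDiff ℝ 2 U)
    (hχ : ContDiff ℝ 2 χ) (hχs : HasCompactSupport χ) (hG : Differentiable ℂ G)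
    (hq : Dens (fun z => (q z : ℂ))) (hp : ∀ z, p z = (1 / 4 : ℝ) * Cz (fun ζ => (q ζ : ℂ)) z)
    (hα : Dens α)
    (hαQ : ∀ ζ, α ζ * (QQ U p ζ * χ ζ) = p ζ * χ ζ * (starRingEnd ℂ) (QQ U p ζ)) (z : ℂ) :
    let m : ℂ → ℂ := fun ζ => Complex.exp (Cz α ζ) * (Complex.exp (-G ζ) *
      (QQ U p ζ * (starRingEnd ℂ) (dU χ ζ) +
        (1 / 2) * (χ ζ * (lap U ζ - q ζ * U ζ - 4 * ‖p ζ‖ ^ 2 * U ζ : ℝ))))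
    Dens m ∧ Complex.exp (Cz α z) * (QQ U p z * (χ z * Complex.exp (-G z))) = Cz m z := by
  intro m
  have hGc : ContDiff ℝ 1 G := hG.contDiff.restrict_scalars ℝ
  have hχ1 : ContDiff ℝ 1 χ := hχ.of_le (by norm_num)
  have hU1 : ContDiff ℝ 1 U := hU.of_le (by norm_num)
  have hχc : ContDiff ℝ 1 (fun z => (χ z : ℂ)) := Complex.ofRealCLM.contDiff.comp hχ1
  have hUc : ContDiff ℝ 1 (fun z => (U z : ℂ)) := Complex.ofRealCLM.contDiff.comp hU1
  have hexp : Differentiable ℂ fun z => Complex.exp (-G z) := hG.neg.cexp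
  have hexpc : ContDiff ℝ 1 fun z => Complex.exp (-G z) := hexp.contDiff.restrict_scalars ℝ
  set X : ℂ → ℂ := fun z => χ z * Complex.exp (-G z) with hX
  have hXc : ContDiff ℝ 1 X := hχc.mul hexpc
  have hXs : HasCompactSupport X :=
    (hχs.comp_left (g := fun x : ℝ => (x : ℂ)) (by simp)).mul_right
  have d1 : ∀ {f : ℂ → ℂ}, ContDiff ℝ 1 f → ∀ z, DifferentiableAt ℝ f z :=
    fun h z => h.differentiable (by simp) z
  have hdX : ∀ z, dbar X z = (starRingEnd ℂ) (dU χ z) * Complex.exp (-G z) := by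
    intro z
    rw [hX, dbar_mul (d1 hχc z) (d1 hexpc z), dbar_holo (hexp z),
      dbar_ofReal (hχ1.differentiable (by simp) z)]
    ring
  have hdUc : ContDiff ℝ 1 (dU U) := dU_contDiff hU
  set f1 : ℂ → ℂ := fun z => dU U z * X z with hf1
  set f2 : ℂ → ℂ := fun z => U z * X z with hf2
  have hf1c : ContDiff ℝ 1 f1 := hdUc.mul hXc
  have hf2c : ContDiff ℝ 1 f2 := hUc.mul hXc
  have hf1s : HasCompactSupport f1 := hXs.mul_left
  have hf2s : HasCompactSupport f2 := hXs.mul_left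
  have df1 : ∀ z, dbar f1 z = (lap U z : ℂ) / 4 * X z + dU U z * dbar X z := fun z => by
    rw [hf1, dbar_mul (d1 hdUc z) (d1 hXc z), dbar_dU hU]
  have df2 : ∀ z, dbar f2 z = (starRingEnd ℂ) (dU U z) * X z + U z * dbar X z := fun z => by
    rw [hf2, dbar_mul (d1 hUc z) (d1 hXc z), dbar_ofReal (hU1.differentiable (by simp) z)]
  have D1 := dbar_dens hf1c hf1s
  have D2 := dbar_dens hf2c hf2s
  have D3 : Dens f2 := Dens.of_cont hf2c.continuous hf2s
  set C := Cz (fun ζ => (q ζ : ℂ)) with hC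
  have hCc : Continuous C := Cz_cont hq
  have D4 : Dens (fun ζ => C ζ * dbar f2 ζ) := D2.mul_cont hCc
  have D5 : Dens (fun ζ => f2 ζ * q ζ) := hq.mul_cont hf2c.continuous
  set k : ℂ → ℂ := fun ζ => 2 * dbar f1 ζ - (1 / 2) * (C ζ * dbar f2 ζ + f2 ζ * q ζ) with hk
  have Dk : Dens k := (D1.smul 2).sub ((D4.add D5).smul (1 / 2))
  have hQX : ∀ z, QQ U p z * X z = Cz k z := by
    intro z
    rw [hk, Cz_sub (D1.smul 2) ((D4.add D5).smul (1 / 2)), Cz_smul, Cz_smul]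
    have e : Cz (fun ζ => C ζ * dbar f2 ζ + f2 ζ * q ζ) z = f2 z * C z := by
      rw [pompeiu hf2c hf2s z, Cz_mul D2 hq]
      congr 1
      funext ζ
      rw [← pompeiu hf2c hf2s ζ]
      ring
    rw [e, ← pompeiu hf1c hf1s z, QQ, hp]
    simp only [hf1, hf2, ← hC]
    push_cast
    ring
  have hm : m = fun ζ => Complex.exp (Cz α ζ) * (k ζ + α ζ * Cz k ζ) := by
    funext ζ
    rw [← hQX]
    have h1 : α ζ * (QQ U p ζ * X ζ) = p ζ * X ζ * (starRingEnd ℂ) (QQ U p ζ) := by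
      simp only [hX]
      linear_combination (Complex.exp (-G ζ)) * hαQ ζ
    rw [h1]
    simp only [m, hk]
    congr 1
    rw [df1, df2, hdX]
    have h2 : C ζ = 4 * p ζ := by rw [hp]; push_cast; ring
    have h3 : (((‖p ζ‖ ^ 2 : ℝ)) : ℂ) = p ζ * (starRingEnd ℂ) (p ζ) := by
      rw [Complex.mul_conj, Complex.normSq_eq_norm_sq]
    have h4 : (starRingEnd ℂ) (QQ U p ζ) =
        2 * ((starRingEnd ℂ) (dU U ζ) - U ζ * (starRingEnd ℂ) (p ζ)) := by
      simp only [QQ, map_mul, map_sub, Complex.conj_ofReal]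
      rw [Complex.conj_ofNat]
    rw [h2, h4]
    push_cast at h3 ⊢
    rw [h3]
    simp only [QQ, hX, hf2]
    ring
  constructor
  · rw [hm]
    have h1 : Dens (fun ζ => k ζ + Cz k ζ * α ζ) := Dk.add (hα.mul_cont (Cz_cont Dk))
    have h2 := h1.mul_cont (g := fun ζ => Complex.exp (Cz α ζ))
      (Complex.continuous_exp.comp (Cz_cont hα))
    simpa [mul_comm] using h2
  · rw [hm, ← Cz_exp_mul hα Dk z, ← hQX]

end repr

/-! ### The gauge weight and the boundary layer -/

section gauge

/-- The weight `e^{-Re G}` corrected by the gauge factor, normalized at `zs`. -/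
noncomputable def gw (G ω : ℂ → ℂ) (zs z : ℂ) : ℝ :=
  Real.exp (-(G z).re + (ω z - ω zs).re)

lemma gw_pos (G ω : ℂ → ℂ) (zs z : ℂ) : 0 < gw G ω zs z := Real.exp_pos _

/-- The corrected weight varies by at most an exponential factor, and it decreases to the right. -/
lemma Dat.gw_le {U : ℂ → ℝ} {G ω : ℂ → ℂ} {D : Set ℂ} {T δ κ : ℝ} (H : Dat U G D T δ)
    (hω : ∀ z z', ‖ω z - ω z'‖ ≤ κ * (‖z - z'‖ + 4)) (zs : ℂ) {z z' : ℂ} (hz : z ∈ D)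
    (hz' : z' ∈ D) : gw G ω zs z ≤
      Real.exp (-(z - z').re + (1 / 10) * ‖z - z'‖ + κ * (‖z - z'‖ + 4)) * gw G ω zs z' := by
  unfold gw
  rw [← Real.exp_add, Real.exp_le_exp]
  have h1 := H.re_diff hz hz'
  have h2 := (Complex.re_le_norm (ω z - ω z')).trans (hω z z')
  rw [abs_le] at h1
  simp only [Complex.sub_re] at *
  linarith [h1.1]

lemma gw_mul (U : ℂ → ℝ) (G ω : ℂ → ℂ) (zs z : ℂ) :
    gw G ω zs z * |U z| = wt U G z * Real.exp ((ω z - ω zs).re) := by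
  unfold gw wt
  rw [Real.exp_add]; ring

lemma log_le_of_T {T ℓ : ℝ} (hℓ : 100 ≤ ℓ) (hT : 1 ≤ T) (h : T ≤ Real.exp (ℓ / 20)) :
    Real.log (1 + T ^ 2) ≤ ℓ := by
  rw [Real.log_le_iff_le_exp (by positivity)]
  have h1 : T ^ 2 ≤ Real.exp (ℓ / 10) := by
    calc T ^ 2 ≤ Real.exp (ℓ / 20) ^ 2 := by gcongr
      _ = _ := by rw [← Real.exp_nat_mul]; congr 1; push_cast; ring
  have h2 : 1 ≤ Real.exp (ℓ / 10) := Real.one_le_exp (by linarith)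
  have h3 : 2 ≤ Real.exp (9 * ℓ / 10) := by
    have := Real.add_one_le_exp (9 * ℓ / 10); linarith
  calc 1 + T ^ 2 ≤ 2 * Real.exp (ℓ / 10) := by linarith
    _ ≤ Real.exp (9 * ℓ / 10) * Real.exp (ℓ / 10) := by gcongr
    _ = Real.exp ℓ := by rw [← Real.exp_add]; congr 1; ring

/-- Arithmetic consequences of the smallness of `δ`. -/
lemma small_consts {K ℓ δ κ : ℝ} (hK : 1 ≤ K) (hℓ : 1 ≤ ℓ) (hδ : 0 ≤ δ) (hκ : κ ≤ 1 / 100)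
    (h : 10 ^ 10 * K ^ 4 * δ * ℓ ^ 6 ≤ κ) :
    δ ≤ 1 / K ∧ 32 * (2925 * K ^ 2 * ℓ ^ 3) ^ 2 * δ ≤ 1 ∧
      2 * (2925 * K ^ 2 * ℓ ^ 3) * δ ≤ 1 / 100 ∧
      24 * (1 + ℓ) * (2 * (2925 * K ^ 2 * ℓ ^ 3) * δ) ≤ κ := by
  have k1 : (1:ℝ) ≤ K ^ 2 := one_le_pow₀ hK
  have k2 : K ^ 2 ≤ K ^ 4 := pow_le_pow_right₀ hK (by norm_num)
  have k3 : K ≤ K ^ 4 := by simpa using pow_le_pow_right₀ hK (by norm_num : 1 ≤ 4)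
  have l1 : (1:ℝ) ≤ ℓ ^ 6 := one_le_pow₀ hℓ
  have l2 : ℓ ^ 3 ≤ ℓ ^ 6 := pow_le_pow_right₀ hℓ (by norm_num)
  have l3 : ℓ ^ 4 ≤ ℓ ^ 6 := pow_le_pow_right₀ hℓ (by norm_num)
  set x := K ^ 4 * δ * ℓ ^ 6 with hx
  have hx1 : 10 ^ 10 * x ≤ κ := by rw [hx]; linarith
  have a1 : K * δ ≤ x := by
    calc K * δ = K * δ * 1 := by ring
      _ ≤ K ^ 4 * δ * ℓ ^ 6 := by gcongr
  have a2 : K ^ 2 * ℓ ^ 3 * δ ≤ x := by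
    calc K ^ 2 * ℓ ^ 3 * δ ≤ K ^ 4 * ℓ ^ 6 * δ := by gcongr
      _ = x := by rw [hx]; ring
  have a3 : K ^ 2 * ℓ ^ 4 * δ ≤ x := by
    calc K ^ 2 * ℓ ^ 4 * δ ≤ K ^ 4 * ℓ ^ 6 * δ := by gcongr
      _ = x := by rw [hx]; ring
  have x0 : 0 ≤ x := by positivity
  refine ⟨?_, ?_, ?_, ?_⟩
  · rw [le_div_iff₀ (by linarith)]; nlinarith
  · calc _ = 32 * 2925 ^ 2 * x := by rw [hx]; ring
      _ ≤ 1 := by nlinarith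
  · calc _ = 5850 * (K ^ 2 * ℓ ^ 3 * δ) := by ring
      _ ≤ _ := by nlinarith
  · calc _ = 140400 * (K ^ 2 * ℓ ^ 3 * δ) + 140400 * (K ^ 2 * ℓ ^ 4 * δ) := by ring
      _ ≤ _ := by nlinarith

end gauge

section gauge

variable {U : ℂ → ℝ} {G : ℂ → ℂ} {D : Set ℂ} {T δ ℓ κ B : ℝ} {zs : ℂ}

/-- The boundary-layer hypothesis: the weighted size of `U` is small near the boundary of `D`. -/
structure Zone (U : ℂ → ℝ) (G : ℂ → ℂ) (D : Set ℂ) (ℓ κ B : ℝ) (zs : ℂ) : Prop where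
  hκ0 : 0 ≤ κ
  hκ : κ ≤ 1 / 100
  hB : 0 ≤ B
  hzs : zs ∈ D
  zone : ∀ z ∈ D, infDist z Dᶜ < ℓ → wt U G z ≤ B * Real.exp (-(κ * ‖z - zs‖))

/-- The decay allowed for in the boundary layer compensates the gauge factor. -/
lemma Zone.gw (Z : Zone U G D ℓ κ B zs) {ω : ℂ → ℂ}
    (hω : ∀ z z', ‖ω z - ω z'‖ ≤ κ * (‖z - z'‖ + 4)) {z : ℂ} (hz : z ∈ D)
    (hd : infDist z Dᶜ < ℓ) : gw G ω zs z * |U z| ≤ 2 * B := by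
  rw [gw_mul]
  have h1 := Z.zone z hz hd
  have h2 := (Complex.re_le_norm (ω z - ω zs)).trans (hω z zs)
  have h3 : Real.exp (κ * 4) ≤ 2 := by
    calc Real.exp (κ * 4) ≤ Real.exp (1 / 2) := Real.exp_le_exp.2 (by linarith [Z.hκ])
      _ ≤ 2 := by
        have := Real.exp_one_lt_d9
        have h4 : Real.exp (1 / 2) ^ 2 = Real.exp 1 := by
          rw [← Real.exp_nat_mul]; norm_num
        nlinarith [Real.exp_pos (1 / 2)]
  have hB := Z.hB
  calc _ ≤ B * Real.exp (-(κ * ‖z - zs‖)) * Real.exp (κ * (‖z - zs‖ + 4)) := by gcongr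
    _ = B * Real.exp (κ * 4) := by rw [mul_assoc, ← Real.exp_add]; congr 2; ring
    _ ≤ B * 2 := by gcongr
    _ = _ := by ring

lemma mem_of_infDist_pos {z : ℂ} (h : 0 < infDist z Dᶜ) : z ∈ D := by
  by_contra hz
  rw [infDist_zero_of_mem (show z ∈ Dᶜ from hz)] at h
  exact lt_irrefl _ h

lemma ball_sub_of_infDist {z : ℂ} {r : ℝ} (h : r ≤ infDist z Dᶜ) : ball z r ⊆ D :=
  (ball_subset_ball h).trans ball_infDist_compl_subset

/-- Gradient bound inside the boundary layer. -/
lemma Dat.Q_zone (H : Dat U G D T δ) (Z : Zone U G D ℓ κ B zs) (hδ : δ ≤ 1) (hℓ : 100 ≤ ℓ)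
    {ω p : ℂ → ℂ} (hω : ∀ z z', ‖ω z - ω z'‖ ≤ κ * (‖z - z'‖ + 4)) (hp : ∀ z, ‖p z‖ ≤ 1 / 100)
    {z : ℂ} (h1 : 1 ≤ infDist z Dᶜ) (h2 : infDist z Dᶜ ≤ 5 / 2) :
    gw G ω zs z * ‖QQ U p z‖ ≤ 330 * B := by
  have hzD : z ∈ D := mem_of_infDist_pos (by linarith)
  have hb := ball_sub_of_infDist h1
  have hg := gw_pos G ω zs z
  have hB := Z.hB
  have hU : ∀ w ∈ ball z 1, |U w| ≤ 8 * B / gw G ω zs z := by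
    intro w hw
    have hwD := hb hw
    rw [mem_ball, dist_comm, dist_eq_norm] at hw
    have h3 : infDist w Dᶜ < ℓ := by
      have := infDist_le_infDist_add_dist (s := Dᶜ) (x := w) (y := z)
      rw [dist_comm, dist_eq_norm] at this
      linarith
    have h4 := Z.gw hω hwD h3
    have h5 := H.gw_le hω zs hzD hwD
    have h6 : Real.exp (-(z - w).re + (1 / 10) * ‖z - w‖ + κ * (‖z - w‖ + 4)) ≤ 4 := by
      have a1 := (abs_le.1 (Complex.abs_re_le_norm (z - w))).1
      have a2 : κ * (‖z - w‖ + 4) ≤ 1 / 100 * (1 + 4) := by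
        have := Z.hκ; gcongr
      calc _ ≤ Real.exp (1.2) := Real.exp_le_exp.2 (by rw [show (1.2:ℝ) = 6 / 5 by norm_num]; linarith)
        _ ≤ 4 := by
          have := Real.exp_one_lt_d9
          have h7 : Real.exp 1.2 ^ 5 = Real.exp 1 ^ 6 := by
            rw [← Real.exp_nat_mul, ← Real.exp_nat_mul]; norm_num
          have h8 : Real.exp 1 ^ 6 ≤ 2.72 ^ 6 := by gcongr; linarith
          by_contra hc
          push Not at hc
          have : (4:ℝ) ^ 5 < Real.exp 1.2 ^ 5 := by gcongr
          norm_num at h8 this h7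
          linarith
    rw [le_div_iff₀ hg]
    calc |U w| * gw G ω zs z ≤ |U w| * (4 * gw G ω zs w) := by
          refine mul_le_mul_of_nonneg_left (h5.trans ?_) (abs_nonneg _)
          exact mul_le_mul_of_nonneg_right h6 (gw_pos _ _ _ _).le
      _ = 4 * (gw G ω zs w * |U w|) := by ring
      _ ≤ _ := by linarith
  have hdU := grad_est H.hU hU (fun w hw => by
    refine (H.hlap w (hb hw)).trans (le_trans ?_ (hU w hw))
    exact mul_le_of_le_one_left (abs_nonneg _) hδ)
  have hUz := Z.gw hω hzD (by linarith)
  have e : gw G ω zs z * ‖QQ U p z‖ ≤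
      2 * (gw G ω zs z * ‖dU U z‖ + gw G ω zs z * |U z| * ‖p z‖) := by
    unfold QQ
    rw [norm_mul, Complex.norm_ofNat]
    have := norm_sub_le (dU U z) (U z * p z)
    rw [norm_mul, Complex.norm_real, Real.norm_eq_abs] at this
    nlinarith
  have e1 : gw G ω zs z * ‖dU U z‖ ≤ 160 * B := by
    calc _ ≤ gw G ω zs z * (20 * (8 * B / gw G ω zs z)) := by gcongr
      _ = _ := by field_simp; ring
  have e2 : gw G ω zs z * |U z| * ‖p z‖ ≤ 2 * B * (1 / 100) := by gcongr; exact hp z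
  linarith

/-- Weighted bound at points outside the active cells. -/
lemma Dat.inactive (H : Dat U G D T δ) (Z : Zone U G D ℓ κ B zs) (hℓ : 100 ≤ ℓ)
    {ω : ℂ → ℂ} (hω : ∀ z z', ‖ω z - ω z'‖ ≤ κ * (‖z - z'‖ + 4)) {S : ℝ} (hS0 : 0 ≤ S)
    (hS : ∀ z ∈ D, gw G ω zs z * |U z| ≤ S) {z : ℂ} (hz : z ∈ D) (hA : ¬ Act U G D ℓ z) :
    gw G ω zs z * |U z| ≤ 2 * B + Real.exp (1 - 0.09 * ℓ) * S := by
  have hB := Z.hB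
  rcases lt_or_ge (infDist z Dᶜ) ℓ with h | h
  · have := Z.gw hω hz h
    have : 0 ≤ Real.exp (1 - 0.09 * ℓ) * S := by positivity
    linarith
  by_cases hU : U z = 0
  · rw [hU, abs_zero, mul_zero]; positivity
  have hb := ball_sub_of_infDist h
  have : ∃ z' ∈ ball z ℓ, Real.exp (ℓ / 10) * wt U G z < wt U G z' := by
    by_contra hc
    push Not at hc
    exact hA ⟨hb, hU, hc⟩
  obtain ⟨w, hw, h1⟩ := this
  have hwD := hb hw
  rw [mem_ball, dist_comm, dist_eq_norm] at hw
  have h2 := hS w hwD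
  have h3 := (Complex.re_le_norm (ω z - ω w)).trans (hω z w)
  have h4 : κ * (‖z - w‖ + 4) ≤ 1 / 100 * (ℓ + 4) := by
    have := Z.hκ; gcongr
  have h5 : gw G ω zs z * |U z| ≤ Real.exp (1 - 0.09 * ℓ) * (gw G ω zs w * |U w|) := by
    rw [gw_mul, gw_mul]
    have h6 : wt U G z ≤ Real.exp (-(ℓ / 10)) * wt U G w := by
      rw [Real.exp_neg, inv_mul_eq_div, le_div_iff₀ (Real.exp_pos _)]; linarith
    calc _ ≤ Real.exp (-(ℓ / 10)) * wt U G w * Real.exp ((ω z - ω zs).re) := by gcongr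
      _ = Real.exp (-(ℓ / 10) + (ω z - ω w).re) * (wt U G w * Real.exp ((ω w - ω zs).re)) := by
        have : (ω z - ω zs).re = (ω z - ω w).re + (ω w - ω zs).re := by
          simp only [Complex.sub_re]; ring
        rw [this, Real.exp_add, Real.exp_add]; ring
      _ ≤ _ := by
        refine mul_le_mul_of_nonneg_right (Real.exp_le_exp.2 ?_)
          (mul_nonneg (mul_nonneg (Real.exp_pos _).le (abs_nonneg _)) (Real.exp_pos _).le)
        norm_num
        norm_num at h4
        simp only [Complex.sub_re] at h3
        linarith
  have : Real.exp (1 - 0.09 * ℓ) * (gw G ω zs w * |U w|) ≤ Real.exp (1 - 0.09 * ℓ) * S := by gcongr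
  linarith

end gauge

/-! ### Existence of the gauge -/

section gauge

lemma dU_zero_of_eventually {χ : ℂ → ℝ} {z : ℂ} {c : ℝ} (h : ∀ᶠ w in 𝓝 z, χ w = c) :
    dU χ z = 0 := by
  have h1 : χ =ᶠ[𝓝 z] fun _ => c := h
  have h2 : fderiv ℝ χ z = 0 := by rw [h1.fderiv_eq]; simp
  have := norm_dU_le χ z
  rw [h2, norm_zero] at this
  exact norm_le_zero_iff.1 this

lemma exists_small (C : ℝ) (hC : 0 ≤ C) : ∃ a > 0, C * a ≤ 1 / 1000 ∧ a ≤ 1 := by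
  refine ⟨1 / (1000 * (C + 1)), by positivity, ?_, ?_⟩
  · rw [mul_one_div, div_le_div_iff₀ (by positivity) (by norm_num)]; linarith
  · rw [div_le_one (by positivity)]; linarith

set_option maxHeartbeats 2000000 in
/-- Existence of a gauge in which the weighted gradient is controlled by the boundary layer, up to
a small multiple of the supremum of the weighted function. -/
theorem exists_gauge : ∃ C0 ≥ (1100:ℝ), ∀ (U : ℂ → ℝ) (G : ℂ → ℂ) (D : Set ℂ) (T δ ℓ κ B : ℝ) (zs : ℂ),
    Dat U G D T δ → Zone U G D ℓ κ B zs → C0 ≤ ℓ → C0 * δ * ℓ ^ 6 ≤ κ → T ≤ Real.exp (ℓ / 20) →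
    ∃ p ω : ℂ → ℂ, (∀ z, ‖p z‖ ≤ 1 / 100) ∧ Continuous ω ∧
      (∀ z z', ‖ω z - ω z'‖ ≤ κ * (‖z - z'‖ + 4)) ∧
      ∀ S, 0 ≤ S → (∀ z ∈ D, gw G ω zs z * |U z| ≤ S) →
        ∀ z ∈ D, 5 / 2 ≤ infDist z Dᶜ → gw G ω zs z * ‖QQ U p z‖ ≤ 1000 * T * B + 1 / 100 * S := by
  obtain ⟨K, hK, hpat⟩ := exists_patches
  have hK4 : (1:ℝ) ≤ K ^ 4 := one_le_pow₀ hK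
  refine ⟨10 ^ 10 * K ^ 4, by nlinarith, fun U G D T δ ℓ κ B zs H Z hℓC hδκ hTℓ => ?_⟩
  have hℓ : (10:ℝ) ^ 10 ≤ ℓ := by nlinarith
  have hδ0 := H.hδ
  have hκ := Z.hκ
  have hκ0 := Z.hκ0
  have hB := Z.hB
  have hT1 := H.hT
  obtain ⟨c1, c2, c3, c4⟩ := small_consts hK (by linarith) hδ0 hκ hδκ
  have hδ1 : δ ≤ 1 := c1.trans (by rw [div_le_one (by linarith)]; exact hK)
  have hlog := log_le_of_T (by linarith) hT1 hTℓ
  obtain ⟨J, hJT, hJA, hJφ⟩ := hpat U G D T δ ℓ H (by linarith) c1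
  -- `E` absorbs the variation of the weight over a disc of radius 100; `a` and `η = a²` may depend
  -- on the number of cells, since `J` was fixed before them, and the iteration step `k` depends on `T`
  set E := Real.exp 112 with hE
  have hE0 : 0 < E := Real.exp_pos _
  obtain ⟨a, ha, ha1, ha2⟩ := exists_small (J.card * (3 * K * E)) (by positivity)
  obtain ⟨φ, P, hφ⟩ := hJφ (a ^ 2) (by positivity)
  obtain ⟨b, hb, hb1, -⟩ := exists_small (3 * T) (by positivity)
  obtain ⟨k, hk⟩ := exists_pow_lt_of_lt_one hb (by norm_num : (1 / 2 : ℝ) < 1)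
  -- the potential, extended by zero
  have hUc := H.hU.continuous
  set Vt : ℂ → ℝ := D.indicator fun z => lap U z / U z with hVt
  have hV : BM Vt δ := by
    refine ⟨((lap_cont H.hU).measurable.div hUc.measurable).indicator H.hD.measurableSet,
      fun z => ?_⟩
    by_cases hz : z ∈ D
    · rw [hVt, indicator_of_mem hz, abs_div]
      exact div_le_of_le_mul₀ (abs_nonneg _) hδ0 (H.hlap z hz)
    · rw [hVt, indicator_of_notMem hz, abs_zero]; exact hδ0
  have hVU : ∀ z ∈ D, lap U z = Vt z * U z := by
    intro z hz
    rw [hVt, indicator_of_mem hz]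
    by_cases h0 : U z = 0
    · have := H.hlap z hz
      rw [h0, abs_zero, mul_zero] at this
      rw [abs_nonpos_iff.1 this, h0, mul_zero]
    · rw [div_mul_cancel₀ _ h0]
  obtain ⟨p, q, hq, hp, hpc, hpb, hpE⟩ := P.sys (by linarith) hlog hJT le_rfl hV c2 k
  have hp1 : ∀ z, ‖p z‖ ≤ 1 / 100 := fun z => (hpb z).trans c3
  set Q := QQ U p with hQ
  have hQc : Continuous Q := by
    have := dU_cont (H.hU.of_le (by norm_num) : ContDiff ℝ 1 U)
    unfold Q QQ; fun_prop
  -- the gauge exponent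
  set α : ℂ → ℂ := D.indicator fun z => p z * (starRingEnd ℂ) (Q z) / Q z with hα
  have hαb : ∀ z, ‖α z‖ ≤ 2 * (2925 * K ^ 2 * ℓ ^ 3) * δ := by
    intro z
    by_cases hz : z ∈ D
    · rw [hα, indicator_of_mem hz, norm_div, norm_mul, RCLike.norm_conj]
      exact (div_le_of_le_mul₀ (norm_nonneg _) (norm_nonneg _) le_rfl).trans (hpb z)
    · rw [hα, indicator_of_notMem hz, norm_zero]; positivity
  have hαs : ∀ z, z ∉ ball (0:ℂ) T → α z = 0 := fun z hz =>
    indicator_of_notMem (fun h => hz (H.hDT h)) _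
  have hαd : Dens α := by
    refine Dens.of_bound (M := 2 * (2925 * K ^ 2 * ℓ ^ 3) * δ) (R := T) ?_ hαb fun z hz => ?_
    · refine Measurable.indicator ?_ H.hD.measurableSet
      have : Measurable fun z => (starRingEnd ℂ) (Q z) :=
        (Complex.continuous_conj.comp hQc).measurable
      exact (hpc.measurable.mul this).div hQc.measurable
    · exact hαs z (by rw [mem_ball_zero_iff]; linarith)
  set ω := Cz α with hω
  have hωL : ∀ z z', ‖ω z - ω z'‖ ≤ κ * (‖z - z'‖ + 4) := by
    intro z z'
    refine (Cz_logLip hαd hT1 hαb hαs z z').trans ?_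
    refine mul_le_mul_of_nonneg_right (le_trans ?_ c4) (by positivity)
    have : 0 ≤ 2 * (2925 * K ^ 2 * ℓ ^ 3) * δ := by positivity
    gcongr
  refine ⟨p, ω, hp1, Cz_cont hαd, hωL, fun S hS0 hS z hz hz2 => ?_⟩
  obtain ⟨χ, χc, χ0, χ1, χz, χo, χg⟩ := exists_cutoff D
  have hχD : ∀ ζ, ζ ∉ D → χ ζ = 0 := fun ζ h =>
    χz ζ (by rw [infDist_zero_of_mem (show ζ ∈ Dᶜ from h)]; exact zero_le_one)
  have hdc : Continuous fun ζ : ℂ => infDist ζ Dᶜ := continuous_infDist_pt _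
  have hdχ1 : ∀ ζ, infDist ζ Dᶜ < 1 → dU χ ζ = 0 := fun ζ h =>
    dU_zero_of_eventually (((hdc.tendsto ζ).eventually_lt_const h).mono fun w hw => χz w hw.le)
  have hdχ2 : ∀ ζ, 5 / 2 < infDist ζ Dᶜ → dU χ ζ = 0 := fun ζ h =>
    dU_zero_of_eventually (((hdc.tendsto ζ).eventually_const_lt h).mono fun w hw => χo w hw.le)
  have hχs : HasCompactSupport χ := by
    refine HasCompactSupport.intro (isCompact_closedBall (0:ℂ) T) fun ζ hζ => hχD ζ fun h => hζ ?_
    exact ball_subset_closedBall (H.hDT h)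
  have hαQ : ∀ ζ, α ζ * (Q ζ * χ ζ) = p ζ * χ ζ * (starRingEnd ℂ) (Q ζ) := by
    intro ζ
    by_cases hζ : ζ ∈ D
    · rw [hα, indicator_of_mem hζ]
      by_cases h0 : Q ζ = 0
      · simp [h0]
      · field_simp
    · rw [hχD ζ hζ]; simp
  obtain ⟨hm, hrep⟩ := QQ_repr H.hU χc hχs H.hG hq hp hαd hαQ z
  set m : ℂ → ℂ := fun ζ => Complex.exp (Cz α ζ) * (Complex.exp (-G ζ) *
      (Q ζ * (starRingEnd ℂ) (dU χ ζ) +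
        (1 / 2) * (χ ζ * (lap U ζ - q ζ * U ζ - 4 * ‖p ζ‖ ^ 2 * U ζ : ℝ)))) with hmd
  -- pointwise bound for the density
  set cs := Real.exp (-(ω zs).re) with hcs
  have hcs0 : 0 < cs := Real.exp_pos _
  have hgwe : ∀ ζ, cs * (‖Complex.exp (ω ζ)‖ * ‖Complex.exp (-G ζ)‖) = gw G ω zs ζ := by
    intro ζ
    rw [Complex.norm_exp, Complex.norm_exp, hcs, gw, ← Real.exp_add, ← Real.exp_add]
    congr 1
    simp only [Complex.sub_re, Complex.neg_re]; ring
  -- on each patch the weight is frozen at the centre `y j`, at the cost of the factor `E`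
  choose! y hy1 hy2 hy3 hy4 using hφ
  set g : ℤ × ℤ → ℂ → ℝ := fun j ζ => E * gw G ω zs (y j) * (|U ζ| * φ j ζ) with hg
  have hyD : ∀ j ∈ J, y j ∈ D := fun j hj => hy1 j hj (mem_ball_self (by norm_num))
  have hg0 : ∀ j ∈ J, ∀ ζ, 0 ≤ g j ζ := fun j hj ζ => by
    have := P.nn j hj ζ
    have := gw_pos G ω zs (y j)
    positivity
  have hgi : ∀ j ∈ J, Integrable (g j) := fun j hj => by
    have := P.cont j hj
    refine Continuous.integrable_of_hasCompactSupport (by fun_prop) ?_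
    exact ((P.cs hj).mul_left).mul_left
  have hgN : ∀ j ∈ J, ∀ ζ, g j ζ ≤ E * K * S := fun j hj ζ => by
    have h1 := hS _ (hyD j hj)
    have := gw_pos G ω zs (y j)
    calc g j ζ ≤ E * gw G ω zs (y j) * (K * |U (y j)|) := by
          exact mul_le_mul_of_nonneg_left (hy3 j hj ζ) (by positivity)
      _ = E * K * (gw G ω zs (y j) * |U (y j)|) := by ring
      _ ≤ _ := by gcongr
  have hgL : ∀ j ∈ J, ∫ ζ, g j ζ ≤ E * a ^ 2 * S := fun j hj => by
    have h1 := hS _ (hyD j hj)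
    have := gw_pos G ω zs (y j)
    simp only [hg]
    rw [integral_const_mul]
    calc _ ≤ E * gw G ω zs (y j) * (a ^ 2 * |U (y j)|) := by gcongr; exact hy4 j hj
      _ = E * a ^ 2 * (gw G ω zs (y j) * |U (y j)|) := by ring
      _ ≤ _ := by gcongr
  have hgw : ∀ j ∈ J, ∀ ζ, gw G ω zs ζ * |U ζ| * φ j ζ ≤ g j ζ := by
    intro j hj ζ
    by_cases hζ : ζ ∈ ball (y j) 100
    · have h1 := H.gw_le hωL zs (hy1 j hj hζ) (hyD j hj)
      have h2 := P.nn j hj ζ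
      have h3 := gw_pos G ω zs (y j)
      rw [mem_ball, dist_eq_norm] at hζ
      have h4 : Real.exp (-(ζ - y j).re + (1 / 10) * ‖ζ - y j‖ + κ * (‖ζ - y j‖ + 4)) ≤ E := by
        refine Real.exp_le_exp.2 ?_
        have a1 := (abs_le.1 (Complex.abs_re_le_norm (ζ - y j))).1
        have a2 : κ * (‖ζ - y j‖ + 4) ≤ 1 / 100 * (100 + 4) := by gcongr
        linarith
      calc _ = gw G ω zs ζ * (|U ζ| * φ j ζ) := by ring
        _ ≤ E * gw G ω zs (y j) * (|U ζ| * φ j ζ) := by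
          refine mul_le_mul_of_nonneg_right (h1.trans ?_) (by positivity)
          exact mul_le_mul_of_nonneg_right h4 h3.le
    · rw [hy2 j hj ζ hζ, mul_zero]
      exact hg0 j hj ζ
  -- cutoff error, iteration error, and inactive cells; the patches are kept separate because only
  -- their integrals are small
  set M := 330 * B + (1 / 2) ^ k * S + 2 * B + Real.exp (1 - 0.09 * ℓ) * S with hM
  have hM0 : 0 ≤ M := by positivity
  have hmb : ∀ ζ ∈ ball (0:ℂ) T, ‖(cs : ℂ) * m ζ‖ ≤ M + ∑ j ∈ J, g j ζ := by
    intro ζ _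
    have hsum0 : 0 ≤ ∑ j ∈ J, g j ζ := Finset.sum_nonneg fun j hj => hg0 j hj ζ
    by_cases hζ : ζ ∈ D
    swap
    · have h1 : dU χ ζ = 0 := hdχ1 ζ (by
        rw [infDist_zero_of_mem (show ζ ∈ Dᶜ from hζ)]; exact zero_lt_one)
      simp only [hmd, h1, hχD ζ hζ]
      simp only [map_zero, Complex.ofReal_zero, mul_zero, zero_mul, add_zero, norm_zero]
      positivity
    have e1 : ‖(cs : ℂ) * m ζ‖ = gw G ω zs ζ * ‖Q ζ * (starRingEnd ℂ) (dU χ ζ) +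
        (1 / 2) * (χ ζ * (lap U ζ - q ζ * U ζ - 4 * ‖p ζ‖ ^ 2 * U ζ : ℝ))‖ := by
      rw [← hgwe, hmd]
      simp only [norm_mul, Complex.norm_real, Real.norm_of_nonneg hcs0.le]
      ring
    rw [e1]
    have hgp := gw_pos G ω zs ζ
    have e2 : ‖Q ζ * (starRingEnd ℂ) (dU χ ζ) +
        (1 / 2) * (χ ζ * (lap U ζ - q ζ * U ζ - 4 * ‖p ζ‖ ^ 2 * U ζ : ℝ))‖ ≤
        ‖Q ζ‖ * ‖dU χ ζ‖ + 1 / 2 * (|U ζ| * |Vt ζ - 4 * ‖p ζ‖ ^ 2 - q ζ|) := by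
      refine (norm_add_le _ _).trans ?_
      rw [norm_mul, RCLike.norm_conj, norm_mul, norm_mul, Complex.norm_real, Complex.norm_real,
        Real.norm_of_nonneg (χ0 ζ), hVU ζ hζ, show Vt ζ * U ζ - q ζ * U ζ - 4 * ‖p ζ‖ ^ 2 * U ζ =
        U ζ * (Vt ζ - 4 * ‖p ζ‖ ^ 2 - q ζ) by ring, Real.norm_eq_abs, abs_mul]
      have : χ ζ * (|U ζ| * |Vt ζ - 4 * ‖p ζ‖ ^ 2 - q ζ|) ≤
        1 * (|U ζ| * |Vt ζ - 4 * ‖p ζ‖ ^ 2 - q ζ|) := by gcongr; exact χ1 ζ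
      norm_num
      linarith
    have e3 : gw G ω zs ζ * (‖Q ζ‖ * ‖dU χ ζ‖) ≤ 330 * B := by
      by_cases h0 : dU χ ζ = 0
      · rw [h0, norm_zero, mul_zero, mul_zero]; positivity
      · have h1 : 1 ≤ infDist ζ Dᶜ := by
          by_contra hc; exact h0 (hdχ1 ζ (not_le.1 hc))
        have h2 : infDist ζ Dᶜ ≤ 5 / 2 := by
          by_contra hc; exact h0 (hdχ2 ζ (not_le.1 hc))
        have h3 := H.Q_zone Z hδ1 (by linarith) hωL hp1 h1 h2
        have h4 : ‖dU χ ζ‖ ≤ 1 := (norm_dU_le χ ζ).trans (χg ζ)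
        calc _ ≤ gw G ω zs ζ * (‖Q ζ‖ * 1) := by gcongr
          _ ≤ _ := by rwa [mul_one]
    have e4 : gw G ω zs ζ * |U ζ| * (if idx ζ ∈ J then (1 / 2) ^ k else 2 * δ) ≤
        2 * ((1 / 2) ^ k * S + 2 * B + Real.exp (1 - 0.09 * ℓ) * S) := by
      have s1 := hS ζ hζ
      have p1 : 0 ≤ (1 / 2 : ℝ) ^ k := by positivity
      have p2 : 0 ≤ Real.exp (1 - 0.09 * ℓ) * S := by positivity
      have p3 : 0 ≤ (1 / 2 : ℝ) ^ k * S := by positivity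
      split_ifs with h
      · have : gw G ω zs ζ * |U ζ| * (1 / 2) ^ k ≤ S * (1 / 2) ^ k := by gcongr
        linarith
      · have h1 := H.inactive Z (by linarith) hωL hS0 hS hζ fun hA => h (hJA ζ hA)
        have h2 : gw G ω zs ζ * |U ζ| * (2 * δ) ≤ gw G ω zs ζ * |U ζ| * (2 * 1) := by gcongr
        linarith
    have e5 : gw G ω zs ζ * |U ζ| * ∑ j ∈ J, 2 * δ * K * φ j ζ ≤ 2 * ∑ j ∈ J, g j ζ := by
      rw [Finset.mul_sum, Finset.mul_sum]
      refine Finset.sum_le_sum fun j hj => ?_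
      have h1 := hgw j hj ζ
      have h2 := P.nn j hj ζ
      have h3 : δ * K ≤ 1 := by rwa [le_div_iff₀ (by linarith)] at c1
      have h4 : 0 ≤ gw G ω zs ζ * |U ζ| * φ j ζ := by positivity
      nlinarith
    have e6 := mul_le_mul_of_nonneg_left (hpE ζ)
      (mul_nonneg hgp.le (abs_nonneg (U ζ)))
    rw [mul_add] at e6
    have e7 := mul_le_mul_of_nonneg_left e2 hgp.le
    refine e7.trans ?_
    rw [mul_add]
    have e8 : gw G ω zs ζ * (1 / 2 * (|U ζ| * |Vt ζ - 4 * ‖p ζ‖ ^ 2 - q ζ|)) =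
      1 / 2 * (gw G ω zs ζ * |U ζ| * |Vt ζ - 4 * ‖p ζ‖ ^ 2 - q ζ|) := by ring
    rw [e8, hM]
    linarith
  have hms : ∀ ζ, ζ ∉ ball (0:ℂ) T → (cs : ℂ) * m ζ = 0 := by
    intro ζ hζ
    have hζD : ζ ∉ D := fun h => hζ (H.hDT h)
    have h1 : dU χ ζ = 0 := hdχ1 ζ (by
      rw [infDist_zero_of_mem (show ζ ∈ Dᶜ from hζD)]; exact zero_lt_one)
    simp only [hmd, h1, hχD ζ hζD]
    simp
  have hfin := Cz_combo (hm.smul (cs : ℂ)) (by linarith : 0 < T) hM0 hms J hgi hg0 hgN hgL ha hmb z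
  rw [Cz_smul, ← hrep, χo z hz2] at hfin
  have e9 : ‖(cs : ℂ) * (Complex.exp (Cz α z) * (QQ U p z * ((1:ℝ) * Complex.exp (-G z))))‖ =
      gw G ω zs z * ‖QQ U p z‖ := by
    rw [← hgwe]
    simp only [norm_mul, Complex.norm_real, Real.norm_of_nonneg hcs0.le, norm_one]
    ring
  rw [e9] at hfin
  refine hfin.trans ?_
  -- all multiples of `S` are absorbed by the choice of `a`, of `k`, and the size of `ℓ`
  have t1 : (J.card : ℝ) * (2 * a * (E * K * S) + E * a ^ 2 * S / a) ≤ 1 / 1000 * S := by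
    have : (J.card : ℝ) * (2 * a * (E * K * S) + E * a ^ 2 * S / a) =
      (J.card * ((2 * K + 1) * E) * a) * S := by field_simp
    rw [this]
    have h2 : (J.card : ℝ) * ((2 * K + 1) * E) * a ≤ J.card * (3 * K * E) * a := by
      gcongr; linarith
    gcongr
    linarith
  have t2 : 3 * T * ((1 / 2) ^ k * S) ≤ 1 / 1000 * S := by
    rw [← mul_assoc]
    gcongr
    refine le_trans ?_ hb1
    gcongr
  have t3 : 3 * T * (Real.exp (1 - 0.09 * ℓ) * S) ≤ 1 / 1000 * S := by
    rw [← mul_assoc]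
    gcongr
    have h1 : T * Real.exp (1 - 0.09 * ℓ) ≤ Real.exp (ℓ / 20) * Real.exp (1 - 0.09 * ℓ) := by gcongr
    rw [← Real.exp_add] at h1
    have h2 : Real.exp (ℓ / 20 + (1 - 0.09 * ℓ)) ≤ 1 / 3000 := by
      have h3 : ℓ / 20 + (1 - 0.09 * ℓ) ≤ -3000 := by norm_num; linarith
      have h4 := Real.add_one_le_exp (3000:ℝ)
      calc _ ≤ Real.exp (-3000) := Real.exp_le_exp.2 h3
        _ = (Real.exp 3000)⁻¹ := Real.exp_neg _
        _ ≤ (3000:ℝ)⁻¹ := inv_anti₀ (by norm_num) (by linarith)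
        _ = _ := by norm_num
    linarith
  have t4 : B ≤ T * B := le_mul_of_one_le_left hB hT1
  rw [hM]
  have : 3 * T * (330 * B + (1 / 2) ^ k * S + 2 * B + Real.exp (1 - 0.09 * ℓ) * S) =
    996 * (T * B) + 3 * T * ((1 / 2) ^ k * S) + 3 * T * (Real.exp (1 - 0.09 * ℓ) * S) := by ring
  rw [this]
  have : 0 ≤ T * B := by positivity
  linarith

end gauge

/-! ### The main estimate -/

section core

variable {U : ℂ → ℝ} {G : ℂ → ℂ} {D : Set ℂ} {T δ ℓ κ B : ℝ} {zs : ℂ}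

/-- Moving upwind (to the left) from a point of `D`, one reaches the boundary layer without leaving
the part of `D` of depth at least `3`. -/
lemma Dat.upwind (H : Dat U G D T δ) {z : ℂ} (hz : z ∈ D) (h3 : 3 ≤ infDist z Dᶜ) :
    ∃ t1 : ℝ, 0 ≤ t1 ∧ infDist (z - t1) Dᶜ = 3 ∧ ∀ t ∈ Icc 0 t1, 3 ≤ infDist (z - (t:ℝ)) Dᶜ := by
  have hzT := H.hDT hz
  rw [mem_ball_zero_iff] at hzT
  have hT := H.hT
  set f : ℝ → ℝ := fun t => infDist (z - t) Dᶜ with hf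
  have hfc : Continuous f := by
    have h1 : Continuous fun t : ℝ => z - (t:ℂ) := by fun_prop
    exact (continuous_infDist_pt Dᶜ).comp h1
  have hf0 : 3 ≤ f 0 := by simpa [hf] using h3
  have hf2 : f (2 * T) ≤ 3 := by
    have : z - ((2 * T : ℝ) : ℂ) ∈ Dᶜ := by
      intro hc
      have h1 := H.hDT hc
      rw [mem_ball_zero_iff] at h1
      have h2 := norm_sub_le z (z - ((2 * T : ℝ) : ℂ))
      rw [sub_sub_cancel, Complex.norm_real, Real.norm_eq_abs, abs_of_nonneg (by linarith)] at h2
      linarith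
    have h1 : f (2 * T) = 0 := infDist_zero_of_mem this
    linarith
  have hA : IsCompact (Icc 0 (2 * T) ∩ f ⁻¹' Iic 3) :=
    isCompact_Icc.inter_right (isClosed_Iic.preimage hfc)
  obtain ⟨t1, ⟨⟨ht1, ht2⟩, ht3⟩, hmin⟩ := hA.exists_isLeast ⟨2 * T, ⟨by linarith, le_rfl⟩, hf2⟩
  have ivt : ∀ t ∈ Icc 0 t1, f t ≤ 3 → t = t1 ∧ f t1 = 3 := by
    intro t ht h
    obtain ⟨s, hs, hs3⟩ := intermediate_value_Icc' ht.1 hfc.continuousOn ⟨h, hf0⟩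
    have : t1 ≤ s := hmin ⟨⟨hs.1, hs.2.trans (ht.2.trans ht2)⟩, hs3.le⟩
    have e : s = t1 := le_antisymm (hs.2.trans ht.2) this
    subst e
    exact ⟨le_antisymm ht.2 hs.2, hs3⟩
  have e1 := (ivt t1 ⟨ht1, le_rfl⟩ ht3).2
  refine ⟨t1, ht1, e1, fun t ht => ?_⟩
  by_contra hc
  push Not at hc
  have := (ivt t ht hc.le).1
  subst this
  change f t < 3 at hc
  linarith

/-- Integration along a ray of a derivative decaying like `e^{-4 t / 5}`. -/
lemma ray_bound {h h' : ℝ → ℝ} {t1 c : ℝ} (ht1 : 0 ≤ t1) (hc : 0 ≤ c)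
    (hd : ∀ t, HasDerivAt h (h' t) t) (hb : ∀ t ∈ Icc 0 t1, |h' t| ≤ c * Real.exp (-(4 / 5 * t))) :
    |h t1 - h 0| ≤ 5 / 4 * c := by
  have hB : ∀ t, HasDerivAt (fun t => 5 / 4 * c * (1 - Real.exp (-(4 / 5 * t))))
      (c * Real.exp (-(4 / 5 * t))) t := by
    intro t
    have h1 : HasDerivAt (fun t : ℝ => -(4 / 5 * t)) (-(4 / 5)) t :=
      ((hasDerivAt_id t).const_mul (4 / 5 : ℝ)).neg.congr_deriv (by ring)
    exact ((h1.exp.const_sub 1).const_mul (5 / 4 * c)).congr_deriv (by ring)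
  have := image_norm_le_of_norm_deriv_right_le_deriv_boundary (a := 0) (b := t1)
    (f := fun t => h t - h 0) (f' := h') (B := fun t => 5 / 4 * c * (1 - Real.exp (-(4 / 5 * t))))
    (B' := fun t => c * Real.exp (-(4 / 5 * t)))
    (fun t _ => ((hd t).continuousAt.sub continuousAt_const).continuousWithinAt)
    (fun t _ => ((hd t).sub_const (h 0)).hasDerivWithinAt)
    (by simp) hB (fun t ht => hb t ⟨ht.1, ht.2.le⟩) (x := t1) ⟨ht1, le_rfl⟩
  rw [Real.norm_eq_abs] at this
  refine this.trans ?_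
  have := Real.exp_pos (-(4 / 5 * t1))
  nlinarith

/-- The main quantitative estimate: the weighted size of `U` at `zs` is controlled by its weighted
size in the boundary layer. -/
theorem core : ∃ C0 ≥ (1100:ℝ), ∀ (U : ℂ → ℝ) (G : ℂ → ℂ) (D : Set ℂ) (T δ ℓ κ B : ℝ) (zs : ℂ),
    Dat U G D T δ → Zone U G D ℓ κ B zs → C0 ≤ ℓ → C0 * δ * ℓ ^ 6 ≤ κ → T ≤ Real.exp (ℓ / 20) →
    wt U G zs ≤ 10000 * T * B := by
  obtain ⟨C0, hC0, hg⟩ := exists_gauge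
  refine ⟨C0, hC0, fun U G D T δ ℓ κ B zs H Z hℓ hδ hTℓ => ?_⟩
  obtain ⟨p, ω, hp, hωc, hω, hQ⟩ := hg U G D T δ ℓ κ B zs H Z hℓ hδ hTℓ
  have hκ := Z.hκ
  have hκ0 := Z.hκ0
  have hB := Z.hB
  have hT := H.hT
  have he : Real.exp 1 ≤ 2.72 := by have := Real.exp_one_lt_d9; linarith
  set F : ℂ → ℝ := fun z => gw G ω zs z * |U z| with hF
  have hFc : Continuous F := by
    have h1 := H.hU.continuous
    have h2 := H.hG.continuous
    simp only [hF, gw]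
    fun_prop
  have hbdd : BddAbove (F '' D) :=
    ((isCompact_closedBall (0:ℂ) T).image hFc).bddAbove.mono
      (image_mono (H.hDT.trans ball_subset_closedBall))
  set S := sSup (F '' D) with hSdef
  have hS : ∀ z ∈ D, F z ≤ S := fun z hz => le_csSup hbdd (mem_image_of_mem F hz)
  have hF0 : ∀ z, 0 ≤ F z := fun z => mul_nonneg (gw_pos _ _ _ _).le (abs_nonneg _)
  have hS0 : 0 ≤ S := (hF0 zs).trans (hS zs Z.hzs)
  have hX := hQ S hS0 hS
  have hTB : B ≤ T * B := le_mul_of_one_le_left hB hT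
  -- the supremum `S` is finite, so it is enough to bound `F` with a small multiple of `S`
  have main : ∀ z ∈ D, F z ≤ 3500 * (T * B) + 11 / 100 * S := by
    intro z hz
    rcases lt_or_ge (infDist z Dᶜ) ℓ with hd | hd
    · have := Z.gw hω hz hd
      change F z ≤ _ at this
      linarith
    -- integrate along the ray to the left, where the weight grows at least like `e^{4 t / 5}`
    obtain ⟨t1, ht1, hf1, hft⟩ := H.upwind hz (by linarith)
    have hmem : ∀ t ∈ Icc 0 t1, z - (t:ℝ) ∈ D := fun t ht =>
      mem_of_infDist_pos (by linarith [hft t ht])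
    have hgw : ∀ t ∈ Icc 0 t1, gw G ω zs z ≤
        Real.exp 1 * Real.exp (-(4 / 5 * t)) * gw G ω zs (z - (t:ℝ)) := by
      intro t ht
      refine (H.gw_le hω zs hz (hmem t ht)).trans ?_
      rw [← Real.exp_add]
      refine mul_le_mul_of_nonneg_right (Real.exp_le_exp.2 ?_) (gw_pos _ _ _ _).le
      rw [sub_sub_cancel, Complex.norm_real, Real.norm_eq_abs, abs_of_nonneg ht.1, Complex.ofReal_re]
      have := ht.1
      nlinarith
    set c : ℝ := Real.exp 1 * (1000 * T * B + 3 / 100 * S) / gw G ω zs z with hc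
    have hgz := gw_pos G ω zs z
    have hUd : Differentiable ℝ U := H.hU.differentiable (by norm_num)
    have hder : ∀ t : ℝ, HasDerivAt (fun t : ℝ => U (z - t)) (fderiv ℝ U (z - (t:ℝ)) (-1)) t := by
      intro t
      have h1 : HasDerivAt (fun t : ℝ => z - (t:ℂ)) (-1) t := by
        simpa using (Complex.ofRealCLM.hasDerivAt (x := t)).const_sub z
      exact (hUd (z - (t:ℝ))).hasFDerivAt.comp_hasDerivAt t h1
    have hc0 : 0 ≤ c := by positivity
    have hbd := ray_bound ht1 hc0 hder (fun t ht => by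
      have a1 := abs_fderiv_le U (z - (t:ℝ)) (-1)
      rw [norm_neg, norm_one, mul_one] at a1
      have a2 : 2 * ‖dU U (z - (t:ℝ))‖ ≤ ‖QQ U p (z - (t:ℝ))‖ + 1 / 50 * |U (z - (t:ℝ))| := by
        have b1 : 2 * dU U (z - (t:ℝ)) =
            QQ U p (z - (t:ℝ)) + 2 * (U (z - (t:ℝ)) * p (z - (t:ℝ))) := by unfold QQ; ring
        have b2 := norm_add_le (QQ U p (z - (t:ℝ))) (2 * (U (z - (t:ℝ)) * p (z - (t:ℝ))))
        rw [← b1, norm_mul, norm_mul, norm_mul, Complex.norm_ofNat, Complex.norm_real,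
          Real.norm_eq_abs] at b2
        have := mul_le_mul_of_nonneg_left (hp (z - (t:ℝ))) (abs_nonneg (U (z - (t:ℝ))))
        linarith
      have a3 := hX _ (hmem t ht) (by linarith [hft t ht])
      have a4 := hS _ (hmem t ht)
      simp only [hF] at a4
      rw [hc, div_mul_eq_mul_div, le_div_iff₀ hgz]
      have a5 := hgw t ht
      calc |fderiv ℝ U (z - (t:ℝ)) (-1)| * gw G ω zs z
          ≤ (‖QQ U p (z - (t:ℝ))‖ + 1 / 50 * |U (z - (t:ℝ))|) *
            (Real.exp 1 * Real.exp (-(4 / 5 * t)) * gw G ω zs (z - (t:ℝ))) := by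
            refine mul_le_mul (a1.trans a2) a5 hgz.le (by positivity)
        _ = Real.exp 1 * Real.exp (-(4 / 5 * t)) * (gw G ω zs (z - (t:ℝ)) * ‖QQ U p (z - (t:ℝ))‖ +
            1 / 50 * (gw G ω zs (z - (t:ℝ)) * |U (z - (t:ℝ))|)) := by ring
        _ ≤ Real.exp 1 * Real.exp (-(4 / 5 * t)) * (1000 * T * B + 3 / 100 * S) := by
            refine mul_le_mul_of_nonneg_left ?_ (by positivity)
            linarith
        _ = _ := by ring)
    simp only [Complex.ofReal_zero, sub_zero] at hbd
    have b1 : |U z| ≤ |U (z - (t1:ℝ))| + 5 / 4 * c := by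
      have := abs_sub_abs_le_abs_sub (U z) (U (z - (t1:ℝ)))
      rw [abs_sub_comm] at this
      linarith
    have ht1' : t1 ∈ Icc 0 t1 := ⟨ht1, le_rfl⟩
    have b2 : gw G ω zs z * |U (z - (t1:ℝ))| ≤ Real.exp 1 * (2 * B) := by
      have d1 := Z.gw hω (hmem t1 ht1') (by linarith)
      have d2 : Real.exp (-(4 / 5 * t1)) ≤ 1 := Real.exp_le_one_iff.2 (by linarith)
      calc _ ≤ Real.exp 1 * Real.exp (-(4 / 5 * t1)) * gw G ω zs (z - (t1:ℝ)) * |U (z - (t1:ℝ))| :=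
            mul_le_mul_of_nonneg_right (hgw t1 ht1') (abs_nonneg _)
        _ = Real.exp (-(4 / 5 * t1)) * (Real.exp 1 * (gw G ω zs (z - (t1:ℝ)) * |U (z - (t1:ℝ))|)) := by
            ring
        _ ≤ 1 * (Real.exp 1 * (2 * B)) :=
            mul_le_mul d2 (mul_le_mul_of_nonneg_left d1 (Real.exp_pos _).le)
              (mul_nonneg (Real.exp_pos _).le (mul_nonneg (gw_pos _ _ _ _).le (abs_nonneg _)))
              zero_le_one
        _ = _ := one_mul _
    have b3 : gw G ω zs z * c = Real.exp 1 * (1000 * T * B + 3 / 100 * S) := by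
      rw [hc]; field_simp
    have b4 : F z ≤ gw G ω zs z * |U (z - (t1:ℝ))| + 5 / 4 * (gw G ω zs z * c) := by
      calc F z ≤ gw G ω zs z * (|U (z - (t1:ℝ))| + 5 / 4 * c) :=
            mul_le_mul_of_nonneg_left b1 hgz.le
        _ = _ := by ring
    have b5 : Real.exp 1 * (1000 * T * B + 3 / 100 * S) ≤ 2.72 * (1000 * T * B + 3 / 100 * S) := by
      gcongr
    have b6 : Real.exp 1 * (2 * B) ≤ 2.72 * (2 * B) := by gcongr
    rw [b3] at b4
    norm_num at b5 b6
    linarith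
  have hSle : S ≤ 3500 * (T * B) + 11 / 100 * S :=
    csSup_le ((nonempty_of_mem Z.hzs).image F) (by rintro _ ⟨z, hz, rfl⟩; exact main z hz)
  have hfin := hS zs Z.hzs
  have e : F zs = wt U G zs := by
    simp only [hF]
    rw [gw_mul, sub_self, Complex.zero_re, Real.exp_zero, mul_one]
  have hTB0 : 0 ≤ T * B := hB.trans hTB
  rw [e] at hfin
  linarith

end core

/-! ### The conformal change of variables -/

section holo

/-- Conformal change of variables for the Laplacian. -/
lemma lap_comp_holo {u : ℂ → ℝ} {Φ : ℂ → ℂ} {z : ℂ} (hu : ContDiff ℝ 2 u)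
    (hΦ : AnalyticAt ℂ Φ z) :
    lap (fun w => u (Φ w)) z = ‖deriv Φ z‖ ^ 2 * lap u (Φ z) := by
  have hu1 : ContDiff ℝ 1 (fderiv ℝ u) := hu.fderiv_right (by norm_num)
  have hud : Differentiable ℝ u := hu.differentiable (by norm_num)
  set H := fderiv ℝ (fderiv ℝ u) (Φ z) with hH
  have hHd : HasFDerivAt (fderiv ℝ u) H (Φ z) :=
    (hu1.differentiable (by norm_num) (Φ z)).hasFDerivAt
  have hev : ∀ v : ℂ, (fun w => fderiv ℝ (fun w => u (Φ w)) w v) =ᶠ[𝓝 z]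
      fun w => fderiv ℝ u (Φ w) (deriv Φ w * v) := by
    intro v
    filter_upwards [hΦ.eventually_analyticAt] with w hw
    have h1 : HasFDerivAt Φ (((ContinuousLinearMap.toSpanSingleton ℂ (deriv Φ w)).restrictScalars ℝ)) w :=
      hw.differentiableAt.hasDerivAt.hasFDerivAt.restrictScalars ℝ
    have h2 := (hud (Φ w)).hasFDerivAt.comp w h1
    rw [show (fun w => u (Φ w)) = u ∘ Φ from rfl, h2.fderiv]
    simp [mul_comm]
  have hd1 : HasFDerivAt Φ ((ContinuousLinearMap.toSpanSingleton ℂ (deriv Φ z)).restrictScalars ℝ) z :=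
    hΦ.differentiableAt.hasDerivAt.hasFDerivAt.restrictScalars ℝ
  have hd2 : HasFDerivAt (deriv Φ)
      ((ContinuousLinearMap.toSpanSingleton ℂ (deriv (deriv Φ) z)).restrictScalars ℝ) z :=
    hΦ.deriv.differentiableAt.hasDerivAt.hasFDerivAt.restrictScalars ℝ
  have hv : ∀ v : ℂ, fderiv ℝ (fun w => fderiv ℝ (fun w => u (Φ w)) w v) z v =
      H (deriv Φ z * v) (deriv Φ z * v) + fderiv ℝ u (Φ z) (deriv (deriv Φ) z * (v * v)) := by
    intro v
    rw [(hev v).fderiv_eq]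
    have h3 := (hHd.comp z hd1).clm_apply (hd2.mul_const v)
    have h4 : HasFDerivAt (fun w => fderiv ℝ u (Φ w) (deriv Φ w * v)) _ z := h3
    rw [h4.fderiv]
    simp
    ring_nf
  have hlu : ∀ v : ℂ, fderiv ℝ (fun w => fderiv ℝ u w v) (Φ z) v = H v v := by
    intro v
    have h3 := hHd.clm_apply (hasFDerivAt_const v (Φ z))
    have h4 : HasFDerivAt (fun w => fderiv ℝ u w v) _ (Φ z) := h3
    rw [h4.fderiv]
    simp
  unfold lap
  rw [hv, hv, hlu, hlu]
  have e1 : fderiv ℝ u (Φ z) (deriv (deriv Φ) z * (1 * 1)) +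
      fderiv ℝ u (Φ z) (deriv (deriv Φ) z * (Complex.I * Complex.I)) = 0 := by
    rw [← map_add, Complex.I_mul_I, ← mul_add]; simp
  set a := deriv Φ z
  have ea : a * 1 = a.re • (1:ℂ) + a.im • Complex.I := by
    apply Complex.ext <;> simp
  have eb : a * Complex.I = (-a.im) • (1:ℂ) + a.re • Complex.I := by
    apply Complex.ext <;> simp
  have e2 : H (a * 1) (a * 1) + H (a * Complex.I) (a * Complex.I) =
      ‖a‖ ^ 2 * (H 1 1 + H Complex.I Complex.I) := by
    rw [ea, eb, ← Complex.normSq_eq_norm_sq, Complex.normSq_apply]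
    simp only [map_add, map_smul, ContinuousLinearMap.add_apply, smul_apply, smul_eq_mul]
    ring
  linarith

end holo

section conformal

/-- The intermediate variable `ζ = ζ₀ - (ζ₀ - 1) e^{ξ/n}`. -/
noncomputable def Zm (ζ0 n : ℝ) (ξ : ℂ) : ℂ := ζ0 - (ζ0 - 1) * Complex.exp (ξ / n)

/-- The conformal change of variables `ξ ↦ e (ζ ^ σ - 1)`, with the principal branch of the
power; it is holomorphic where `ζ` avoids the cut. -/
noncomputable def Ph (e : ℂ) (σ ζ0 n : ℝ) (ξ : ℂ) : ℂ := e * (Zm ζ0 n ξ ^ (σ : ℂ) - 1)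

variable {e : ℂ} {σ ζ0 n : ℝ} {ξ : ℂ}

lemma Zm_hasDerivAt (ζ0 n : ℝ) (ξ : ℂ) :
    HasDerivAt (Zm ζ0 n) (-((ζ0 - 1) * (Complex.exp (ξ / n) / n))) ξ := by
  unfold Zm
  have h1 : HasDerivAt (fun ξ : ℂ => ξ / n) (1 / n) ξ := (hasDerivAt_id ξ).div_const _
  exact ((h1.cexp.const_mul ((ζ0:ℂ) - 1)).const_sub (ζ0:ℂ)).congr_deriv (by ring)

lemma Zm_cont (ζ0 n : ℝ) : Continuous (Zm ζ0 n) :=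
  continuous_iff_continuousAt.2 fun ξ => (Zm_hasDerivAt ζ0 n ξ).continuousAt

lemma Ph_hasDerivAt (h : Zm ζ0 n ξ ∈ Complex.slitPlane) :
    HasDerivAt (Ph e σ ζ0 n)
      (e * ((σ:ℂ) * Zm ζ0 n ξ ^ ((σ:ℂ) - 1) * (-((ζ0 - 1) * (Complex.exp (ξ / n) / n))))) ξ := by
  unfold Ph
  exact (((Zm_hasDerivAt ζ0 n ξ).cpow_const h).sub_const 1).const_mul e

lemma Ph_analyticAt (h : Zm ζ0 n ξ ∈ Complex.slitPlane) : AnalyticAt ℂ (Ph e σ ζ0 n) ξ := by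
  have ho : IsOpen (Zm ζ0 n ⁻¹' Complex.slitPlane) :=
    Complex.isOpen_slitPlane.preimage (Zm_cont ζ0 n)
  have : DifferentiableOn ℂ (Ph e σ ζ0 n) (Zm ζ0 n ⁻¹' Complex.slitPlane) :=
    fun w hw => (Ph_hasDerivAt hw).differentiableAt.differentiableWithinAt
  exact this.analyticAt (ho.mem_nhds h)

lemma Ph_zero : Ph e σ ζ0 n 0 = 0 := by simp [Ph, Zm]

lemma norm_Ph_le (he : ‖e‖ = 1) : ‖Ph e σ ζ0 n ξ‖ ≤ ‖Zm ζ0 n ξ‖ ^ σ + 1 := by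
  unfold Ph
  rw [norm_mul, he, one_mul, ← Complex.norm_cpow_real]
  simpa using norm_sub_le (Zm ζ0 n ξ ^ (σ:ℂ)) 1

lemma le_norm_Ph (he : ‖e‖ = 1) : ‖Zm ζ0 n ξ‖ ^ σ ≤ ‖Ph e σ ζ0 n ξ‖ + 1 := by
  unfold Ph
  rw [norm_mul, he, one_mul, ← Complex.norm_cpow_real]
  simpa using norm_add_le (Zm ζ0 n ξ ^ (σ:ℂ) - 1) 1

/-- The growth hypothesis in terms of the intermediate variable. -/
lemma norm_Ph_rpow_le {s : ℝ} (hs : 0 < s) (hs1 : s ≤ 1) (he : ‖e‖ = 1) :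
    ‖Ph e (1 / s) ζ0 n ξ‖ ^ s ≤ ‖Zm ζ0 n ξ‖ + 1 := by
  calc ‖Ph e (1 / s) ζ0 n ξ‖ ^ s ≤ (‖Zm ζ0 n ξ‖ ^ (1 / s) + 1) ^ s := by
        gcongr; exact norm_Ph_le he
    _ ≤ (‖Zm ζ0 n ξ‖ ^ (1 / s)) ^ s + 1 ^ s :=
        NNReal.coe_le_coe.2 (NNReal.rpow_add_le_add_rpow
          (⟨‖Zm ζ0 n ξ‖ ^ (1 / s), by positivity⟩ : NNReal) 1 hs.le hs1)
    _ = _ := by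
        rw [← Real.rpow_mul (norm_nonneg _), one_div_mul_cancel hs.ne', Real.rpow_one, Real.one_rpow]

/-- In the new variable the potential is uniformly small: the conformal factor compensates the
decay rate of the potential. -/
lemma Ph_pot {N s a v : ℝ} (hN : 0 < N) (hN2 : N < 2) (hs : s = 1 - N / 2) (he : ‖e‖ = 1)
    (hζ : 1 ≤ ζ0) (hn : 0 < n) (hξ : ξ.re ≤ n) (h : Zm ζ0 n ξ ∈ Complex.slitPlane)
    (hv : |v| ≤ a ^ 2 * √(1 + ‖Ph e (1 / s) ζ0 n ξ‖ ^ 2) ^ (-N)) :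
    ‖deriv (Ph e (1 / s) ζ0 n) ξ‖ ^ 2 * |v| ≤ 36 * (1 / s) ^ 2 * a ^ 2 * (ζ0 / n) ^ 2 := by
  have hs0 : 0 < s := by rw [hs]; linarith
  rw [(Ph_hasDerivAt h).deriv]
  set r := ‖Zm ζ0 n ξ‖ with hr
  have hr0 : 0 < r := norm_pos_iff.2 (Complex.slitPlane_ne_zero h)
  set w := ‖Ph e (1 / s) ζ0 n ξ‖ with hw
  have hw0 : 0 ≤ w := norm_nonneg _
  set q := √(1 + w ^ 2) with hq
  have hq2 : q ^ 2 = 1 + w ^ 2 := Real.sq_sqrt (by positivity)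
  have hq0 : 0 < q := Real.sqrt_pos.2 (by positivity)
  have hq1 : 1 ≤ q := by nlinarith
  have hqw : w ≤ q := by nlinarith
  have hE : ‖Complex.exp (ξ / n)‖ ≤ 3 := by
    rw [Complex.norm_exp, Complex.div_ofReal_re]
    have : ξ.re / n ≤ 1 := (div_le_one hn).2 hξ
    calc _ ≤ Real.exp 1 := Real.exp_le_exp.2 this
      _ ≤ 3 := by have := Real.exp_one_lt_d9; linarith
  have hd : ‖e * (((1 / s : ℝ):ℂ) * Zm ζ0 n ξ ^ (((1 / s : ℝ):ℂ) - 1) *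
      (-((ζ0 - 1) * (Complex.exp (ξ / n) / n))))‖ ≤ (1 / s) * r ^ (1 / s - 1) * (3 * (ζ0 / n)) := by
    have e1 : (((1 / s : ℝ):ℂ) - 1) = ((1 / s - 1 : ℝ) : ℂ) := by push_cast; ring
    rw [e1, norm_mul, he, one_mul, norm_mul, norm_mul, Complex.norm_cpow_real, norm_neg, norm_mul,
      norm_div, Complex.norm_real, Complex.norm_real, Real.norm_eq_abs, Real.norm_eq_abs,
      abs_of_pos (by positivity : 0 < 1 / s), abs_of_pos hn,
      show ((ζ0:ℂ) - 1) = ((ζ0 - 1 : ℝ) : ℂ) by push_cast; ring, Complex.norm_real,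
      Real.norm_eq_abs, abs_of_nonneg (by linarith : 0 ≤ ζ0 - 1)]
    refine mul_le_mul_of_nonneg_left ?_ (by positivity)
    calc (ζ0 - 1) * (‖Complex.exp (ξ / n)‖ / n) ≤ ζ0 * (3 / n) := by gcongr; linarith
      _ = _ := by ring
  have hrp : (r ^ (1 / s - 1)) ^ 2 = (r ^ (1 / s)) ^ N := by
    rw [← Real.rpow_natCast, ← Real.rpow_mul hr0.le, ← Real.rpow_mul hr0.le]
    congr 1
    field_simp
    rw [hs]; push_cast; ring
  have hr2 : (r ^ (1 / s)) ^ N ≤ 4 * q ^ N := by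
    calc (r ^ (1 / s)) ^ N ≤ (2 * q) ^ N := by
          have := le_norm_Ph (σ := 1 / s) (ζ0 := ζ0) (n := n) (ξ := ξ) he
          refine Real.rpow_le_rpow (by positivity) ?_ hN.le
          linarith
      _ = 2 ^ N * q ^ N := Real.mul_rpow (by norm_num) hq0.le
      _ ≤ 4 * q ^ N := by
          have : (2:ℝ) ^ N ≤ 2 ^ (2:ℝ) := Real.rpow_le_rpow_of_exponent_le (by norm_num) hN2.le
          norm_num at this
          gcongr
  calc _ ≤ ((1 / s) * r ^ (1 / s - 1) * (3 * (ζ0 / n))) ^ 2 * (a ^ 2 * q ^ (-N)) := by gcongr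
    _ = 9 * (1 / s) ^ 2 * a ^ 2 * (ζ0 / n) ^ 2 * ((r ^ (1 / s - 1)) ^ 2 * q ^ (-N)) := by ring
    _ ≤ 9 * (1 / s) ^ 2 * a ^ 2 * (ζ0 / n) ^ 2 * (4 * q ^ N * q ^ (-N)) := by
        rw [hrp]; gcongr
    _ = _ := by
        rw [mul_assoc 4, ← Real.rpow_add hq0, add_neg_cancel, Real.rpow_zero]; ring

/-- If the intermediate variable is within relative distance `d` of `A ^ s`, then the image is within
`O(A d)` of the point `e (A - 1)`. -/
lemma Ph_near {A s d : ℝ} (hs0 : 0 < s) (hs1 : s ≤ 1) (hA : 1 ≤ A) (he : ‖e‖ = 1)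
    (hd : d ≤ 1 / 2) (h : ‖Zm (A ^ s) n ξ - (A ^ s : ℝ)‖ ≤ d * A ^ s) :
    ‖Ph e (1 / s) (A ^ s) n ξ - e * ((A:ℂ) - 1)‖ ≤ (1 / s) * 2 ^ (1 / s) * A * d := by
  set ζ := A ^ s with hζ
  have hA0 : 0 < A := by linarith
  have hζ0 : 0 < ζ := by positivity
  have hζσ : ζ ^ (1 / s) = A := by
    rw [hζ, ← Real.rpow_mul hA0.le, mul_one_div_cancel hs0.ne', Real.rpow_one]
  have hσ : 1 ≤ 1 / s := by rw [le_div_iff₀ hs0]; linarith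
  set z := Zm ζ n ξ with hz
  have hd0 : 0 ≤ d := by
    by_contra hc
    push Not at hc
    have := norm_nonneg (z - (ζ:ℂ))
    nlinarith
  have hball : ∀ w ∈ closedBall (ζ:ℂ) (ζ / 2), w ∈ Complex.slitPlane ∧ ‖w‖ ≤ 2 * ζ := by
    intro w hw
    rw [mem_closedBall, dist_eq_norm] at hw
    constructor
    · left
      have h1 := (Complex.abs_re_le_norm (w - ζ)).trans hw
      rw [Complex.sub_re, Complex.ofReal_re, abs_le] at h1
      linarith [h1.1]
    · have h1 := norm_add_le (w - ζ) (ζ:ℂ)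
      rw [sub_add_cancel, Complex.norm_real, Real.norm_eq_abs, abs_of_pos hζ0] at h1
      linarith
  have hder : ∀ w ∈ closedBall (ζ:ℂ) (ζ / 2), HasDerivWithinAt (fun w : ℂ => w ^ ((1 / s : ℝ):ℂ))
      (((1 / s : ℝ):ℂ) * w ^ (((1 / s : ℝ):ℂ) - 1) * 1) (closedBall (ζ:ℂ) (ζ / 2)) w :=
    fun w hw => ((hasDerivAt_id w).cpow_const (hball w hw).1).hasDerivWithinAt
  have hbd : ∀ w ∈ closedBall (ζ:ℂ) (ζ / 2),
      ‖((1 / s : ℝ):ℂ) * w ^ (((1 / s : ℝ):ℂ) - 1) * 1‖ ≤ (1 / s) * (2 * ζ) ^ (1 / s - 1) := by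
    intro w hw
    have e1 : (((1 / s : ℝ):ℂ) - 1) = ((1 / s - 1 : ℝ) : ℂ) := by push_cast; ring
    rw [e1, mul_one, norm_mul, Complex.norm_cpow_real, Complex.norm_real, Real.norm_eq_abs,
      abs_of_pos (by positivity : 0 < 1 / s)]
    have := (hball w hw).2
    have h0 : 0 ≤ 1 / s - 1 := by linarith
    gcongr
  have hzb : z ∈ closedBall (ζ:ℂ) (ζ / 2) := by
    rw [mem_closedBall, dist_eq_norm]
    nlinarith
  have key := (convex_closedBall (ζ:ℂ) (ζ / 2)).norm_image_sub_le_of_norm_hasDerivWithin_le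
    hder hbd (mem_closedBall_self (by positivity)) hzb
  have e2 : Ph e (1 / s) ζ n ξ - e * ((A:ℂ) - 1) =
      e * (z ^ ((1 / s : ℝ):ℂ) - (ζ:ℂ) ^ ((1 / s : ℝ):ℂ)) := by
    rw [← Complex.ofReal_cpow hζ0.le, hζσ, Ph]; ring
  rw [e2, norm_mul, he, one_mul]
  refine key.trans ?_
  calc (1 / s) * (2 * ζ) ^ (1 / s - 1) * ‖z - ζ‖ ≤ (1 / s) * (2 * ζ) ^ (1 / s - 1) * (d * ζ) := by gcongr
    _ ≤ (1 / s) * (2 * ζ) ^ (1 / s - 1) * (d * (2 * ζ)) := by gcongr; linarith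
    _ = (1 / s) * ((2 * ζ) ^ (1 / s - 1) * (2 * ζ)) * d := by ring
    _ = (1 / s) * (2 * ζ) ^ (1 / s) * d := by
        rw [← Real.rpow_add_one (by positivity), sub_add_cancel]
    _ = _ := by rw [Real.mul_rpow (by norm_num) hζ0.le, hζσ]; ring

end conformal

/-! ### The slit rectangle -/

section region

/-- The slit rectangle on which the conformal change of variables is holomorphic. -/
def Rg (ζ n L : ℝ) : Set ℂ :=
  {ξ | -(2 * L * n) < ξ.re ∧ ξ.re < n / 2 ∧ |ξ.im| < 200 * L * n ∧ Zm ζ n ξ ∈ Complex.slitPlane}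

/-- The quadratic weight exponent; its real part grows towards the top and bottom sides of the
rectangle and, being close to `Re ξ`, towards the right. -/
noncomputable def Gq (n L : ℝ) (ξ : ℂ) : ℂ := ξ - ((1 / (8000 * L * n) : ℝ) : ℂ) * ξ ^ 2

variable {ζ n L K c l : ℝ}

lemma Rg_open : IsOpen (Rg ζ n L) := by
  have h1 : Continuous fun ξ : ℂ => ξ.re := Complex.continuous_re
  have h2 : Continuous fun ξ : ℂ => |ξ.im| := Complex.continuous_im.abs
  exact (isOpen_lt continuous_const h1).inter ((isOpen_lt h1 continuous_const).inter
    ((isOpen_lt h2 continuous_const).inter (Complex.isOpen_slitPlane.preimage (Zm_cont ζ n))))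

lemma Gq_re (n L : ℝ) (ξ : ℂ) :
    (Gq n L ξ).re = ξ.re - 1 / (8000 * L * n) * (ξ.re ^ 2 - ξ.im ^ 2) := by
  unfold Gq
  rw [Complex.sub_re, Complex.re_ofReal_mul, sq, Complex.mul_re]
  ring

lemma Rg_norm (hL : 1 ≤ L) (hn : 0 < n) {ξ : ℂ} (h : ξ ∈ Rg ζ n L) : ‖ξ‖ < 202 * L * n := by
  obtain ⟨h1, h2, h3, -⟩ := h
  have h4 := Complex.norm_le_abs_re_add_abs_im ξ
  have h5 : |ξ.re| ≤ 2 * L * n := by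
    rw [abs_le]; constructor <;> nlinarith
  linarith

lemma Gq_close (hL : 1 ≤ L) (hn : 0 < n) {z w : ℂ} (hz : z ∈ Rg ζ n L) (hw : w ∈ Rg ζ n L) :
    ‖Gq n L z - Gq n L w - (z - w)‖ ≤ 1 / 10 * ‖z - w‖ := by
  have e : Gq n L z - Gq n L w - (z - w) =
      -(((1 / (8000 * L * n) : ℝ) : ℂ) * (z + w) * (z - w)) := by unfold Gq; ring
  rw [e, norm_neg, norm_mul, norm_mul, Complex.norm_real, Real.norm_eq_abs,
    abs_of_pos (by positivity)]
  refine mul_le_mul_of_nonneg_right ?_ (norm_nonneg _)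
  have h1 := norm_add_le z w
  have h2 := Rg_norm hL hn hz
  have h3 := Rg_norm hL hn hw
  rw [one_div_mul_eq_div, div_le_iff₀ (by positivity)]
  nlinarith [mul_pos (by linarith : 0 < L) hn]

/-- Points of the slits: the real part is at least `K`, and the imaginary part is a multiple of
`2 π n`. -/
lemma slit_point (hζ : 1 < ζ) (hn : n = K * ζ) (hK : 0 < K) {w : ℂ}
    (h : Zm ζ n w ∉ Complex.slitPlane) :
    K ≤ w.re ∧ Complex.exp (w / n) = ((Real.exp (w.re / n) : ℝ) : ℂ) ∧ ∃ k : ℤ, w.im = k * (2 * Real.pi) * n := by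
  have hn0 : 0 < n := by rw [hn]; positivity
  rw [Complex.mem_slitPlane_iff] at h
  push Not at h
  obtain ⟨h1, h2⟩ := h
  have e1 : (Zm ζ n w).re = ζ - (ζ - 1) * (Complex.exp (w / n)).re := by
    rw [Zm, show ((ζ:ℂ) - 1) = ((ζ - 1 : ℝ) : ℂ) by push_cast; ring, Complex.sub_re,
      Complex.re_ofReal_mul, Complex.ofReal_re]
  have e2 : (Zm ζ n w).im = - ((ζ - 1) * (Complex.exp (w / n)).im) := by
    rw [Zm, show ((ζ:ℂ) - 1) = ((ζ - 1 : ℝ) : ℂ) by push_cast; ring, Complex.sub_im,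
      Complex.im_ofReal_mul, Complex.ofReal_im]; ring
  rw [e1] at h1
  rw [e2] at h2
  have him : (Complex.exp (w / n)).im = 0 := by
    rcases mul_eq_zero.1 (neg_eq_zero.1 h2) with h | h
    · linarith
    · exact h
  have hre : ζ / (ζ - 1) ≤ (Complex.exp (w / n)).re := by
    rw [div_le_iff₀ (by linarith)]; linarith
  have hpos : 0 < ζ / (ζ - 1) := div_pos (by linarith) (by linarith)
  have hE := Real.exp_pos (w.re / n)
  have f1 : (Complex.exp (w / n)).re = Real.exp (w.re / n) * Real.cos (w.im / n) := by
    rw [Complex.exp_re, Complex.div_ofReal_re, Complex.div_ofReal_im]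
  have f2 : (Complex.exp (w / n)).im = Real.exp (w.re / n) * Real.sin (w.im / n) := by
    rw [Complex.exp_im, Complex.div_ofReal_re, Complex.div_ofReal_im]
  have hsin : Real.sin (w.im / n) = 0 := by
    rw [f2] at him
    exact (mul_eq_zero.1 him).resolve_left hE.ne'
  have hcos : Real.cos (w.im / n) = 1 := by
    have h3 := Real.sin_sq_add_cos_sq (w.im / n)
    rw [hsin] at h3
    have h4 : 0 < Real.cos (w.im / n) := by
      rw [f1] at hre
      exact pos_of_mul_pos_right (hpos.trans_le hre) hE.le
    nlinarith
  rw [hcos, mul_one] at f1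
  refine ⟨?_, Complex.ext (by rw [Complex.ofReal_re]; exact f1) (by rw [Complex.ofReal_im]; exact him), ?_⟩
  · rw [f1] at hre
    have h5 : Real.log (ζ / (ζ - 1)) ≤ w.re / n := (Real.log_le_iff_le_exp hpos).2 hre
    have h6 := Real.one_sub_inv_le_log_of_pos hpos
    have h7 : 1 - (ζ / (ζ - 1))⁻¹ = 1 / ζ := by
      have : ζ ≠ 0 := by linarith
      field_simp; ring
    rw [h7] at h6
    have h8 := h6.trans h5
    rw [le_div_iff₀ hn0, hn] at h8
    have h9 : 1 / ζ * (K * ζ) = K := by field_simp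
    linarith
  · obtain ⟨k, hk⟩ := (Real.cos_eq_one_iff _).1 hcos
    exact ⟨k, by rw [hk]; field_simp⟩

set_option maxHeartbeats 1000000 in
/-- Smallness of the weighted function near the boundary of the slit rectangle. -/
lemma zone_est (hζ : 1 < ζ) (hn : n = K * ζ) (hL : 1 ≤ L) (hc : 0 < c) (hKc : 1000 * c ≤ K)
    (hKL : 10000 * L ≤ K) (hl0 : 0 ≤ l) (hl : 100 * l ≤ K) {f : ℝ} (z w : ℂ) (hz : z ∈ Rg ζ n L)
    (hw : w ∉ Rg ζ n L) (hzw : ‖z - w‖ < l) (hf : |f| ≤ Real.exp (c * (‖Zm ζ n z‖ + 1)))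
    (hf2 : ‖Zm ζ n z - ζ‖ ≤ 3 * Real.exp (-(2 * L)) * ζ → |f| ≤ Real.exp (-(4 * L * n))) :
    Real.exp (-(Gq n L z).re) * |f| ≤ Real.exp (-(K / 8)) * Real.exp (-(1 / K * ‖z‖)) := by
  have hK : 10000 ≤ K := by linarith
  have hK0 : 0 < K := by linarith
  have hn0 : 0 < n := by rw [hn]; positivity
  have hKn : K ≤ n := by rw [hn]; nlinarith
  have hLn : n ≤ L * n := by nlinarith
  obtain ⟨z1, z2, z3, z4⟩ := hz
  have hnorm := Complex.norm_le_abs_re_add_abs_im z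
  have hnorm2 := Rg_norm hL hn0 ⟨z1, z2, z3, z4⟩
  have dre := (Complex.abs_re_le_norm (z - w)).trans hzw.le
  have dim := (Complex.abs_im_le_norm (z - w)).trans hzw.le
  rw [Complex.sub_re, abs_le] at dre
  rw [Complex.sub_im] at dim
  have hre := Gq_re n L z
  set X := z.re
  set Y := z.im
  set g := 1 / (8000 * L * n) with hg
  have hg0 : 0 < g := by positivity
  have hgn : g * (L * n) = 1 / 8000 := by rw [hg]; field_simp
  have hgX : g * X ^ 2 ≤ 1 / 2000 * (L * n) := by
    have : X ^ 2 ≤ (2 * (L * n)) ^ 2 := sq_le_sq' (by linarith) (by linarith)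
    calc g * X ^ 2 ≤ g * (2 * (L * n)) ^ 2 := by gcongr
      _ = 4 * (g * (L * n)) * (L * n) := by ring
      _ = _ := by rw [hgn]; ring
  have hgY : 0 ≤ g * Y ^ 2 := by positivity
  have hZ4 : ‖Zm ζ n z‖ ≤ 4 * ζ := by
    unfold Zm
    have h1 := norm_sub_le (ζ:ℂ) (((ζ:ℂ) - 1) * Complex.exp (z / n))
    rw [norm_mul, Complex.norm_real, Real.norm_eq_abs, abs_of_pos (by linarith : 0 < ζ),
      show ((ζ:ℂ) - 1) = ((ζ - 1 : ℝ) : ℂ) by push_cast; ring, Complex.norm_real,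
      Real.norm_eq_abs, abs_of_pos (by linarith : 0 < ζ - 1), Complex.norm_exp,
      Complex.div_ofReal_re] at h1
    have h2 : Real.exp (X / n) ≤ 3 := by
      calc _ ≤ Real.exp 1 := Real.exp_le_exp.2 (by rw [div_le_one hn0]; linarith)
        _ ≤ 3 := by have := Real.exp_one_lt_d9; linarith
    rw [show ((ζ:ℂ) - 1) = ((ζ - 1 : ℝ) : ℂ) by push_cast; ring]
    nlinarith
  have hzK : 1 / K * ‖z‖ ≤ 3 / 100 * n := by
    rw [one_div_mul_eq_div, div_le_iff₀ hK0]
    nlinarith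
  -- the general estimate, once the exponents have been compared
  have fin : ∀ M, |f| ≤ Real.exp M → M - (Gq n L z).re ≤ -(K / 8) - 1 / K * ‖z‖ →
      Real.exp (-(Gq n L z).re) * |f| ≤ Real.exp (-(K / 8)) * Real.exp (-(1 / K * ‖z‖)) := by
    intro M h1 h2
    calc _ ≤ Real.exp (-(Gq n L z).re) * Real.exp M := by gcongr
      _ = Real.exp (M - (Gq n L z).re) := by rw [← Real.exp_add]; ring_nf
      _ ≤ Real.exp (-(K / 8) - 1 / K * ‖z‖) := Real.exp_le_exp.2 h2
      _ = _ := by rw [← Real.exp_add]; ring_nf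
  have big : 2 / 5 * n ≤ (Gq n L z).re →
      Real.exp (-(Gq n L z).re) * |f| ≤ Real.exp (-(K / 8)) * Real.exp (-(1 / K * ‖z‖)) := by
    intro h
    refine fin _ hf ?_
    have h1 : c * (‖Zm ζ n z‖ + 1) ≤ c * (4 * ζ + 1) := by gcongr
    have h2 : 1000 * (c * ζ) ≤ n := by rw [hn]; nlinarith
    linarith
  -- left side: this is where the smallness near `w₀` enters
  by_cases a1 : -(2 * L * n) < w.re
  swap
  · push Not at a1
    refine fin _ (hf2 ?_) ?_
    · unfold Zm
      rw [show (ζ:ℂ) - (ζ - 1) * Complex.exp (z / n) - ζ = -(((ζ - 1 : ℝ) : ℂ) * Complex.exp (z / n)) by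
        push_cast; ring, norm_neg, norm_mul, Complex.norm_real, Real.norm_eq_abs,
        abs_of_pos (by linarith : 0 < ζ - 1), Complex.norm_exp, Complex.div_ofReal_re]
      have h1 : X / n ≤ 1 + -(2 * L) := by
        rw [div_le_iff₀ hn0]; linarith
      have h2 : Real.exp (X / n) ≤ 3 * Real.exp (-(2 * L)) := by
        calc _ ≤ Real.exp (1 + -(2 * L)) := Real.exp_le_exp.2 h1
          _ = Real.exp 1 * Real.exp (-(2 * L)) := Real.exp_add _ _
          _ ≤ _ := by
            have := Real.exp_one_lt_d9
            gcongr; linarith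
      have := Real.exp_pos (X / n)
      nlinarith
    · rw [hre]
      linarith
  -- right side: the linear part of the exponent suffices
  by_cases a2 : w.re < n / 2
  swap
  · push Not at a2
    refine big ?_
    rw [hre]
    have h1 : X ^ 2 ≤ n ^ 2 := sq_le_sq' (by linarith) (by linarith)
    have h2 : g * X ^ 2 ≤ 1 / 8000 * n := by
      calc g * X ^ 2 ≤ g * n ^ 2 := by gcongr
        _ = g * n * n := by ring
        _ ≤ g * (L * n) * n := by gcongr
        _ = _ := by rw [hgn]
    linarith
  -- top and bottom: the quadratic part of the exponent suffices
  by_cases a3 : |w.im| < 200 * L * n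
  swap
  · push Not at a3
    refine big ?_
    have h1 : 199 * (L * n) ≤ |Y| := by
      have := abs_sub_abs_le_abs_sub w.im Y
      rw [abs_sub_comm] at this
      linarith
    have h2 : (199 * (L * n)) ^ 2 ≤ Y ^ 2 := by
      rw [← sq_abs Y]; gcongr
    have h3 : 4 * (L * n) ≤ g * Y ^ 2 := by
      calc 4 * (L * n) ≤ 199 ^ 2 * (g * (L * n)) * (L * n) := by rw [hgn]; nlinarith
        _ = g * (199 * (L * n)) ^ 2 := by ring
        _ ≤ _ := by gcongr
    rw [hre]
    linarith
  -- slits: `|Zm|` grows there only like `4 x / K`, so the exponent `x` wins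
  obtain ⟨b1, b2, k, hk⟩ := slit_point hζ hn hK0 (fun h => hw ⟨a1, a2, a3, h⟩)
  set x := w.re
  have hZ : ‖Zm ζ n z‖ ≤ 1 + 4 / K * x := by
    set v : ℂ := (x / n : ℝ) + (z - w) / n with hv
    have e1 : Complex.exp (z / n) = Complex.exp v := by
      rw [hv, Complex.exp_add, ← Complex.ofReal_exp, ← b2, ← Complex.exp_add]
      congr 1; ring
    have hvn : ‖v‖ ≤ (x + l) / n := by
      have h1 := norm_add_le ((x / n : ℝ):ℂ) ((z - w) / n)
      rw [norm_div, Complex.norm_real, Complex.norm_real, Real.norm_eq_abs, Real.norm_eq_abs,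
        abs_of_pos hn0, abs_of_nonneg (by have : 0 ≤ x := by linarith
                                          positivity), ← add_div] at h1
      exact h1.trans (by gcongr)
    have hv1 : ‖v‖ ≤ 1 := hvn.trans (by rw [div_le_one hn0]; linarith)
    have h2 := Complex.norm_exp_sub_one_le hv1
    have e2 : Zm ζ n z = 1 - ((ζ - 1 : ℝ) : ℂ) * (Complex.exp v - 1) := by
      unfold Zm; rw [e1]; push_cast; ring
    have h3 := norm_sub_le 1 (((ζ - 1 : ℝ) : ℂ) * (Complex.exp v - 1))
    rw [← e2, norm_one, norm_mul, Complex.norm_real, Real.norm_eq_abs,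
      abs_of_pos (by linarith : 0 < ζ - 1)] at h3
    have h4 : (ζ - 1) * ‖Complex.exp v - 1‖ ≤ ζ * (2 * ((x + l) / n)) := by
      gcongr
      · linarith
      · exact h2.trans (by gcongr)
    have h5 : ζ * (2 * ((x + l) / n)) = 2 / K * (x + l) := by
      rw [hn]; have : ζ ≠ 0 := by linarith
      field_simp
    have h6 : 2 / K * (x + l) ≤ 2 / K * (2 * x) := by gcongr; linarith
    rw [h5] at h4
    have h7 : 2 / K * (2 * x) = 4 / K * x := by ring
    linarith
  refine fin _ hf ?_
  have h1 : c * (‖Zm ζ n z‖ + 1) ≤ 6 / 1000 * x := by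
    have h2 : c * (‖Zm ζ n z‖ + 1) ≤ c * (2 + 4 / K * x) :=
      mul_le_mul_of_nonneg_left (by linarith) hc.le
    have h3 : c * (4 / K * x) ≤ 4 / 1000 * x := by
      have : c / K ≤ 1 / 1000 := by rw [div_le_div_iff₀ hK0 (by norm_num)]; linarith
      have hx0 : 0 ≤ x := by linarith
      calc c * (4 / K * x) = 4 * (c / K) * x := by ring
        _ ≤ 4 * (1 / 1000) * x := by gcongr
        _ = _ := by ring
    linarith
  have h2 : g * X ^ 2 ≤ 1 / 1000 * x := by
    have hX0 : 0 ≤ X := by linarith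
    calc g * X ^ 2 = g * X * X := by ring
      _ ≤ g * (L * n) * X := by gcongr; linarith
      _ = 1 / 8000 * X := by rw [hgn]
      _ ≤ _ := by linarith
  have h3 : 1 / K * |Y| ≤ g * Y ^ 2 + 1 / 1000 * x := by
    by_cases hk0 : k = 0
    · rw [hk0] at hk
      simp only [Int.cast_zero, zero_mul] at hk
      rw [hk, sub_zero] at dim
      have : 1 / K * |Y| ≤ 1 := by
        rw [one_div_mul_eq_div, div_le_one hK0]; linarith
      linarith
    · have hk1 : (1:ℝ) ≤ |(k:ℝ)| := by exact_mod_cast Int.one_le_abs hk0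
      have h4 : 6 * n ≤ |w.im| := by
        rw [hk, abs_mul, abs_mul, abs_of_pos hn0, abs_of_pos Real.two_pi_pos]
        have := Real.pi_gt_three
        have : 6 ≤ |(k:ℝ)| * (2 * Real.pi) := by nlinarith
        gcongr
      have h5 : 5 * n ≤ |Y| := by
        have := abs_sub_abs_le_abs_sub w.im Y
        rw [abs_sub_comm] at this
        linarith
      have h6 : 1 / K ≤ g * (5 * n) := by
        have : g * (5 * n) = 1 / (1600 * L) := by rw [hg]; field_simp; norm_num
        rw [this]
        exact one_div_le_one_div_of_le (by linarith) (by linarith)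
      have h7 : 1 / K * |Y| ≤ g * Y ^ 2 := by
        calc 1 / K * |Y| ≤ g * (5 * n) * |Y| := by gcongr
          _ ≤ g * |Y| * |Y| := by gcongr
          _ = g * Y ^ 2 := by rw [← sq_abs Y]; ring
      linarith
  have h4 : 1 / K * ‖z‖ ≤ 1 / K * |X| + 1 / K * |Y| := by
    rw [← mul_add]; gcongr
  have h5 : 1 / K * |X| ≤ 1 / 1000 * x := by
    rw [one_div_mul_eq_div, div_le_iff₀ hK0, abs_of_nonneg (by linarith)]
    nlinarith
  rw [hre]
  linarith

end region

/-! ### Choice of scales and conclusion -/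

section final

lemma lap_congr {f g : ℂ → ℝ} {z : ℂ} (h : f =ᶠ[𝓝 z] g) : lap f z = lap g z := by
  have h1 : ∀ v : ℂ, (fun w => fderiv ℝ f w v) =ᶠ[𝓝 z] fun w => fderiv ℝ g w v := by
    intro v
    filter_upwards [h.eventuallyEq_nhds] with w hw
    rw [hw.fderiv_eq]
  unfold lap
  rw [(h1 1).fderiv_eq, (h1 Complex.I).fderiv_eq]

/-- The size requirements on `A = R + 1` hold for all large `A`. -/
lemma eventually_params (M : ℝ) {s ε : ℝ} (hs : 0 < s) (hε : 0 < ε) :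
    ∀ᶠ A : ℝ in atTop, M ≤ Real.log A ∧ M * Real.log A ^ 6 ≤ A ^ (ε / 2) ∧ 2 ≤ A ^ s ∧ 2 ≤ A := by
  have h1 := Real.tendsto_log_atTop.eventually_ge_atTop M
  have h2 := (tendsto_rpow_atTop hs).eventually_ge_atTop 2
  have h3 := (isLittleO_log_rpow_rpow_atTop (6:ℝ) (by positivity : 0 < ε / 2)).bound
    (by positivity : 0 < 1 / (|M| + 1))
  filter_upwards [h1, h2, h3, eventually_ge_atTop 2] with A a1 a2 a3 a4
  refine ⟨a1, ?_, a2, a4⟩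
  have hl : 0 ≤ Real.log A := Real.log_nonneg (by linarith)
  have h6 : 0 ≤ Real.log A ^ 6 := by positivity
  have h7 : 0 ≤ A ^ (ε / 2) := Real.rpow_nonneg (by linarith) _
  rw [Real.norm_eq_abs, Real.norm_eq_abs, show (6:ℝ) = ((6:ℕ):ℝ) by norm_num, Real.rpow_natCast,
    abs_of_nonneg h6, abs_of_nonneg h7, one_div_mul_eq_div,
    le_div_iff₀ (by positivity)] at a3
  have := le_abs_self M
  nlinarith

/-- Numerical consequences of the choice of scales. -/
lemma scales {A L K s ε n : ℝ} (hs : 0 < s) (hε : 0 < ε) (hsε : s + ε < 1) (hA : 2 ≤ A)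
    (hLA : L = Real.log A) (hKA : K = A ^ (ε / 2)) (hn : n = K * A ^ s) (hL : 3000000 ≤ L)
    (hKL : 3000000 * L ≤ K) :
    n ≤ A ∧ A = Real.exp L ∧ 4 * L * n ≤ (A - 1) ^ (s + ε) ∧
      202 * L * n ≤ Real.exp (60 * L / 20) ∧
      10000 * (202 * L * n) * Real.exp (-(K / 8)) < 1 := by
  have hA0 : 0 < A := by linarith
  have hAL : A = Real.exp L := by rw [hLA, Real.exp_log hA0]
  have hn' : n = A ^ (ε / 2 + s) := by rw [hn, hKA, Real.rpow_add hA0]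
  have hn0 : 0 < n := by rw [hn']; positivity
  have hnA : n ≤ A := by
    rw [hn']
    calc _ ≤ A ^ (1:ℝ) := Real.rpow_le_rpow_of_exponent_le (by linarith) (by linarith)
      _ = A := Real.rpow_one A
  have hLe : L + 1 ≤ Real.exp L := Real.add_one_le_exp L
  have hLn : L * n ≤ Real.exp L * Real.exp L := by
    have : n ≤ Real.exp L := hAL ▸ hnA
    have : L ≤ Real.exp L := by linarith
    gcongr
  refine ⟨hnA, hAL, ?_, ?_, ?_⟩
  · have h1 : A / 2 ≤ A - 1 := by linarith
    have h2 : A ^ (s + ε) = n * K := by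
      rw [hn', hKA, ← Real.rpow_add hA0]; congr 1; ring
    have h3 : (2:ℝ) ^ (s + ε) ≤ 2 := by
      calc (2:ℝ) ^ (s + ε) ≤ 2 ^ (1:ℝ) :=
            Real.rpow_le_rpow_of_exponent_le (by norm_num) hsε.le
        _ = 2 := Real.rpow_one 2
    calc 4 * L * n ≤ n * K / 2 := by nlinarith
      _ ≤ A ^ (s + ε) / 2 ^ (s + ε) := by rw [h2]; gcongr; nlinarith
      _ = (A / 2) ^ (s + ε) := (Real.div_rpow hA0.le (by norm_num) _).symm
      _ ≤ _ := by gcongr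
  · calc 202 * L * n = 202 * (L * n) := by ring
      _ ≤ Real.exp L * (Real.exp L * Real.exp L) := by gcongr; linarith
      _ = _ := by rw [← Real.exp_add, ← Real.exp_add]; congr 1; ring
  · have h1 : Real.exp (-(K / 8)) ≤ Real.exp (-(4 * L)) := Real.exp_le_exp.2 (by linarith)
    have h2 : Real.exp (-L) * Real.exp L = 1 := by rw [← Real.exp_add]; simp
    calc _ = 2020000 * (L * n) * Real.exp (-(K / 8)) := by ring
      _ ≤ 2020000 * (Real.exp L * Real.exp L) * Real.exp (-(4 * L)) := by gcongr
      _ = 2020000 * Real.exp (-(2 * L)) := by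
          rw [mul_assoc, ← Real.exp_add, ← Real.exp_add]; congr 2; ring
      _ ≤ 2020000 * Real.exp (-L) := by gcongr; linarith
      _ < Real.exp L * Real.exp (-L) := by gcongr; linarith
      _ = 1 := by rw [mul_comm]; exact h2

/-- Points outside the slit rectangle are far from the origin. -/
lemma Rg_compl_norm {ζ n L K : ℝ} (hζ : 1 < ζ) (hn : n = K * ζ) (hL : 1 ≤ L) (hK : 7 ≤ K) {w : ℂ}
    (hw : w ∉ Rg ζ n L) : 3 ≤ ‖w‖ := by
  have hKn : K ≤ n := by rw [hn]; nlinarith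
  have hLn : n ≤ L * n := by nlinarith
  have h1 := Complex.abs_re_le_norm w
  have h2 := Complex.abs_im_le_norm w
  by_contra hc
  push Not at hc
  obtain ⟨h3, h4⟩ := abs_le.1 (h1.trans hc.le)
  refine hw ⟨by linarith, by linarith, by linarith, ?_⟩
  by_contra h
  have := (slit_point hζ hn (by linarith) h).1
  linarith

/-- Cutting off a function that is twice continuously differentiable on an open set. -/
lemma cutoff_contDiff {W : Set ℂ} {χ F : ℂ → ℝ} (hχ : ContDiff ℝ 2 χ)
    (h0 : ∀ z, infDist z Wᶜ ≤ 1 → χ z = 0) (hF : ∀ z ∈ W, ContDiffAt ℝ 2 F z) :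
    ContDiff ℝ 2 fun z => χ z * F z := by
  rw [contDiff_iff_contDiffAt]
  intro z
  rcases lt_or_ge 0 (infDist z Wᶜ) with h | h
  · exact hχ.contDiffAt.mul (hF z (mem_of_infDist_pos h))
  · have : (fun z => χ z * F z) =ᶠ[𝓝 z] fun _ => 0 := by
      filter_upwards [(isOpen_lt (continuous_infDist_pt Wᶜ) continuous_const).mem_nhds
        (show infDist z Wᶜ < 1 by linarith)] with w hw
      rw [h0 w (le_of_lt hw), zero_mul]
    exact contDiffAt_const.congr_of_eventuallyEq this

end final

section final

set_option maxHeartbeats 1000000 in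
/-- The lower bound at a fixed scale `A = R + 1`: given the main estimate, `|u|` cannot be at most
`exp (-(A - 1) ^ (s + ε))` on all of the unit ball about `w0`. -/
lemma fixed_scale {C0 : ℝ} (hC0 : 1100 ≤ C0)
    (hcore : ∀ (U : ℂ → ℝ) (G : ℂ → ℂ) (D : Set ℂ) (T δ ℓ κ B : ℝ) (zs : ℂ),
      Dat U G D T δ → Zone U G D ℓ κ B zs → C0 ≤ ℓ → C0 * δ * ℓ ^ 6 ≤ κ → T ≤ Real.exp (ℓ / 20) →
      wt U G zs ≤ 10000 * T * B)
    {N a c ε s M A L K ζ n : ℝ} (hN : 0 < N) (hN2 : N < 2) (hs : s = 1 - N / 2) (hc : 0 < c)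
    (hε : 0 < ε) (hsε : s + ε < 1)
    (hM : M = 3000000 + C0 * (36 * (1 / s) ^ 2 * a ^ 2) * 60 ^ 6 + 3 * ((1 / s) * 2 ^ (1 / s)) +
      1000 * c + C0)
    (hL : M ≤ L) (hKL : M * L ^ 6 ≤ K) (hζ : 2 ≤ ζ) (hA : 2 ≤ A) (hLA : L = Real.log A)
    (hKA : K = A ^ (ε / 2)) (hζA : ζ = A ^ s) (hn : n = K * ζ)
    {V u : ℂ → ℝ} (hV : ∀ w : ℂ, |V w| ≤ a ^ 2 * √(1 + ‖w‖ ^ 2) ^ (-N)) (hu : ContDiff ℝ 2 u)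
    (hlap : ∀ z : ℂ, -lap u z + V z * u z = 0) (hu0 : |u 0| = 1)
    (hgr : ∀ w : ℂ, |u w| ≤ Real.exp (c * ‖w‖ ^ (1 - N / 2)))
    {w0 : ℂ} (hw0 : ‖w0‖ = A - 1) :
    ¬ ∀ w ∈ ball w0 1, |u w| ≤ Real.exp (-(A - 1) ^ (s + ε)) := by
  intro hsmall
  have hs0 : 0 < s := by rw [hs]; linarith
  have hs1 : s ≤ 1 := by rw [hs]; linarith
  have hA0 : 0 < A := by linarith
  -- numerical preliminaries
  set P := 36 * (1 / s) ^ 2 * a ^ 2 with hP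
  have hP0 : 0 ≤ P := by positivity
  have hPP : 0 ≤ C0 * P * 60 ^ 6 := by positivity
  have hQ0 : 0 < (1 / s) * (2:ℝ) ^ (1 / s) := by positivity
  have hM0 : 3000000 ≤ M := by linarith
  have hL1 : 3000000 ≤ L := hM0.trans hL
  have hL6 : L ≤ L ^ 6 := by
    simpa using pow_le_pow_right₀ (by linarith : 1 ≤ L) (by norm_num : 1 ≤ 6)
  have hL61 : 1 ≤ L ^ 6 := by linarith
  have hK3 : 3000000 * L ≤ K := by nlinarith
  have hMK : M ≤ K := by nlinarith
  have hKc : 1000 * c ≤ K := by linarith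
  have hK0 : 0 < K := by linarith
  have hn0 : 0 < n := by rw [hn]; positivity
  have hKn : K ≤ n := by rw [hn]; nlinarith
  have hLn : n ≤ L * n := by nlinarith
  have hζ1 : 1 < ζ := by linarith
  obtain ⟨hnA, hAL, q1, q2, q3⟩ := scales (n := n) hs0 hε hsε hA hLA hKA (by rw [hn, hζA]) hL1 hK3
  -- the change of variables
  set e : ℂ := w0 / (A - 1) with he
  have hA1 : ((A:ℂ) - 1) = ((A - 1 : ℝ) : ℂ) := by push_cast; ring
  have he1 : ‖e‖ = 1 := by
    rw [he, norm_div, hw0, hA1, Complex.norm_real, Real.norm_eq_abs, abs_of_pos (by linarith)]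
    exact div_self (by linarith)
  have hew : e * ((A:ℂ) - 1) = w0 := by
    rw [he]
    refine div_mul_cancel₀ _ ?_
    rw [hA1]
    exact_mod_cast (by linarith : A - 1 ≠ 0)
  set W := Rg ζ n L with hW
  set Φ := Ph e (1 / s) ζ n with hΦ
  have hf : ∀ z, |u (Φ z)| ≤ Real.exp (c * (‖Zm ζ n z‖ + 1)) := by
    intro z
    refine (hgr _).trans (Real.exp_le_exp.2 ?_)
    rw [← hs]
    have := norm_Ph_rpow_le (ζ0 := ζ) (n := n) (ξ := z) hs0 hs1 he1
    gcongr
  have hf2 : ∀ z, ‖Zm ζ n z - ζ‖ ≤ 3 * Real.exp (-(2 * L)) * ζ →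
      |u (Φ z)| ≤ Real.exp (-(4 * L * n)) := by
    intro z hz
    have e1 : Real.exp (-(2 * L)) * A * A = 1 := by
      rw [hAL, ← Real.exp_add, ← Real.exp_add]
      rw [Real.exp_eq_one_iff]; ring
    have e2 : 3 * Real.exp (-(2 * L)) ≤ 1 / 2 := by
      have : Real.exp (-(2 * L)) ≤ Real.exp (-L) := Real.exp_le_exp.2 (by linarith)
      have h2 : Real.exp (-L) * Real.exp L = 1 := by rw [← Real.exp_add]; simp
      have := Real.add_one_le_exp L
      have := Real.exp_pos (-L)
      nlinarith
    have h1 := Ph_near (e := e) (n := n) (ξ := z) hs0 hs1 (by linarith : 1 ≤ A) he1 e2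
      (by rw [hζA] at hz; exact hz)
    rw [hew, ← hζA] at h1
    have h2 : (1 / s) * 2 ^ (1 / s) * A * (3 * Real.exp (-(2 * L))) < 1 := by
      have h3 : 3 * ((1 / s) * 2 ^ (1 / s)) < A := by
        have := Real.add_one_le_exp L
        linarith
      have h4 : (1 / s) * 2 ^ (1 / s) * A * (3 * Real.exp (-(2 * L))) =
          3 * ((1 / s) * 2 ^ (1 / s)) * (Real.exp (-(2 * L)) * A) := by ring
      have h5 : 0 < Real.exp (-(2 * L)) * A := by positivity
      rw [h4]
      calc _ < A * (Real.exp (-(2 * L)) * A) := mul_lt_mul_of_pos_right h3 h5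
        _ = 1 := by rw [mul_comm]; exact e1
    refine (hsmall _ (by rw [mem_ball, dist_eq_norm]; exact h1.trans_lt h2)).trans
      (Real.exp_le_exp.2 (by linarith))
  obtain ⟨χ, χ1, χ2, χ3, χ4, χ5, -⟩ := exists_cutoff W
  set U : ℂ → ℝ := fun z => χ z * u (Φ z) with hU
  set D : Set ℂ := {z | 5 / 2 < infDist z Wᶜ} with hD
  have hDo : IsOpen D := isOpen_lt continuous_const (continuous_infDist_pt Wᶜ)
  have hDW : D ⊆ W := fun z hz => mem_of_infDist_pos (lt_trans (by norm_num) hz)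
  have hUD : ∀ z ∈ D, U z = u (Φ z) := by
    intro z hz
    simp only [hU]
    rw [χ5 z (le_of_lt hz), one_mul]
  have hUf : ∀ z ∈ D, U =ᶠ[𝓝 z] fun w => u (Φ w) := by
    intro z hz
    filter_upwards [hDo.mem_nhds hz] with w hw using hUD w hw
  have hWne : (Wᶜ).Nonempty := ⟨(n:ℂ), fun h => by
    have := h.2.1
    rw [Complex.ofReal_re] at this
    linarith⟩
  have hDne : (Dᶜ).Nonempty := hWne.mono (compl_subset_compl.2 hDW)
  have dat : Dat U (Gq n L) D (202 * L * n) (P / K ^ 2) := by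
    refine ⟨?_, hDo, ?_, ?_, by positivity, ?_, ?_, ?_⟩
    · refine cutoff_contDiff χ1 χ4 fun z hz => ?_
      have h1 : ContDiffAt ℂ 2 Φ z := (Ph_analyticAt hz.2.2.2).contDiffAt
      exact hu.contDiffAt.comp z (h1.restrict_scalars ℝ)
    · intro z hz
      rw [mem_ball_zero_iff]
      exact Rg_norm (by linarith) hn0 (hDW hz)
    · nlinarith
    · intro z hz
      have hzW := hDW hz
      rw [lap_congr (hUf z hz), hUD z hz, lap_comp_holo hu (Ph_analyticAt hzW.2.2.2)]
      have h1 : lap u (Φ z) = V (Φ z) * u (Φ z) := by linarith [hlap (Φ z)]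
      have h2 := Ph_pot hN hN2 hs he1 hζ1.le hn0 (by linarith [hzW.2.1]) hzW.2.2.2 (hV (Φ z))
      have h3 : (ζ / n) ^ 2 = 1 / K ^ 2 := by
        rw [hn]
        have : ζ ≠ 0 := by linarith
        field_simp
      rw [h3] at h2
      rw [h1, abs_mul, abs_mul, abs_of_nonneg (by positivity), ← mul_assoc]
      refine mul_le_mul_of_nonneg_right (h2.trans (le_of_eq ?_)) (abs_nonneg _)
      rw [hP]; ring
    · unfold Gq; fun_prop
    · exact fun z hz w hw => Gq_close (by linarith) hn0 (hDW hz) (hDW hw)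
  have h0D : (0:ℂ) ∈ D := by
    have : 3 ≤ infDist (0:ℂ) Wᶜ := by
      rw [le_infDist hWne]
      intro w hw
      rw [dist_zero_left]
      exact Rg_compl_norm hζ1 hn (by linarith) (by linarith) hw
    simp only [hD, mem_setOf_eq]
    linarith
  have zon : Zone U (Gq n L) D (60 * L) (1 / K) (Real.exp (-(K / 8))) 0 := by
    refine ⟨by positivity, ?_, (Real.exp_pos _).le, h0D, fun z hz hd => ?_⟩
    · exact one_div_le_one_div_of_le (by norm_num) (by linarith)
    · obtain ⟨z', hz', h1⟩ := (infDist_lt_iff hDne).1 hd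
      have h2 : infDist z' Wᶜ < 3 := by
        have : ¬ 5 / 2 < infDist z' Wᶜ := hz'
        linarith
      obtain ⟨w, hw, h3⟩ := (infDist_lt_iff hWne).1 h2
      have h4 : ‖z - w‖ < 60 * L + 3 := by
        rw [← dist_eq_norm]
        linarith [dist_triangle z z' w]
      have := zone_est hζ1 hn (by linarith) hc hKc (by linarith) (by linarith) (by linarith) z w
        (hDW hz) hw h4 (hf z) (hf2 z)
      rw [wt, hUD z hz, sub_zero]
      exact this
  have key := hcore U (Gq n L) D (202 * L * n) (P / K ^ 2) (60 * L) (1 / K) _ 0 dat zon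
    (by linarith) ?_ q2
  · have h1 : wt U (Gq n L) 0 = 1 := by
      rw [wt, hUD 0 h0D, hΦ, Ph_zero, hu0]
      simp [Gq]
    rw [h1] at key
    linarith
  · have h1 : C0 * P * 60 ^ 6 * L ^ 6 ≤ K := by
      have : C0 * P * 60 ^ 6 ≤ M := by linarith
      exact le_trans (by gcongr) hKL
    rw [le_div_iff₀ hK0]
    calc C0 * (P / K ^ 2) * (60 * L) ^ 6 * K = C0 * P * 60 ^ 6 * L ^ 6 / K := by
          field_simp
      _ ≤ 1 := by rw [div_le_one hK0]; exact h1

end final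

/-- Landis' conjecture in the plane for real-valued potentials with decay:
if `|V w| ≤ a₀² ⟨w⟩ ^ (-N)` and `u` is a real solution of `-Δu + Vu = 0` on `ℝ²`
normalized by `|u 0| = 1` and satisfying `|u w| ≤ exp (c₀ |w| ^ (1 - N/2))`, then for
every `ε ∈ (0, N/2)` there is `R₀ = R₀(N, a₀, c₀, ε) > 0` such that for all `R ≥ R₀`
and every `w₀` with `|w₀| = R`, `sup_{B₁(w₀)} |u| ≥ exp (-R ^ (1 - N/2 + ε))`. -/
theorem landis_with_decay
    (N a₀ c₀ ε : ℝ) (hN : 0 < N) (hN' : N < 2) (ha₀ : 1 ≤ a₀) (hc₀ : 0 < c₀)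
    (hε : 0 < ε) (hε' : ε < N / 2) :
    ∃ R₀ > (0 : ℝ),
      ∀ (V u : ℂ → ℝ),
        (∀ w : ℂ, |V w| ≤ a₀ ^ 2 * Real.sqrt (1 + ‖w‖ ^ 2) ^ (-N)) →
        ContDiff ℝ 2 u →
        (∀ z : ℂ, -lap u z + V z * u z = 0) →
        |u 0| = 1 →
        (∀ w : ℂ, |u w| ≤ Real.exp (c₀ * ‖w‖ ^ (1 - N / 2))) →
        ∀ R : ℝ, R₀ ≤ R → ∀ w₀ : ℂ, ‖w₀‖ = R →
          Real.exp (-(R ^ (1 - N / 2 + ε))) ≤ sSup ((fun z => |u z|) '' ball w₀ 1) := by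
  obtain ⟨C0, hC0, hcore⟩ := core
  set s := 1 - N / 2 with hs
  have hs0 : 0 < s := by rw [hs]; linarith
  obtain ⟨M, hM⟩ : ∃ M, M = 3000000 + C0 * (36 * (1 / s) ^ 2 * a₀ ^ 2) * 60 ^ 6 +
      3 * ((1 / s) * 2 ^ (1 / s)) + 1000 * c₀ + C0 := ⟨_, rfl⟩
  obtain ⟨A0, hA0⟩ := eventually_atTop.1 (eventually_params M hs0 hε)
  refine ⟨max A0 1, by positivity, fun V u hV hu hlap hu0 hgr R hR w₀ hw₀ => ?_⟩
  obtain ⟨h1, h2, h3, h4⟩ := hA0 (R + 1) (by linarith [le_max_left A0 1])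
  by_contra hcon
  push Not at hcon
  have hbdd : BddAbove ((fun z => |u z|) '' ball w₀ 1) :=
    ((isCompact_closedBall w₀ 1).image hu.continuous.abs).bddAbove.mono
      (image_mono ball_subset_closedBall)
  refine fixed_scale (A := R + 1) hC0 hcore hN hN' hs hc₀ hε (by linarith) hM h1 h2 h3 h4 rfl rfl rfl rfl
    hV hu hlap hu0 hgr (w0 := w₀) (by rw [hw₀]; ring) fun w hw => ?_
  rw [add_sub_cancel_right]
  exact (le_csSup hbdd (mem_image_of_mem _ hw)).trans hcon.le
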